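/- Let 1 < p_0 ≤ q_0 < ∞ and assume sup_{j≥0} 2^{jd/q_0} ‖𝒜_j‖_{L^{p_0}→L^{q_0}(L^{p_0})} < ∞. Let q_0 < q ≤ ∞ and define ρ_min(q) and ρ_max(q) by 1/ρ_min(q) = 1 − (q_0/q)(1 − 1/p_0) and 1/ρ_max(q) = (q_0/q)(1/p_0). Assume ρ_min(q) < p ≤ q, and that r ≤ p if ρ_min(q) < p < ρ_max(q), while r < ρ_max(q) if ρ_max(q) ≤ p ≤ q. Then there exists ε(p,q,r) > 0 and a constant C_{p,q,r} such that for every n ∈ ℕ₀ and every sequence F = {f_j}_{j≥0}, ‖𝔐_{r,n} F‖_{L^q(ℝ^d)} ≤ C_{p,q,r} 2^{−n ε(p,q,r)} (Σ_{j≥n} 2^{−jd} ‖f_j‖_{L^p}^q)^{1/q}. -/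

import Mathlib

/-!
Up to constants, `𝔐_{r,n} F` is at most the supremum over `j ≥ n` of the averages of `𝒜_j f_j` over
balls of radius `R = 2^{n-j}`, and replacing the supremum by an `ℓ^q` sum over `j` reduces the
theorem to a bound for each `j`. Averaging at a scale `2^n` times the wavelength `2^{-j}` gains a
power of `2^{-n}`. To see this at the exponent `2`, dominate the ball by a Gaussian of width `R` and
use Plancherel in `t`; expanding the square leaves, on each sphere of radius `ρ ≳ 2^j`, the kernel
`exp(-π (R ρ)² |w - w'|²)`, whose integral in `w'` over the unit sphere is `O((R ρ)^{-1/2})`, that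
is, `O(2^{-n/2})`.

Real interpolation with the trivial bounds on the averages spreads this gain over all exponents
`1 < s < ∞` at `q = ∞`, and a second interpolation, with the endpoint hypothesis, gives a gain at
`p = s` for `ρ_min(q) < s < ρ_max(q)`, with the factor `2^{-jd/q}` of that hypothesis. Since `𝒜_j`
is local at unit scale up to rapidly decaying tails, Hölder's inequality on unit balls then replaces
the norm of `f` in `L^s` by the one in `L^p` for every `s ≤ p ≤ q`.
-/

open MeasureTheory Metric Set
open scoped ENNReal NNReal FourierTransform

noncomputable section

/-- Euclidean `d`-space. -/
abbrev Euc (d : ℕ) : Type := EuclideanSpace ℝ (Fin d)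

/-- The normalized surface measure `σ` on the unit sphere `S^{d-1} ⊆ ℝ^d`. -/
def sphereMeasure (d : ℕ) : Measure (Euc d) :=
  (((volume : Measure (Euc d)).toSphere Set.univ)⁻¹ : ℝ≥0∞) •
    ((volume : Measure (Euc d)).toSphere.map Subtype.val)

/-- The spherical average `A_t f(x) = ∫_{S^{d-1}} f(x - t y) dσ(y)`. -/
def sphAvg {d : ℕ} (f : Euc d → ℂ) (t : ℝ) (x : Euc d) : ℂ :=
  ∫ y, f (x - t • y) ∂(sphereMeasure d)

/-- The dyadic symbols `β_j` built from the bump `β₀`: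
`β_j(s) = β₀(2^{-j} s) - β₀(2^{1-j} s)` for `j ≥ 1`. -/
def betaJ (β₀ : ℝ → ℝ) : ℕ → ℝ → ℝ
  | 0 => β₀
  | (j + 1) => fun s => β₀ ((2 : ℝ) ^ (-(j + 1 : ℤ)) * s) - β₀ ((2 : ℝ) ^ (-(j : ℤ)) * s)

/-- The frequency localization `L_j` with symbol `β_j(|ξ|)`. -/
def freqLoc (d : ℕ) (β₀ : ℝ → ℝ) (j : ℕ) (f : Euc d → ℂ) : Euc d → ℂ :=
  𝓕⁻ (fun ξ => (betaJ β₀ j ‖ξ‖ : ℂ) * 𝓕 f ξ)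

/-- `χ` is an admissible time cutoff: smooth, `χ = 1` on a neighborhood of `[1,2]`,
supported in `[1/2,4]`. -/
def IsCutoff (χ : ℝ → ℝ) : Prop :=
  ContDiff ℝ (⊤ : ℕ∞) χ ∧ (∃ U : Set ℝ, IsOpen U ∧ Set.Icc 1 2 ⊆ U ∧ Set.EqOn χ 1 U) ∧
    Function.support χ ⊆ Set.Icc (1 / 2 : ℝ) 4

/-- `β₀` is an admissible frequency bump: smooth, `β₀(s) = 1` for `|s| < 1/2` and
`β₀(s) = 0` for `|s| > 1`. -/
def IsBump (β₀ : ℝ → ℝ) : Prop :=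
  ContDiff ℝ (⊤ : ℕ∞) β₀ ∧ (∀ s : ℝ, |s| < 1 / 2 → β₀ s = 1) ∧ ∀ s : ℝ, 1 < |s| → β₀ s = 0

/-- The frequency-localized operator `𝒜_j f(x,t) = χ(t) A_t L_j f(x)`. -/
def Aj (d : ℕ) (χ β₀ : ℝ → ℝ) (j : ℕ) (f : Euc d → ℂ) (x : Euc d) (t : ℝ) : ℂ :=
  (χ t : ℂ) * sphAvg (freqLoc d β₀ j f) t x

/-- `L^q` norm (with respect to `μ`) of an `ℝ≥0∞`-valued function, `1 ≤ q ≤ ∞`. -/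
def lqNorm {α : Type*} [MeasurableSpace α] (q : ℝ≥0∞) (g : α → ℝ≥0∞)
    (μ : Measure α) : ℝ≥0∞ :=
  if q = ∞ then essSup g μ else (∫⁻ x, g x ^ q.toReal ∂μ) ^ (1 / q.toReal)

/-- The mixed norm `‖F‖_{L^q(L^r)}` of `F : ℝ^d × ℝ → ℂ`. -/
def mixedNorm (d : ℕ) (q r : ℝ≥0∞) (F : Euc d → ℝ → ℂ) : ℝ≥0∞ :=
  lqNorm q (fun x => lqNorm r (fun t => (‖F x t‖₊ : ℝ≥0∞)) volume) volume

/-- The operator norm `‖𝒜_j‖_{L^p → L^q(L^r)}`. -/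
def AjOpNorm (d : ℕ) (χ β₀ : ℝ → ℝ) (j : ℕ) (p q r : ℝ≥0∞) : ℝ≥0∞ :=
  ⨆ (f : Euc d → ℂ) (_ : eLpNorm f p volume ≤ 1), mixedNorm d q r (Aj d χ β₀ j f)

/-- An axis-parallel cube in `ℝ^d` with lower corner `a` and side length `h`. -/
def cubeSet (d : ℕ) (a : Euc d) (h : ℝ) : Set (Euc d) :=
  {y | ∀ i, a i ≤ y i ∧ y i ≤ a i + h}

/-- The maximal function `𝔐_{r,n} F(x) = sup_{j ≥ n} sup_{Q ∈ 𝒬_{n-j}(x)}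
⨍_Q ‖𝒜_j f_j(y,·)‖_{L^r} dy`, where `𝒬_L(x)` is the family of cubes containing `x`
of side length in `(2^{L-1}, 2^L]`. -/
def maxFn (d : ℕ) (χ β₀ : ℝ → ℝ) (r : ℝ≥0∞) (n : ℕ) (F : ℕ → Euc d → ℂ)
    (x : Euc d) : ℝ≥0∞ :=
  ⨆ (j : ℕ) (_ : n ≤ j) (a : Euc d) (h : ℝ)
      (_ : (2 : ℝ) ^ ((n : ℤ) - j - 1) < h) (_ : h ≤ (2 : ℝ) ^ ((n : ℤ) - j))
      (_ : x ∈ cubeSet d a h),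
    (volume (cubeSet d a h))⁻¹ *
      ∫⁻ y in cubeSet d a h,
        lqNorm r (fun t => (‖Aj d χ β₀ j (F j) y t‖₊ : ℝ≥0∞)) volume

/-- The `ℓ^q` norm of a sequence in `ℝ≥0∞`, with the supremum convention at `q = ∞`. -/
def lqSeq (q : ℝ≥0∞) (g : ℕ → ℝ≥0∞) : ℝ≥0∞ :=
  if q = ∞ then ⨆ j, g j else (∑' j, g j ^ q.toReal) ^ (1 / q.toReal)

/-! ### Polar coordinates and the surface measure -/

open scoped Pointwise

section SphereMeasure

variable {d : ℕ}

lemma ae_norm_eq_one_sphereMeasure : ∀ᵐ y ∂sphereMeasure d, ‖y‖ = 1 := by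
  refine Measure.ae_smul_measure ?_ _
  rw [ae_map_iff measurable_subtype_coe.aemeasurable
    (measurableSet_eq_fun measurable_norm measurable_const)]
  exact ae_of_all _ fun x => by simp

variable [NeZero d]

lemma toSphere_univ_ne_zero : (volume : Measure (Euc d)).toSphere univ ≠ 0 := by
  rw [Ne, Measure.measure_univ_eq_zero]
  exact Measure.toSphere_ne_zero _

instance isProbabilityMeasure_sphereMeasure : IsProbabilityMeasure (sphereMeasure d) := by
  constructor
  rw [sphereMeasure, Measure.smul_apply, Measure.map_apply measurable_subtype_coe .univ,
    preimage_univ, smul_eq_mul]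
  exact ENNReal.inv_mul_cancel toSphere_univ_ne_zero (measure_ne_top _ _)

lemma sphereMeasure_apply {s : Set (Euc d)} (hs : MeasurableSet s) :
    sphereMeasure d s = (volume (ball (0 : Euc d) 1))⁻¹ *
      volume (Ioo (0 : ℝ) 1 • (sphere (0 : Euc d) 1 ∩ s)) := by
  have hd : (d : ℝ≥0∞) ≠ 0 := Nat.cast_ne_zero.2 (NeZero.ne d)
  rw [sphereMeasure, Measure.smul_apply, Measure.map_apply measurable_subtype_coe hs,
    Measure.toSphere_apply' _ (measurable_subtype_coe hs), Measure.toSphere_apply_univ,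
    finrank_euclideanSpace_fin, Subtype.image_preimage_coe, smul_eq_mul,
    ENNReal.mul_inv (.inl hd) (.inl (ENNReal.natCast_ne_top d)), mul_mul_mul_comm,
    ENNReal.inv_mul_cancel hd (ENNReal.natCast_ne_top d), one_mul]

lemma measurePreserving_sphereMeasure (A : Euc d ≃ₗᵢ[ℝ] Euc d) :
    MeasurePreserving A (sphereMeasure d) (sphereMeasure d) := by
  refine ⟨A.continuous.measurable, Measure.ext fun s hs => ?_⟩
  have hcone : A ⁻¹' (Ioo (0 : ℝ) 1 • (sphere (0 : Euc d) 1 ∩ s)) =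
      Ioo (0 : ℝ) 1 • (sphere (0 : Euc d) 1 ∩ A ⁻¹' s) := by
    ext u
    simp only [mem_preimage, Set.mem_smul, mem_inter_iff, mem_sphere_zero_iff_norm]
    constructor
    · rintro ⟨t, ht, y, ⟨hy, hys⟩, hu⟩
      refine ⟨t, ht, A.symm y, ⟨by simpa using hy, by simpa using hys⟩, A.injective ?_⟩
      simpa using hu
    · rintro ⟨t, ht, y, ⟨hy, hys⟩, rfl⟩
      exact ⟨t, ht, A y, ⟨by simpa using hy, hys⟩, by simp⟩
  rw [Measure.map_apply A.continuous.measurable hs, sphereMeasure_apply hs,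
    sphereMeasure_apply (A.continuous.measurable hs), ← hcone,
    A.measurePreserving.measure_preimage_emb A.toHomeomorph.measurableEmbedding]

lemma cone_inter_ball_subset_biUnion_ball {E : Type*} [NormedAddCommGroup E] [NormedSpace ℝ E]
    {w : E} {δ : ℝ} (hw : ‖w‖ = 1) (hδ : 0 < δ) :
    Ioo (0 : ℝ) 1 • (sphere (0 : E) 1 ∩ ball w δ) ⊆
      ⋃ k ∈ Finset.range (⌊1 / δ⌋₊ + 1), ball ((k * δ) • w) (2 * δ) := by
  rintro _ ⟨t, ⟨ht0, ht1⟩, y, ⟨-, hyw⟩, rfl⟩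
  simp only [mem_iUnion, exists_prop, Finset.mem_range]
  refine ⟨⌊t / δ⌋₊, Nat.lt_succ_of_le (Nat.floor_le_floor (by gcongr)), ?_⟩
  have hle : ⌊t / δ⌋₊ * δ ≤ t := (le_div_iff₀ hδ).1 (Nat.floor_le (by positivity))
  have hlt : t < (⌊t / δ⌋₊ + 1) * δ := (div_lt_iff₀ hδ).1 (Nat.lt_floor_add_one _)
  rw [mem_ball, dist_eq_norm] at hyw ⊢
  calc ‖t • y - (⌊t / δ⌋₊ * δ) • w‖ = ‖t • (y - w) + (t - ⌊t / δ⌋₊ * δ) • w‖ := by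
        congr 1; module
    _ ≤ t * ‖y - w‖ + (t - ⌊t / δ⌋₊ * δ) := by
        refine (norm_add_le _ _).trans_eq ?_
        rw [norm_smul, norm_smul, hw, Real.norm_of_nonneg ht0.le,
          Real.norm_of_nonneg (sub_nonneg.2 hle), mul_one]
    _ ≤ 1 * ‖y - w‖ + (t - ⌊t / δ⌋₊ * δ) := by gcongr
    _ < 2 * δ := by linarith

lemma sphereMeasure_ball_le_floor {w : Euc d} {δ : ℝ} (hw : ‖w‖ = 1) (hδ : 0 < δ) :
    sphereMeasure d (ball w δ) ≤ ENNReal.ofReal ((⌊1 / δ⌋₊ + 1) * (2 * δ) ^ d) := by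
  have hvol : volume (Ioo (0 : ℝ) 1 • (sphere (0 : Euc d) 1 ∩ ball w δ)) ≤
      (⌊1 / δ⌋₊ + 1) * (ENNReal.ofReal ((2 * δ) ^ d) * volume (ball (0 : Euc d) 1)) := by
    refine (measure_mono (cone_inter_ball_subset_biUnion_ball hw hδ)).trans
      ((measure_biUnion_finset_le _ _).trans_eq ?_)
    simp [Measure.addHaar_ball _ _ (by positivity : 0 ≤ 2 * δ)]
  rw [sphereMeasure_apply measurableSet_ball]
  calc (volume (ball (0 : Euc d) 1))⁻¹ *
        volume (Ioo (0 : ℝ) 1 • (sphere (0 : Euc d) 1 ∩ ball w δ))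
      ≤ (volume (ball (0 : Euc d) 1))⁻¹ *
        ((⌊1 / δ⌋₊ + 1) * (ENNReal.ofReal ((2 * δ) ^ d) * volume (ball (0 : Euc d) 1))) := by
        gcongr
    _ = (⌊1 / δ⌋₊ + 1) * ENNReal.ofReal ((2 * δ) ^ d) *
        ((volume (ball (0 : Euc d) 1))⁻¹ * volume (ball (0 : Euc d) 1)) := by ring
    _ = ENNReal.ofReal ((⌊1 / δ⌋₊ + 1) * (2 * δ) ^ d) := by
        rw [ENNReal.inv_mul_cancel (measure_ball_pos _ _ one_pos).ne' measure_ball_lt_top.ne,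
          mul_one, ENNReal.ofReal_mul (by positivity),
          ENNReal.ofReal_add (by positivity) one_pos.le, ENNReal.ofReal_natCast,
          ENNReal.ofReal_one]

end SphereMeasure

lemma sphereMeasure_ball_le {d : ℕ} (hd : 2 ≤ d) {w : Euc d} {δ : ℝ} (hw : ‖w‖ = 1) (hδ : 0 < δ) :
    sphereMeasure d (ball w δ) ≤ ENNReal.ofReal (2 * 2 ^ d * δ) := by
  have : NeZero d := ⟨by omega⟩
  rcases le_total δ 1 with hδ1 | hδ1
  · refine (sphereMeasure_ball_le_floor hw hδ).trans (ENNReal.ofReal_le_ofReal ?_)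
    have hfloor : ⌊1 / δ⌋₊ * δ ≤ 1 := (le_div_iff₀ hδ).1 (Nat.floor_le (by positivity))
    have hpow : δ ^ (d - 1) ≤ δ := (pow_le_of_le_one hδ.le hδ1 (by omega))
    calc (⌊1 / δ⌋₊ + 1) * (2 * δ) ^ d = 2 ^ d * ((⌊1 / δ⌋₊ * δ + δ) * δ ^ (d - 1)) := by
          rw [mul_pow, ← pow_sub_one_mul (NeZero.ne d) δ]; ring
      _ ≤ 2 ^ d * ((1 + 1) * δ) := by gcongr
      _ = 2 * 2 ^ d * δ := by ring
  · refine prob_le_one.trans (ENNReal.one_le_ofReal.2 ?_)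
    nlinarith [one_le_pow₀ (M₀ := ℝ) one_le_two (n := d)]

section Polar

variable {d : ℕ} [NeZero d]

lemma lintegral_eq_lintegral_toSphere_prod {g : Euc d → ℝ≥0∞} (hg : Measurable g) :
    ∫⁻ u, g u = ∫⁻ z, g (z.2.1 • z.1.1)
      ∂((volume : Measure (Euc d)).toSphere.prod (Measure.volumeIoiPow (d - 1))) := by
  have hpolar := (volume : Measure (Euc d)).measurePreserving_homeomorphUnitSphereProd
  rw [finrank_euclideanSpace_fin] at hpolar
  conv_lhs => rw [← restrict_compl_singleton (μ := volume) (0 : Euc d)]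
  rw [← hpolar.lintegral_comp (by fun_prop),
    ← lintegral_subtype_comap (measurableSet_singleton _).compl]
  refine lintegral_congr fun x => congrArg g ?_
  exact (congrArg Subtype.val ((homeomorphUnitSphereProd (Euc d)).symm_apply_apply x)).symm

lemma lintegral_volumeIoiPow (n : ℕ) {g : ℝ → ℝ≥0∞} (hg : Measurable g) :
    ∫⁻ t, g t ∂(Measure.volumeIoiPow n) = ∫⁻ t in Ioi 0, ENNReal.ofReal (t ^ n) * g t := by
  rw [Measure.volumeIoiPow,
    lintegral_withDensity_eq_lintegral_mul _ (by fun_prop) (by fun_prop),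
    ← lintegral_subtype_comap measurableSet_Ioi]
  rfl

lemma lintegral_toSphere {g : Euc d → ℝ≥0∞} (hg : Measurable g) :
    ∫⁻ y, g y ∂(volume : Measure (Euc d)).toSphere =
      (volume : Measure (Euc d)).toSphere univ * ∫⁻ y, g y ∂sphereMeasure d := by
  rw [sphereMeasure, lintegral_smul_measure, lintegral_map hg measurable_subtype_coe, smul_eq_mul,
    ← mul_assoc, ENNReal.mul_inv_cancel toSphere_univ_ne_zero (measure_ne_top _ _), one_mul]

lemma lintegral_eq_lintegral_Ioi_sphereMeasure {g : Euc d → ℝ≥0∞} (hg : Measurable g) :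
    ∫⁻ u, g u = (volume : Measure (Euc d)).toSphere univ *
      ∫⁻ t in Ioi (0 : ℝ), ENNReal.ofReal (t ^ (d - 1)) * ∫⁻ y, g (t • y) ∂sphereMeasure d := by
  have hmean : Measurable fun t : ℝ => ∫⁻ y, g (t • y) ∂sphereMeasure d :=
    Measurable.lintegral_prod_right' (f := fun z : ℝ × Euc d => g (z.1 • z.2)) (by fun_prop)
  rw [lintegral_eq_lintegral_toSphere_prod hg, lintegral_prod_symm' _ (by fun_prop),
    ← lintegral_volumeIoiPow _ hmean, ← lintegral_const_mul _ (by fun_prop)]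
  exact lintegral_congr fun t => lintegral_toSphere (g := fun y => g (t.1 • y)) (by fun_prop)

lemma lintegral_sphereMeasure_comp_norm_smul {t : ℝ} (ht : 0 ≤ t) (g : ℝ → ℝ≥0∞) :
    ∫⁻ y, g ‖t • y‖ ∂sphereMeasure d = g t := by
  have hnorm : ∀ᵐ y ∂sphereMeasure d, g ‖t • y‖ = g t := by
    filter_upwards [ae_norm_eq_one_sphereMeasure] with y hy
    rw [norm_smul, hy, mul_one, Real.norm_of_nonneg ht]
  rw [lintegral_congr_ae hnorm, lintegral_const, measure_univ, mul_one]

lemma lintegral_comp_norm {g : ℝ → ℝ≥0∞} (hg : Measurable g) :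
    ∫⁻ u : Euc d, g ‖u‖ = (volume : Measure (Euc d)).toSphere univ *
      ∫⁻ t in Ioi (0 : ℝ), ENNReal.ofReal (t ^ (d - 1)) * g t := by
  rw [lintegral_eq_lintegral_Ioi_sphereMeasure (g := fun u => g ‖u‖) (by fun_prop)]
  congr 1
  refine setLIntegral_congr_fun measurableSet_Ioi fun t ht => ?_
  rw [lintegral_sphereMeasure_comp_norm_smul (le_of_lt ht)]

lemma lintegral_eq_lintegral_lintegral_norm_smul {g : Euc d → ℝ≥0∞} (hg : Measurable g) :
    ∫⁻ u, g u = ∫⁻ u : Euc d, ∫⁻ y, g (‖u‖ • y) ∂sphereMeasure d := by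
  rw [lintegral_eq_lintegral_Ioi_sphereMeasure hg,
    lintegral_comp_norm (g := fun t => ∫⁻ y, g (t • y) ∂sphereMeasure d)]
  exact Measurable.lintegral_prod_right' (f := fun z : ℝ × Euc d => g (z.1 • z.2)) (by fun_prop)

lemma map_norm_smul_prod_sphereMeasure :
    (((volume : Measure (Euc d)).prod (sphereMeasure d)).map fun z => ‖z.1‖ • z.2) = volume := by
  refine Measure.ext_of_lintegral _ fun g hg => ?_
  rw [lintegral_map hg (by fun_prop), lintegral_prod _ (by fun_prop),
    lintegral_eq_lintegral_lintegral_norm_smul hg]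

lemma setLIntegral_Icc_le_lintegral_comp_norm : ∃ C : ℝ≥0, ∀ g : ℝ → ℝ≥0∞, Measurable g →
    ∫⁻ t in Icc (1 / 2) 4, g t ≤ C * ∫⁻ u : Euc d, g ‖u‖ := by
  set K := (volume : Measure (Euc d)).toSphere univ with hK
  have hK0 : K ≠ 0 := toSphere_univ_ne_zero
  have hKtop : K⁻¹ ≠ ∞ := ENNReal.inv_ne_top.2 hK0
  refine ⟨2 ^ (d - 1) * K⁻¹.toNNReal, fun g hg => ?_⟩
  have hweight : ∀ t ∈ Icc (1 / 2 : ℝ) 4,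
      g t ≤ 2 ^ (d - 1) * (ENNReal.ofReal (t ^ (d - 1)) * g t) := fun t ht => by
    rw [← mul_assoc, ← ENNReal.ofReal_ofNat 2, ← ENNReal.ofReal_pow zero_le_two,
      ← ENNReal.ofReal_mul (by positivity), ← mul_pow]
    exact le_mul_of_one_le_left' (ENNReal.one_le_ofReal.2 (one_le_pow₀ (by linarith [ht.1])))
  calc ∫⁻ t in Icc (1 / 2) 4, g t
      ≤ ∫⁻ t in Icc (1 / 2 : ℝ) 4, 2 ^ (d - 1) * (ENNReal.ofReal (t ^ (d - 1)) * g t) :=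
        setLIntegral_mono (by fun_prop) hweight
    _ ≤ ∫⁻ t in Ioi (0 : ℝ), 2 ^ (d - 1) * (ENNReal.ofReal (t ^ (d - 1)) * g t) :=
        lintegral_mono_set fun t ht => one_half_pos.trans_le ht.1
    _ = 2 ^ (d - 1) * K⁻¹ * (K * ∫⁻ t in Ioi 0, ENNReal.ofReal (t ^ (d - 1)) * g t) := by
        rw [lintegral_const_mul _ (by fun_prop), mul_assoc, ← mul_assoc K⁻¹,
          ENNReal.inv_mul_cancel hK0 (measure_ne_top _ _), one_mul]
    _ = (2 ^ (d - 1) * K⁻¹.toNNReal : ℝ≥0) * ∫⁻ u : Euc d, g ‖u‖ := by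
        rw [lintegral_comp_norm hg, ← hK, ENNReal.coe_mul, ENNReal.coe_toNNReal hKtop]
        simp

lemma integral_eq_integral_integral_norm_smul {F : Euc d → ℂ} (hF : Integrable F) :
    ∫ ξ, F ξ = ∫ u : Euc d, ∫ y, F (‖u‖ • y) ∂sphereMeasure d := by
  have hm : AEMeasurable (fun z : Euc d × Euc d => ‖z.1‖ • z.2)
      (volume.prod (sphereMeasure d)) := by fun_prop
  rw [← map_norm_smul_prod_sphereMeasure] at hF
  conv_lhs => rw [← map_norm_smul_prod_sphereMeasure]
  rw [integral_map hm hF.1]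
  exact integral_prod _ ((integrable_map_measure hF.1 hm).1 hF)

end Polar

/-! ### Plancherel's theorem and spherical means -/

section Plancherel

variable {V : Type*} [NormedAddCommGroup V] [InnerProductSpace ℝ V] [FiniteDimensional ℝ V]
  [MeasurableSpace V] [BorelSpace V] {f : V → ℂ}

lemma continuous_fourier_of_integrable (hf : Integrable f) : Continuous (𝓕 f) :=
  VectorFourier.fourierIntegral_continuous Real.continuous_fourierChar (innerSL ℝ).continuous₂ hf

lemma continuous_fourierInv_of_integrable (hf : Integrable f) : Continuous (𝓕⁻ f) := by
  rw [Real.fourierInv_eq_fourier_comp_neg]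
  exact continuous_fourier_of_integrable hf.comp_neg

lemma norm_fourierInv_le_integral_norm (f : V → ℂ) (x : V) : ‖𝓕⁻ f x‖ ≤ ∫ ξ, ‖f ξ‖ := by
  rw [Real.fourierInv_eq_fourier_neg]
  exact VectorFourier.norm_fourierIntegral_le_integral_norm _ _ _ _ _

lemma coeFn_fourier_toLp_ae_eq (hf : Integrable f) (hf2 : MemLp f 2) :
    (𝓕 (hf2.toLp f) : Lp ℂ 2 (volume : Measure V)) =ᵐ[volume] 𝓕 f := by
  refine ae_eq_of_integral_contDiff_smul_eq ((Lp.memLp _).locallyIntegrable one_le_two)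
    (continuous_fourier_of_integrable hf).locallyIntegrable fun g hg hgs => ?_
  have hgs' : HasCompactSupport fun x => (g x : ℂ) := hgs.comp_left Complex.ofReal_zero
  set φ : SchwartzMap V ℂ := hgs'.toSchwartzMap (Complex.ofRealCLM.contDiff.comp hg)
  have hgφ (h : V → ℂ) : ∫ x, g x • h x = ∫ x, φ x • h x :=
    integral_congr_ae (ae_of_all _ fun x => by simp only [Complex.real_smul]; rfl)
  have hdual := congrArg (fun T => T φ) (Lp.fourier_toTemperedDistribution_eq (hf2.toLp f))
  simp only [TemperedDistribution.fourier_apply, Lp.toTemperedDistribution_apply] at hdual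
  have hflip := VectorFourier.integral_fourierIntegral_smul_eq_flip (L := innerₗ V)
    (f := (φ : V → ℂ)) (μ := volume) (ν := volume) Real.continuous_fourierChar
    (innerSL ℝ).continuous₂ φ.integrable hf
  rw [flip_innerₗ] at hflip
  calc ∫ x, g x • (𝓕 (hf2.toLp f) : Lp ℂ 2 (volume : Measure V)) x
      = ∫ x, (𝓕 φ) x • (hf2.toLp f) x := by rw [hgφ, ← hdual]
    _ = ∫ x, (𝓕 φ) x • f x := by
        refine integral_congr_ae ?_
        filter_upwards [hf2.coeFn_toLp] with x hx
        rw [hx]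
    _ = ∫ x, g x • 𝓕 f x := by rw [hgφ]; exact hflip

lemma eLpNorm_two_fourier_le (hf : Integrable f) :
    eLpNorm (𝓕 f) 2 volume ≤ eLpNorm f 2 volume := by
  rcases eq_or_ne (eLpNorm f 2 volume) ∞ with htop | htop
  · exact le_top.trans_eq htop.symm
  have hf2 : MemLp f 2 := ⟨hf.1, htop.lt_top⟩
  have hnorm := Lp.norm_fourier_eq (hf2.toLp f)
  rw [Lp.norm_def, Lp.norm_def, ENNReal.toReal_eq_toReal_iff' (Lp.eLpNorm_ne_top _)
    (Lp.eLpNorm_ne_top _), eLpNorm_congr_ae (coeFn_fourier_toLp_ae_eq hf hf2),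
    eLpNorm_congr_ae hf2.coeFn_toLp] at hnorm
  exact hnorm.le

lemma lintegral_enorm_sq_eq_eLpNorm_sq (f : V → ℂ) :
    ∫⁻ x, ‖f x‖ₑ ^ 2 = eLpNorm f 2 volume ^ 2 := by
  simpa using (eLpNorm_nnreal_pow_eq_lintegral (f := f) (μ := volume) two_ne_zero).symm

lemma lintegral_enorm_fourier_sq_le (hf : Integrable f) :
    ∫⁻ x, ‖𝓕 f x‖ₑ ^ 2 ≤ ∫⁻ x, ‖f x‖ₑ ^ 2 := by
  rw [lintegral_enorm_sq_eq_eLpNorm_sq, lintegral_enorm_sq_eq_eLpNorm_sq]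
  gcongr
  exact eLpNorm_two_fourier_le hf

end Plancherel

lemma continuous_integral_of_norm_le {X Y : Type*} [TopologicalSpace X] [FirstCountableTopology X]
    [TopologicalSpace Y] [MeasurableSpace Y] [OpensMeasurableSpace Y] [SecondCountableTopology Y]
    {μ : Measure Y} [IsFiniteMeasure μ] {F : X → Y → ℂ} {M : ℝ}
    (hF : Continuous (Function.uncurry F)) (hM : ∀ x y, ‖F x y‖ ≤ M) :
    Continuous fun x => ∫ y, F x y ∂μ :=
  continuous_of_dominated (bound := fun _ => M)
    (fun x => (hF.comp (Continuous.prodMk_right x)).aestronglyMeasurable)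
    (fun x => ae_of_all _ (hM x)) (integrable_const M)
    (ae_of_all _ fun y => hF.comp (Continuous.prodMk_left y))

section SphereMean

/-- The mean of `b` over the sphere of radius `ρ` centred at the origin. The radial function
`ξ ↦ sphereMean b ‖ξ‖` is the average of `b` over all rotations. -/
def sphereMean {d : ℕ} (b : Euc d → ℂ) (ρ : ℝ) : ℂ := ∫ w, b (ρ • w) ∂sphereMeasure d

lemma sphereMean_eq_zero {d : ℕ} {b : Euc d → ℂ} {ρ : ℝ} (hb : ∀ ξ, ‖ξ‖ = |ρ| → b ξ = 0) :
    sphereMean b ρ = 0 := by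
  refine integral_eq_zero_of_ae ?_
  filter_upwards [ae_norm_eq_one_sphereMeasure] with w hw
  exact hb _ (by rw [norm_smul, hw, mul_one, Real.norm_eq_abs])

lemma hasCompactSupport_sphereMean_norm {d : ℕ} {b : Euc d → ℂ}
    (hb : HasCompactSupport b) :
    HasCompactSupport fun ξ : Euc d => sphereMean b ‖ξ‖ := by
  obtain ⟨K, hK⟩ := hb.isCompact.isBounded.subset_closedBall 0
  refine HasCompactSupport.intro (isCompact_closedBall (0 : Euc d) K) fun ξ hξ => ?_
  refine sphereMean_eq_zero fun η hη => image_eq_zero_of_notMem_tsupport fun hmem => hξ ?_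
  simpa [hη] using hK hmem

variable {d : ℕ} [NeZero d]

lemma continuous_sphereMean {X : Type*} [TopologicalSpace X] [FirstCountableTopology X]
    {F : X → Euc d → ℂ} {ρ : X → ℝ} {M : ℝ} (hF : Continuous (Function.uncurry F))
    (hρ : Continuous ρ) (hM : ∀ x y, ‖F x y‖ ≤ M) :
    Continuous fun x => sphereMean (F x) (ρ x) :=
  continuous_integral_of_norm_le (F := fun x w => F x (ρ x • w))
    (hF.comp (by fun_prop : Continuous fun z : X × Euc d => (z.1, ρ z.1 • z.2)))
    fun _ _ => hM _ _

lemma integrable_sphereMean_norm {b : Euc d → ℂ} (hb : Continuous b)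
    (hbs : HasCompactSupport b) : Integrable fun ξ : Euc d => sphereMean b ‖ξ‖ := by
  obtain ⟨M, hM⟩ := hb.bounded_above_of_compact_support hbs
  exact (continuous_sphereMean (F := fun _ : Euc d => b) (by fun_prop) continuous_norm
    fun _ => hM).integrable_of_hasCompactSupport (hasCompactSupport_sphereMean_norm hbs)

lemma integral_comp_norm_mul {k : ℝ → ℂ} {g : Euc d → ℂ}
    (hkg : Integrable fun ξ => k ‖ξ‖ * g ξ) :
    ∫ ξ, k ‖ξ‖ * g ξ = ∫ ξ : Euc d, k ‖ξ‖ * sphereMean g ‖ξ‖ := by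
  rw [integral_eq_integral_integral_norm_smul hkg]
  congr 1
  ext u
  rw [sphereMean, ← integral_const_mul]
  refine integral_congr_ae ?_
  filter_upwards [ae_norm_eq_one_sphereMeasure] with y hy
  rw [norm_smul, norm_norm, hy, mul_one]

lemma integral_sphereMean_mul_comm {b g : Euc d → ℂ} {M : ℝ} (hb : Continuous b)
    (hbs : HasCompactSupport b) (hg : Continuous g) (hgM : ∀ x, ‖g x‖ ≤ M) :
    ∫ ξ, sphereMean b ‖ξ‖ * g ξ = ∫ ξ, b ξ * sphereMean g ‖ξ‖ := by
  obtain ⟨K, hK⟩ := hb.bounded_above_of_compact_support hbs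
  have hbc : Continuous fun ξ : Euc d => sphereMean b ‖ξ‖ :=
    continuous_sphereMean (F := fun _ => b) (by fun_prop) continuous_norm fun _ => hK
  have hgc : Continuous fun ξ : Euc d => sphereMean g ‖ξ‖ :=
    continuous_sphereMean (F := fun _ => g) (by fun_prop) continuous_norm fun _ => hgM
  rw [integral_comp_norm_mul (k := sphereMean b) ((hbc.mul hg).integrable_of_hasCompactSupport
    (hasCompactSupport_sphereMean_norm hbs).mul_right)]
  simp_rw [mul_comm (b _)]
  rw [integral_comp_norm_mul (k := sphereMean g)
    ((hgc.mul hb).integrable_of_hasCompactSupport hbs.mul_left)]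
  simp_rw [mul_comm]

lemma integral_inner_sphereMeasure_congr {η η' : Euc d} (h : ‖η‖ = ‖η'‖) (g : ℝ → ℂ) :
    ∫ y, g (inner ℝ y η) ∂sphereMeasure d = ∫ y, g (inner ℝ y η') ∂sphereMeasure d := by
  set A := (ℝ ∙ (η - η'))ᗮ.reflection
  have hA : A η = η' := Submodule.reflection_sub h
  rw [← (measurePreserving_sphereMeasure A).integral_comp A.toHomeomorph.measurableEmbedding
    fun y => g (inner ℝ y η')]
  congr 1
  ext y
  rw [← hA, A.inner_map_map]

lemma fourier_sphereMean_norm {b : Euc d → ℂ} (hb : Continuous b) (hbs : HasCompactSupport b)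
    (u : Euc d) : 𝓕 (fun ξ : Euc d => sphereMean b ‖ξ‖) u =
      ∫ ξ, b ξ * ∫ w, (𝐞 (-inner ℝ w (‖u‖ • ξ)) : ℂ) ∂sphereMeasure d := by
  have hplane (ξ : Euc d) : sphereMean (fun η => (𝐞 (-inner ℝ η u) : ℂ)) ‖ξ‖ =
      ∫ w, (𝐞 (-inner ℝ w (‖u‖ • ξ)) : ℂ) ∂sphereMeasure d := by
    simp_rw [sphereMean, real_inner_smul_left, ← real_inner_smul_right]
    exact integral_inner_sphereMeasure_congr (by simp [norm_smul, mul_comm])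
      fun s => (𝐞 (-s) : ℂ)
  simp_rw [← hplane]
  rw [← integral_sphereMean_mul_comm hb hbs (by fun_prop) fun x => (Circle.norm_coe _).le,
    Real.fourier_eq]
  simp_rw [Circle.smul_def, smul_eq_mul, mul_comm]

lemma sphAvg_fourierInv_norm {a : Euc d → ℂ} (ha : Continuous a) (has : HasCompactSupport a)
    (y u : Euc d) : sphAvg (𝓕⁻ a) ‖u‖ y =
      𝓕 (fun ξ : Euc d => sphereMean (fun η => a η * 𝐞 (inner ℝ y η)) ‖ξ‖) u := by
  have hint : Integrable (fun z : Euc d × Euc d => (𝐞 (inner ℝ z.2 (y - ‖u‖ • z.1)) : ℂ) * a z.2)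
      ((sphereMeasure d).prod volume) := by
    refine ((integrable_const (1 : ℝ)).mul_prod (ha.integrable_of_hasCompactSupport has).norm).mono'
      (by fun_prop) (ae_of_all _ fun z => ?_)
    rw [norm_mul, Circle.norm_coe]
  rw [fourier_sphereMean_norm (b := fun η => a η * 𝐞 (inner ℝ y η)) (by fun_prop) has.mul_right,
    sphAvg]
  simp_rw [Real.fourierInv_eq, Circle.smul_def, smul_eq_mul]
  rw [integral_integral_swap hint]
  congr 1
  ext ξ
  rw [← integral_const_mul]
  congr 1
  ext w
  rw [inner_sub_right, sub_eq_add_neg, AddChar.map_add_eq_mul, Circle.coe_mul, real_inner_comm,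
    real_inner_smul_right, real_inner_smul_right, real_inner_comm ξ w]
  ring

lemma continuous_sphAvg {f : Euc d → ℂ} {M : ℝ} (hf : Continuous f) (hM : ∀ x, ‖f x‖ ≤ M) :
    Continuous fun z : ℝ × Euc d => sphAvg f z.1 z.2 :=
  continuous_integral_of_norm_le (F := fun (z : ℝ × Euc d) y => f (z.2 - z.1 • y)) (by fun_prop)
    fun _ _ => hM _

end SphereMean

/-! ### The local `L²` estimate -/

section Gaussian

variable {V : Type*} [NormedAddCommGroup V]

/-- The Gaussian of width `R` centred at `x₀`, normalized to have height one; a smooth majorant of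
the indicator function of a ball, with an explicit Fourier transform. -/
def gaussianBump (x₀ : V) (R : ℝ) (y : V) : ℝ := Real.exp (-(Real.pi / R ^ 2) * ‖y - x₀‖ ^ 2)

lemma gaussianBump_pos (x₀ : V) (R : ℝ) (y : V) : 0 < gaussianBump x₀ R y := Real.exp_pos _

lemma one_le_exp_pi_mul_gaussianBump {x₀ y : V} {R : ℝ} (hy : y ∈ closedBall x₀ R) :
    1 ≤ Real.exp Real.pi * gaussianBump x₀ R y := by
  rw [gaussianBump, ← Real.exp_add, Real.one_le_exp_iff]
  have hyR : ‖y - x₀‖ ^ 2 ≤ R ^ 2 := by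
    gcongr
    exact mem_closedBall_iff_norm.1 hy
  have hle : Real.pi / R ^ 2 * ‖y - x₀‖ ^ 2 ≤ Real.pi := by
    rw [div_mul_eq_mul_div]
    exact div_le_of_le_mul₀ (sq_nonneg R) Real.pi_pos.le (by gcongr)
  linarith

variable [InnerProductSpace ℝ V] [FiniteDimensional ℝ V] [MeasurableSpace V] [BorelSpace V] {R : ℝ}

lemma integrable_gaussianBump (hR : 0 < R) (x₀ : V) : Integrable (gaussianBump x₀ R) := by
  have hcexp := (GaussianFourier.integrable_cexp_neg_mul_sq_norm_add (V := V)
    (b := ((Real.pi / R ^ 2 : ℝ) : ℂ)) (by rw [Complex.ofReal_re]; positivity) 0 0).norm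
  refine (hcexp.comp_sub_right x₀).congr (ae_of_all _ fun y => ?_)
  simp only [zero_mul, add_zero, Complex.norm_exp, gaussianBump]
  norm_cast

lemma setLIntegral_closedBall_le_gaussianBump (x₀ : V) (R : ℝ) (F : V → ℝ≥0∞) :
    ∫⁻ y in closedBall x₀ R, F y ≤ ENNReal.ofReal (Real.exp Real.pi) *
      ∫⁻ y, ENNReal.ofReal (gaussianBump x₀ R y) * F y := by
  rw [← lintegral_const_mul' _ _ ENNReal.ofReal_ne_top]
  refine (setLIntegral_mono' measurableSet_closedBall fun y hy => ?_).trans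
    (setLIntegral_le_lintegral _ _)
  rw [← mul_assoc, ← ENNReal.ofReal_mul (Real.exp_pos _).le]
  exact le_mul_of_one_le_left' (ENNReal.one_le_ofReal.2 (one_le_exp_pi_mul_gaussianBump hy))

lemma norm_integral_gaussianBump_mul_fourierChar (hR : 0 < R) (x₀ v : V) :
    ‖∫ y, (gaussianBump x₀ R y : ℂ) * 𝐞 (inner ℝ y v)‖ =
      R ^ Module.finrank ℝ V * Real.exp (-(Real.pi * R ^ 2 * ‖v‖ ^ 2)) := by
  have hb : 0 < Real.pi / R ^ 2 := by positivity
  have hfourier := fourier_gaussian_innerProductSpace (V := V) (b := ((Real.pi / R ^ 2 : ℝ) : ℂ))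
    (by rwa [Complex.ofReal_re]) (-v)
  rw [Real.fourier_eq] at hfourier
  have htranslate (y : V) : (gaussianBump x₀ R (y + x₀) : ℂ) * 𝐞 (inner ℝ (y + x₀) v) =
      𝐞 (inner ℝ x₀ v) * (𝐞 (-inner ℝ y (-v)) •
        Complex.exp (-((Real.pi / R ^ 2 : ℝ) : ℂ) * (‖y‖ : ℂ) ^ 2)) := by
    rw [Circle.smul_def, smul_eq_mul, inner_add_left, AddChar.map_add_eq_mul, inner_neg_right,
      neg_neg, gaussianBump]
    simp
    ring
  rw [← integral_add_right_eq_self _ x₀]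
  simp_rw [htranslate]
  rw [integral_const_mul, norm_mul, Circle.norm_coe, one_mul, hfourier, norm_mul, norm_neg]
  congr 1
  · have hdiv : Real.pi / (Real.pi / R ^ 2) = R ^ 2 := by field_simp
    have hre : ((Module.finrank ℝ V : ℂ) / 2).re = Module.finrank ℝ V / 2 := by simp
    rw [← Complex.ofReal_div, Complex.norm_cpow_eq_rpow_re_of_pos (by positivity), hdiv, hre,
      ← Real.rpow_natCast R 2, ← Real.rpow_mul hR.le, ← Real.rpow_natCast R]
    congr 1
    push_cast
    ring
  · rw [Complex.norm_exp]
    norm_cast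
    field_simp

end Gaussian

section TTStar

variable {W : Type*} [MeasurableSpace W] {μ : Measure W}

section FourierChar

variable {V : Type*} [NormedAddCommGroup V] [InnerProductSpace ℝ V] [FiniteDimensional ℝ V]
  [MeasurableSpace V] [BorelSpace V]

lemma integrable_mul_fourierChar_mul_conj_fourierChar {φ : V → ℝ} (hφ : Integrable φ) {g : W → ℂ}
    (hg : Integrable g μ) {κ : W → V} (hκ : Measurable κ) :
    Integrable (fun x : V × W × W => (φ x.1 : ℂ) * (g x.2.1 * 𝐞 (inner ℝ x.1 (κ x.2.1)) *
      starRingEnd ℂ (g x.2.2 * 𝐞 (inner ℝ x.1 (κ x.2.2))))) (volume.prod (μ.prod μ)) := by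
  have hchar (k : W × W → W) (hk : Measurable k) : AEStronglyMeasurable
      (fun x : V × W × W => (𝐞 (inner ℝ x.1 (κ (k x.2))) : ℂ)) (volume.prod (μ.prod μ)) := by
    have hinner : Measurable fun x : V × W × W => inner ℝ x.1 (κ (k x.2)) :=
      measurable_fst.inner (hκ.comp (hk.comp measurable_snd))
    exact (Continuous.measurable (by fun_prop : Continuous fun s : ℝ => (𝐞 s : ℂ))).comp hinner
      |>.aestronglyMeasurable
  refine (hφ.norm.mul_prod (hg.norm.mul_prod hg.norm)).mono' ?_ (ae_of_all _ fun x => ?_)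
  · exact (Complex.continuous_ofReal.comp_aestronglyMeasurable hφ.1.comp_fst).mul
      ((hg.1.comp_fst.comp_snd.mul (hchar _ measurable_fst)).mul
        (Complex.continuous_conj.comp_aestronglyMeasurable
          (hg.1.comp_snd.comp_snd.mul (hchar _ measurable_snd))))
  · simp only [norm_mul, RCLike.norm_conj, Circle.norm_coe, mul_one, Complex.norm_real, le_refl]

lemma lintegral_mul_enorm_sq_integral_fourierChar_le [SFinite μ] {φ : V → ℝ}
    (hφ : Integrable φ) (hφ0 : 0 ≤ φ) {g : W → ℂ} (hg : Integrable g μ) {κ : W → V}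
    (hκ : Measurable κ) :
    ∫⁻ y, ENNReal.ofReal (φ y) * ‖∫ w, g w * 𝐞 (inner ℝ y (κ w)) ∂μ‖ₑ ^ 2 ≤
      ∫⁻ z, ‖g z.1‖ₑ * ‖g z.2‖ₑ * ‖∫ y, (φ y : ℂ) * 𝐞 (inner ℝ y (κ z.1 - κ z.2))‖ₑ
        ∂(μ.prod μ) := by
  set h : V → W → ℂ := fun y w => g w * 𝐞 (inner ℝ y (κ w))
  set P : V × W × W → ℂ := fun x => φ x.1 * (h x.1 x.2.1 * starRingEnd ℂ (h x.1 x.2.2))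
  have hP : Integrable P (volume.prod (μ.prod μ)) :=
    integrable_mul_fourierChar_mul_conj_fourierChar hφ hg hκ
  have hsq (y : V) : ∫ z, P (y, z) ∂(μ.prod μ) = ((φ y * ‖∫ w, h y w ∂μ‖ ^ 2 : ℝ) : ℂ) := by
    simp only [P]
    rw [integral_const_mul, integral_prod_mul (f := h y) (g := fun w => starRingEnd ℂ (h y w)),
      integral_conj, Complex.mul_conj, Complex.normSq_eq_norm_sq, Complex.ofReal_mul]
  have hkernel (z : W × W) : ‖∫ y, P (y, z)‖ₑ =
      ‖g z.1‖ₑ * ‖g z.2‖ₑ * ‖∫ y, (φ y : ℂ) * 𝐞 (inner ℝ y (κ z.1 - κ z.2))‖ₑ := by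
    have hPz (y : V) : P (y, z) = g z.1 * starRingEnd ℂ (g z.2) *
        (φ y * 𝐞 (inner ℝ y (κ z.1 - κ z.2))) := by
      simp only [P, h]
      rw [inner_sub_right, sub_eq_add_neg, AddChar.map_add_eq_mul, AddChar.map_neg_eq_inv]
      simp only [map_mul, Circle.coe_mul, Circle.coe_inv_eq_conj]
      ring
    simp_rw [hPz]
    rw [integral_const_mul, enorm_mul, enorm_mul, RCLike.enorm_conj]
  have hint : Integrable fun y => φ y * ‖∫ w, h y w ∂μ‖ ^ 2 := by
    have hcomplex := hP.integral_prod_left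
    simp_rw [hsq] at hcomplex
    exact hcomplex.re
  have hnonneg (y : V) : 0 ≤ φ y * ‖∫ w, h y w ∂μ‖ ^ 2 := mul_nonneg (hφ0 y) (by positivity)
  calc ∫⁻ y, ENNReal.ofReal (φ y) * ‖∫ w, h y w ∂μ‖ₑ ^ 2
      = ∫⁻ y, ENNReal.ofReal (φ y * ‖∫ w, h y w ∂μ‖ ^ 2) := by
        refine lintegral_congr fun y => ?_
        rw [ENNReal.ofReal_mul (hφ0 y), ENNReal.ofReal_pow (norm_nonneg _), ofReal_norm]
    _ = ‖∫ y, ∫ z, P (y, z) ∂(μ.prod μ)‖ₑ := by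
        simp_rw [hsq]
        rw [integral_complex_ofReal, ← ofReal_norm, Complex.norm_real,
          Real.norm_of_nonneg (integral_nonneg hnonneg),
          ofReal_integral_eq_lintegral_ofReal hint (ae_of_all _ hnonneg)]
    _ = ‖∫ z, (∫ y, P (y, z)) ∂(μ.prod μ)‖ₑ := by
        rw [integral_integral_swap (f := fun y z => P (y, z)) hP]
    _ ≤ ∫⁻ z, ‖∫ y, P (y, z)‖ₑ ∂(μ.prod μ) := enorm_integral_le_lintegral_enorm _
    _ = _ := by simp_rw [hkernel]

end FourierChar

lemma mul_le_sq_add_sq (a b : ℝ≥0∞) : a * b ≤ a ^ 2 + b ^ 2 := by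
  rcases le_total a b with h | h
  · exact (mul_le_mul_left h b).trans (by rw [← sq]; exact le_add_self)
  · exact (mul_le_mul_right h a).trans (by rw [← sq]; exact le_self_add)

lemma lintegral_prod_mul_kernel_le_of_symm [SFinite μ] {u : W → ℝ≥0∞} (hu : Measurable u)
    {K : W × W → ℝ≥0∞} (hK : Measurable K) (hsymm : ∀ z, K z.swap = K z) {J : ℝ≥0∞}
    (hJ : ∀ᵐ w ∂μ, ∫⁻ w', K (w, w') ∂μ ≤ J) :
    ∫⁻ z, u z.1 * u z.2 * K z ∂(μ.prod μ) ≤ 2 * J * ∫⁻ w, u w ^ 2 ∂μ := by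
  have hfst : ∫⁻ z, u z.1 ^ 2 * K z ∂(μ.prod μ) ≤ J * ∫⁻ w, u w ^ 2 ∂μ := by
    rw [lintegral_prod _ (by fun_prop), ← lintegral_const_mul _ (by fun_prop)]
    refine lintegral_mono_ae ?_
    filter_upwards [hJ] with w hw
    rw [lintegral_const_mul _ (by fun_prop), mul_comm]
    gcongr
  have hsnd : ∫⁻ z, u z.2 ^ 2 * K z ∂(μ.prod μ) = ∫⁻ z, u z.1 ^ 2 * K z ∂(μ.prod μ) := by
    rw [← lintegral_prod_swap]
    simp_rw [hsymm, Prod.snd_swap]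
  calc ∫⁻ z, u z.1 * u z.2 * K z ∂(μ.prod μ)
      ≤ ∫⁻ z, (u z.1 ^ 2 * K z + u z.2 ^ 2 * K z) ∂(μ.prod μ) := by
        gcongr with z
        rw [← add_mul]
        gcongr
        exact mul_le_sq_add_sq _ _
    _ = 2 * ∫⁻ z, u z.1 ^ 2 * K z ∂(μ.prod μ) := by
        rw [lintegral_add_left (by fun_prop), hsnd, two_mul]
    _ ≤ _ := by rw [mul_assoc]; gcongr

end TTStar

section LocalL2

variable {d : ℕ}

lemma exp_neg_pi_mul_sq_le_rpow {A δ s : ℝ} (hA : 1 ≤ A) (hδ : δ = A ^ (-(1 / 2 : ℝ)))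
    (hs : δ ≤ s) : Real.exp (-(Real.pi * A ^ 2 * s ^ 2)) ≤ δ := by
  have hA0 : 0 < A := by linarith
  have hδ0 : 0 < δ := by rw [hδ]; positivity
  have hδ1 : δ ≤ 1 := hδ ▸ Real.rpow_le_one_of_one_le_of_nonpos hA (by norm_num)
  have hδsq : δ ^ 2 = A⁻¹ := by
    rw [hδ, ← Real.rpow_natCast, ← Real.rpow_mul hA0.le, ← Real.rpow_neg_one]
    norm_num
  have hexponent : A ≤ Real.pi * A ^ 2 * s ^ 2 := calc
    A = 1 * A ^ 2 * δ ^ 2 := by rw [hδsq]; field_simp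
    _ ≤ Real.pi * A ^ 2 * s ^ 2 := by gcongr; linarith [Real.pi_gt_three]
  calc Real.exp (-(Real.pi * A ^ 2 * s ^ 2)) ≤ Real.exp (-A) := by gcongr
    _ ≤ A⁻¹ := by
        rw [Real.exp_neg]
        exact inv_anti₀ hA0 (by linarith [Real.add_one_le_exp A])
    _ ≤ δ := by rw [← hδsq]; nlinarith

variable [NeZero d]

lemma lintegral_exp_neg_sq_sphereMeasure_le (hd : 2 ≤ d) {w : Euc d} {A : ℝ} (hw : ‖w‖ = 1)
    (hA : 1 ≤ A) :
    ∫⁻ y, ENNReal.ofReal (Real.exp (-(Real.pi * A ^ 2 * ‖w - y‖ ^ 2))) ∂sphereMeasure d ≤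
      ENNReal.ofReal ((2 * 2 ^ d + 1) * A ^ (-(1 / 2 : ℝ))) := by
  set δ := A ^ (-(1 / 2 : ℝ)) with hδ
  have hδ0 : 0 < δ := by positivity
  have hsplit (y : Euc d) : ENNReal.ofReal (Real.exp (-(Real.pi * A ^ 2 * ‖w - y‖ ^ 2))) ≤
      (ball w δ).indicator 1 y + ENNReal.ofReal δ := by
    by_cases hy : y ∈ ball w δ
    · rw [indicator_of_mem hy]
      refine le_trans ?_ le_self_add
      rw [Pi.one_apply, ENNReal.ofReal_le_one, Real.exp_le_one_iff, neg_nonpos]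
      positivity
    · rw [indicator_of_notMem hy, zero_add]
      rw [mem_ball', dist_eq_norm, not_lt] at hy
      exact ENNReal.ofReal_le_ofReal (exp_neg_pi_mul_sq_le_rpow hA hδ hy)
  calc _ ≤ ∫⁻ y, ((ball w δ).indicator 1 y + ENNReal.ofReal δ) ∂sphereMeasure d :=
        lintegral_mono hsplit
    _ = sphereMeasure d (ball w δ) + ENNReal.ofReal δ := by
        rw [lintegral_add_right _ measurable_const, lintegral_indicator_one measurableSet_ball]
        simp
    _ ≤ ENNReal.ofReal (2 * 2 ^ d * δ) + ENNReal.ofReal δ := by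
        gcongr
        exact sphereMeasure_ball_le hd hw hδ0
    _ = _ := by rw [← ENNReal.ofReal_add (by positivity) hδ0.le]; ring_nf

lemma setLIntegral_closedBall_sphereMean_sq_le (hd : 2 ≤ d) {a : Euc d → ℂ} (ha : Continuous a)
    (has : HasCompactSupport a) (x₀ : Euc d) {R ρ : ℝ} (hR : 0 < R) (hRρ : 1 ≤ R * ρ) :
    ∫⁻ y in closedBall x₀ R, ‖sphereMean (fun η => a η * 𝐞 (inner ℝ y η)) ρ‖ₑ ^ 2 ≤
      ENNReal.ofReal (Real.exp Real.pi) * (2 * ENNReal.ofReal (R ^ d * ((2 * 2 ^ d + 1) *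
        (R * ρ) ^ (-(1 / 2 : ℝ)))) * ∫⁻ w, ‖a (ρ • w)‖ₑ ^ 2 ∂sphereMeasure d) := by
  obtain ⟨M, hM⟩ := ha.bounded_above_of_compact_support has
  have ham := ha.measurable
  have hag : Integrable (fun w => a (ρ • w)) (sphereMeasure d) :=
    (integrable_const M).mono' (by fun_prop) (ae_of_all _ fun w => hM _)
  set K : Euc d × Euc d → ℝ≥0∞ := fun z =>
    ENNReal.ofReal (R ^ d * Real.exp (-(Real.pi * (R * ρ) ^ 2 * ‖z.1 - z.2‖ ^ 2)))
  have hK (z : Euc d × Euc d) :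
      ‖∫ y, (gaussianBump x₀ R y : ℂ) * 𝐞 (inner ℝ y (ρ • z.1 - ρ • z.2))‖ₑ = K z := by
    rw [← ofReal_norm, norm_integral_gaussianBump_mul_fourierChar hR, ← smul_sub, norm_smul,
      mul_pow, Real.norm_eq_abs, sq_abs, finrank_euclideanSpace_fin]
    simp only [K]
    ring_nf
  have hrow : ∀ᵐ w ∂sphereMeasure d, ∫⁻ w', K (w, w') ∂sphereMeasure d ≤
      ENNReal.ofReal (R ^ d * ((2 * 2 ^ d + 1) * (R * ρ) ^ (-(1 / 2 : ℝ)))) := by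
    filter_upwards [ae_norm_eq_one_sphereMeasure] with w hw
    simp_rw [K, ENNReal.ofReal_mul (pow_nonneg hR.le d)]
    rw [lintegral_const_mul _ (by fun_prop)]
    gcongr
    exact lintegral_exp_neg_sq_sphereMeasure_le hd hw hRρ
  calc ∫⁻ y in closedBall x₀ R, ‖sphereMean (fun η => a η * 𝐞 (inner ℝ y η)) ρ‖ₑ ^ 2
      ≤ ENNReal.ofReal (Real.exp Real.pi) * ∫⁻ y, ENNReal.ofReal (gaussianBump x₀ R y) *
          ‖sphereMean (fun η => a η * 𝐞 (inner ℝ y η)) ρ‖ₑ ^ 2 :=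
        setLIntegral_closedBall_le_gaussianBump x₀ R _
    _ ≤ ENNReal.ofReal (Real.exp Real.pi) *
          ∫⁻ z, ‖a (ρ • z.1)‖ₑ * ‖a (ρ • z.2)‖ₑ * K z
            ∂((sphereMeasure d).prod (sphereMeasure d)) := by
        simp_rw [← hK]
        gcongr
        exact lintegral_mul_enorm_sq_integral_fourierChar_le (integrable_gaussianBump hR x₀)
          (fun y => (gaussianBump_pos x₀ R y).le) hag (κ := fun w => ρ • w) (by fun_prop)
    _ ≤ _ := by
        gcongr
        exact lintegral_prod_mul_kernel_le_of_symm (u := fun w => ‖a (ρ • w)‖ₑ) (by fun_prop)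
          (by fun_prop) (fun z => by simp only [K, Prod.fst_swap, Prod.snd_swap, norm_sub_rev]) hrow

lemma setLIntegral_closedBall_sphereMean_sq_le_of_eq_zero (hd : 2 ≤ d) {a : Euc d → ℂ}
    (ha : Continuous a) (has : HasCompactSupport a) (x₀ : Euc d) {R ρ₀ ρ : ℝ} (hR : 0 < R)
    (hRρ : 1 ≤ R * ρ₀) (ha0 : ∀ ξ, ‖ξ‖ < ρ₀ → a ξ = 0) (hρ : 0 ≤ ρ) :
    ∫⁻ y in closedBall x₀ R, ‖sphereMean (fun η => a η * 𝐞 (inner ℝ y η)) ρ‖ₑ ^ 2 ≤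
      ENNReal.ofReal (Real.exp Real.pi * (2 * (2 * 2 ^ d + 1))) *
        ENNReal.ofReal (R ^ d * (R * ρ₀) ^ (-(1 / 2 : ℝ))) *
          ∫⁻ w, ‖a (ρ • w)‖ₑ ^ 2 ∂sphereMeasure d := by
  rcases lt_or_ge ρ ρ₀ with hρ₀ | hρ₀
  · have hmean (y : Euc d) : sphereMean (fun η => a η * 𝐞 (inner ℝ y η)) ρ = 0 :=
      sphereMean_eq_zero fun η hη => by rw [ha0 η (by rwa [hη, abs_of_nonneg hρ]), zero_mul]
    simp [hmean]
  have hRρ' : R * ρ₀ ≤ R * ρ := by gcongr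
  refine (setLIntegral_closedBall_sphereMean_sq_le hd ha has x₀ hR (hRρ.trans hRρ')).trans ?_
  rw [← mul_assoc]
  refine mul_le_mul_left ?_ _
  rw [← ENNReal.ofReal_ofNat 2, ← ENNReal.ofReal_mul zero_le_two,
    ← ENNReal.ofReal_mul (Real.exp_pos _).le, ← ENNReal.ofReal_mul (by positivity)]
  refine ENNReal.ofReal_le_ofReal ?_
  have hdecay : (R * ρ) ^ (-(1 / 2 : ℝ)) ≤ (R * ρ₀) ^ (-(1 / 2 : ℝ)) :=
    Real.rpow_le_rpow_of_nonpos (by linarith) hRρ' (by norm_num)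
  calc _ = Real.exp Real.pi * (2 * (2 * 2 ^ d + 1)) * (R ^ d * (R * ρ) ^ (-(1 / 2 : ℝ))) := by ring
    _ ≤ _ := by gcongr

lemma exists_setLIntegral_sphAvg_sq_le_sphereMean : ∃ C : ℝ≥0, ∀ a : Euc d → ℂ, Continuous a →
    HasCompactSupport a → ∀ y, ∫⁻ t in Icc (1 / 2) 4, ‖sphAvg (𝓕⁻ a) t y‖ₑ ^ 2 ≤
      C * ∫⁻ ξ : Euc d, ‖sphereMean (fun η => a η * 𝐞 (inner ℝ y η)) ‖ξ‖‖ₑ ^ 2 := by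
  obtain ⟨C, hC⟩ := setLIntegral_Icc_le_lintegral_comp_norm (d := d)
  refine ⟨C, fun a ha has y => ?_⟩
  have hai : Integrable a := ha.integrable_of_hasCompactSupport has
  have hjoint := continuous_sphAvg (continuous_fourierInv_of_integrable hai)
    (norm_fourierInv_le_integral_norm a)
  have hcont : Continuous fun t : ℝ => sphAvg (𝓕⁻ a) t y := by fun_prop
  refine (hC _ (hcont.measurable.enorm.pow_const 2)).trans ?_
  gcongr C * ?_
  simp_rw [sphAvg_fourierInv_norm ha has y]
  exact lintegral_enorm_fourier_sq_le (integrable_sphereMean_norm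
    (b := fun η => a η * 𝐞 (inner ℝ y η)) (by fun_prop) has.mul_right)

theorem exists_setLIntegral_closedBall_sphAvg_sq_le (hd : 2 ≤ d) : ∃ C : ℝ≥0, ∀ a : Euc d → ℂ,
    Continuous a → HasCompactSupport a → ∀ (x₀ : Euc d) {R ρ₀ : ℝ}, 0 < R → 1 ≤ R * ρ₀ →
    (∀ ξ, ‖ξ‖ < ρ₀ → a ξ = 0) →
    ∫⁻ y in closedBall x₀ R, ∫⁻ t in Icc (1 / 2) 4, ‖sphAvg (𝓕⁻ a) t y‖ₑ ^ 2 ≤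
      C * ENNReal.ofReal (R ^ d * (R * ρ₀) ^ (-(1 / 2 : ℝ))) * ∫⁻ ξ, ‖a ξ‖ₑ ^ 2 := by
  obtain ⟨C, hC⟩ := exists_setLIntegral_sphAvg_sq_le_sphereMean (d := d)
  refine ⟨C * Real.toNNReal (Real.exp Real.pi * (2 * (2 * 2 ^ d + 1))),
    fun a ha has x₀ R ρ₀ hR hRρ ha0 => ?_⟩
  obtain ⟨M, hM⟩ := ha.bounded_above_of_compact_support has
  set m : Euc d → Euc d → ℂ := fun y ξ => sphereMean (fun η => a η * 𝐞 (inner ℝ y η)) ‖ξ‖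
  have hm : Continuous fun z : Euc d × Euc d => m z.1 z.2 :=
    continuous_sphereMean (F := fun (z : Euc d × Euc d) η => a η * 𝐞 (inner ℝ z.1 η))
      (ρ := fun z => ‖z.2‖) (M := M) (by fun_prop) (by fun_prop) fun z η => by
        simpa only [norm_mul, Circle.norm_coe, mul_one] using hM η
  set B := Real.exp Real.pi * (2 * (2 * 2 ^ d + 1))
  set D := ENNReal.ofReal (R ^ d * (R * ρ₀) ^ (-(1 / 2 : ℝ)))
  calc ∫⁻ y in closedBall x₀ R, ∫⁻ t in Icc (1 / 2) 4, ‖sphAvg (𝓕⁻ a) t y‖ₑ ^ 2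
      ≤ ∫⁻ y in closedBall x₀ R, C * ∫⁻ ξ, ‖m y ξ‖ₑ ^ 2 := lintegral_mono fun y => hC a ha has y
    _ = C * ∫⁻ ξ, ∫⁻ y in closedBall x₀ R, ‖m y ξ‖ₑ ^ 2 := by
        rw [lintegral_const_mul' _ _ ENNReal.coe_ne_top,
          lintegral_lintegral_swap (hm.measurable.enorm.pow_const 2).aemeasurable]
    _ ≤ C * (ENNReal.ofReal B * D *
          ∫⁻ ξ : Euc d, ∫⁻ w, ‖a (‖ξ‖ • w)‖ₑ ^ 2 ∂sphereMeasure d) := by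
        rw [← lintegral_const_mul' _ _ (ENNReal.mul_ne_top ENNReal.ofReal_ne_top
          ENNReal.ofReal_ne_top)]
        gcongr with ξ
        exact setLIntegral_closedBall_sphereMean_sq_le_of_eq_zero hd ha has x₀ hR hRρ ha0
          (norm_nonneg ξ)
    _ = _ := by
        rw [← lintegral_eq_lintegral_lintegral_norm_smul (g := fun ξ => ‖a ξ‖ₑ ^ 2) (by fun_prop),
          ENNReal.coe_mul, ENNReal.ofReal]
        ring

end LocalL2

/-! ### Littlewood–Paley kernels -/

section LittlewoodPaley

lemma lintegral_rpow_le_measure_univ_mul {α : Type*} [MeasurableSpace α] {μ : Measure α}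
    {g : α → ℝ≥0∞} (hg : AEMeasurable g μ) {s : ℝ} (hs : 1 ≤ s) :
    (∫⁻ x, g x ∂μ) ^ s ≤ μ univ ^ (s - 1) * ∫⁻ x, g x ^ s ∂μ := by
  have hs0 : 0 < s := by linarith
  have hexp : (1 - 1 / s) * s = s - 1 := by field_simp
  have hHolder := eLpNorm'_le_eLpNorm'_mul_rpow_measure_univ one_pos hs hg.aestronglyMeasurable
  simp only [eLpNorm'_eq_lintegral_enorm, enorm_eq_self, ENNReal.rpow_one, div_one] at hHolder
  calc (∫⁻ x, g x ∂μ) ^ s ≤ ((∫⁻ x, g x ^ s ∂μ) ^ (1 / s) * μ univ ^ (1 - 1 / s)) ^ s := by gcongr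
    _ = μ univ ^ (s - 1) * ∫⁻ x, g x ^ s ∂μ := by
      rw [ENNReal.mul_rpow_of_nonneg _ _ hs0.le, ← ENNReal.rpow_mul, ← ENNReal.rpow_mul, hexp,
        one_div_mul_cancel hs0.ne', ENNReal.rpow_one, mul_comm]

lemma lintegral_mul_rpow_le {α : Type*} [MeasurableSpace α] {μ : Measure α} {k g : α → ℝ≥0∞}
    (hk : Measurable k) (hg : AEMeasurable g μ) {s : ℝ} (hs : 1 ≤ s) :
    (∫⁻ x, k x * g x ∂μ) ^ s ≤ (∫⁻ x, k x ∂μ) ^ (s - 1) * ∫⁻ x, k x * g x ^ s ∂μ := by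
  have h := lintegral_rpow_le_measure_univ_mul
    (hg.mono_ac (withDensity_absolutelyContinuous μ k)) hs
  rwa [lintegral_withDensity_eq_lintegral_mul₀ hk.aemeasurable hg,
    lintegral_withDensity_eq_lintegral_mul₀ hk.aemeasurable (hg.pow_const s),
    withDensity_apply _ MeasurableSet.univ, Measure.restrict_univ] at h

variable {V : Type*} [NormedAddCommGroup V] [InnerProductSpace ℝ V] [FiniteDimensional ℝ V]
  [MeasurableSpace V] [BorelSpace V]

lemma lintegral_enorm_integral_mul_rpow_le {K f : V → ℂ} (hK : Continuous K)
    (hf : AEStronglyMeasurable f) {s : ℝ} (hs : 1 ≤ s) :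
    ∫⁻ x, ‖∫ u, K (x - u) * f u‖ₑ ^ s ≤ (∫⁻ x, ‖K x‖ₑ) ^ s * ∫⁻ x, ‖f x‖ₑ ^ s := by
  have hKm := hK.measurable
  set A := ∫⁻ x, ‖K x‖ₑ
  have hpow : A ^ s = A ^ (s - 1) * A := by
    conv_lhs => rw [show s = s - 1 + 1 by ring,
      ENNReal.rpow_add_of_nonneg _ _ (by linarith) zero_le_one, ENNReal.rpow_one]
  calc ∫⁻ x, ‖∫ u, K (x - u) * f u‖ₑ ^ s
      ≤ ∫⁻ x, A ^ (s - 1) * ∫⁻ u, ‖K (x - u)‖ₑ * ‖f u‖ₑ ^ s := lintegral_mono fun x => by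
        calc _ ≤ (∫⁻ u, ‖K (x - u)‖ₑ * ‖f u‖ₑ) ^ s := by
              gcongr
              exact (enorm_integral_le_lintegral_enorm _).trans_eq (by simp only [enorm_mul])
          _ ≤ _ := lintegral_mul_rpow_le (by fun_prop) hf.enorm hs
          _ = _ := by rw [lintegral_sub_left_eq_self (fun u => ‖K u‖ₑ) x]
    _ = A ^ (s - 1) * ∫⁻ u, ∫⁻ x, ‖K (x - u)‖ₑ * ‖f u‖ₑ ^ s := by
        have hprod : AEMeasurable (Function.uncurry fun x u => ‖K (x - u)‖ₑ * ‖f u‖ₑ ^ s)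
            (volume.prod volume) :=
          .mul (Measurable.aemeasurable (by fun_prop)) (hf.enorm.pow_const s).comp_snd
        rw [← lintegral_lintegral_swap hprod]
        exact lintegral_const_mul'' _ hprod.lintegral_prod_right'
    _ = A ^ (s - 1) * (A * ∫⁻ u, ‖f u‖ₑ ^ s) := by
        have htranslate (u : V) : ∫⁻ x, ‖K (x - u)‖ₑ * ‖f u‖ₑ ^ s = A * ‖f u‖ₑ ^ s := by
          rw [lintegral_mul_const _ (by fun_prop), lintegral_sub_right_eq_self (fun x => ‖K x‖ₑ)]
        simp_rw [htranslate]
        rw [lintegral_const_mul'' _ (hf.enorm.pow_const s)]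
    _ = A ^ s * ∫⁻ x, ‖f x‖ₑ ^ s := by rw [hpow, mul_assoc]

lemma fourierInv_mul_fourier_eq_integral {m f : V → ℂ} (hmc : Continuous m) (hm : Integrable m)
    (hf : Integrable f) (x : V) :
    𝓕⁻ (fun ξ => m ξ * 𝓕 f ξ) x = ∫ u, 𝓕⁻ m (x - u) * f u := by
  have hexpand (v : V) : 𝐞 (inner ℝ v x) • (m v * 𝓕 f v) =
      ∫ u, (𝐞 (inner ℝ v (x - u)) * m v) * f u := by
    rw [Circle.smul_def, smul_eq_mul, Real.fourier_eq, ← integral_const_mul,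
      ← integral_const_mul]
    refine integral_congr_ae (ae_of_all _ fun u => ?_)
    simp only [Circle.smul_def, smul_eq_mul]
    rw [inner_sub_right, sub_eq_add_neg, AddChar.map_add_eq_mul, Circle.coe_mul,
      real_inner_comm u v]
    ring
  have hint : Integrable (Function.uncurry fun v u =>
      (𝐞 (inner ℝ v (x - u)) * m v) * f u) (volume.prod volume) := by
    refine (hm.norm.mul_prod hf.norm).mono' (.mul ?_ hf.1.comp_snd) (ae_of_all _ fun z => ?_)
    · exact (by fun_prop : Continuous fun z : V × V =>
        (𝐞 (inner ℝ z.1 (x - z.2)) : ℂ) * m z.1).aestronglyMeasurable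
    · simp only [Function.uncurry, norm_mul, Circle.norm_coe, one_mul, le_refl]
  rw [Real.fourierInv_eq]
  simp_rw [hexpand]
  rw [integral_integral_swap hint]
  simp only [integral_mul_const, Real.fourierInv_eq, Circle.smul_def, smul_eq_mul]

lemma fourierInv_comp_inv_smul (f : V → ℂ) {c : ℝ} (hc : 0 < c) (x : V) :
    𝓕⁻ (fun ξ => f (c⁻¹ • ξ)) x = c ^ Module.finrank ℝ V • 𝓕⁻ f (c • x) := by
  have h := Measure.integral_comp_smul volume (fun ξ => 𝐞 (inner ℝ ξ (c • x)) • f ξ) c⁻¹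
  rw [inv_pow, inv_inv, abs_of_pos (by positivity)] at h
  rw [Real.fourierInv_eq, Real.fourierInv_eq, ← h]
  simp only [real_inner_smul_left, real_inner_smul_right, mul_inv_cancel_left₀ hc.ne']

lemma lintegral_enorm_pow_smul_comp_smul {K : V → ℂ} (hK : Integrable K) {c : ℝ} (hc : 0 < c) :
    ∫⁻ x, ‖c ^ Module.finrank ℝ V • K (c • x)‖ₑ = ∫⁻ x, ‖K x‖ₑ := by
  have hdilate : Integrable fun x => c ^ Module.finrank ℝ V • K (c • x) :=
    (hK.comp_smul hc.ne').smul (c ^ Module.finrank ℝ V)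
  rw [← ofReal_integral_norm_eq_lintegral_enorm hK,
    ← ofReal_integral_norm_eq_lintegral_enorm hdilate]
  simp only [norm_smul]
  rw [integral_const_mul, Measure.integral_comp_smul volume (fun x => ‖K x‖) c,
    abs_of_pos (by positivity), Real.norm_of_nonneg (by positivity), smul_eq_mul,
    mul_inv_cancel_left₀ (by positivity)]

variable {d : ℕ} {β₀ : ℝ → ℝ}

lemma IsBump.contDiff_comp_norm (hβ : IsBump β₀) :
    ContDiff ℝ (⊤ : ℕ∞) fun ξ : Euc d => (β₀ ‖ξ‖ : ℂ) := by
  refine Complex.ofRealCLM.contDiff.comp (contDiff_iff_contDiffAt.2 fun ξ => ?_)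
  rcases eq_or_ne ξ 0 with rfl | hξ
  · refine contDiffAt_const (c := (1 : ℝ)) |>.congr_of_eventuallyEq ?_
    filter_upwards [ball_mem_nhds (0 : Euc d) one_half_pos] with η hη
    exact hβ.2.1 _ (by rwa [abs_norm, ← mem_ball_zero_iff])
  · exact hβ.1.contDiffAt.comp ξ (contDiffAt_norm ℝ hξ)

lemma IsBump.hasCompactSupport_comp_norm (hβ : IsBump β₀) :
    HasCompactSupport fun ξ : Euc d => (β₀ ‖ξ‖ : ℂ) :=
  .intro (isCompact_closedBall 0 1) fun ξ hξ => by
    rw [hβ.2.2 _ (by simpa using hξ), Complex.ofReal_zero]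

/-- The symbol `ξ ↦ β_j(|ξ|)` of the Fourier multiplier `freqLoc d β₀ j`. -/
def lpSymbol (d : ℕ) (β₀ : ℝ → ℝ) (j : ℕ) (ξ : Euc d) : ℂ := betaJ β₀ j ‖ξ‖

/-- The Littlewood–Paley kernel: `freqLoc d β₀ j` is convolution with `lpKernel d β₀ j`. -/
def lpKernel (d : ℕ) (β₀ : ℝ → ℝ) (j : ℕ) : Euc d → ℂ := 𝓕⁻ (lpSymbol d β₀ j)

lemma lpSymbol_succ (j : ℕ) (ξ : Euc d) : lpSymbol d β₀ (j + 1) ξ =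
    β₀ ‖((2 : ℝ) ^ (j + 1))⁻¹ • ξ‖ - β₀ ‖((2 : ℝ) ^ j)⁻¹ • ξ‖ := by
  simp only [lpSymbol, betaJ, norm_smul, norm_inv, norm_pow, Real.norm_ofNat, zpow_neg]
  norm_cast

lemma IsBump.continuous_lpSymbol (hβ : IsBump β₀) (j : ℕ) : Continuous (lpSymbol d β₀ j) := by
  have hbump := (hβ.contDiff_comp_norm (d := d)).continuous
  cases j with
  | zero => exact hbump
  | succ j =>
    simp only [funext (lpSymbol_succ (d := d) (β₀ := β₀) j)]
    exact (hbump.comp (continuous_const_smul _)).sub (hbump.comp (continuous_const_smul _))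

lemma IsBump.hasCompactSupport_bump_comp_smul (hβ : IsBump β₀) {c : ℝ} (hc : c ≠ 0) :
    HasCompactSupport fun ξ : Euc d => (β₀ ‖c • ξ‖ : ℂ) :=
  hβ.hasCompactSupport_comp_norm.comp_homeomorph (Homeomorph.smulOfNeZero c hc)

lemma IsBump.hasCompactSupport_lpSymbol (hβ : IsBump β₀) (j : ℕ) :
    HasCompactSupport (lpSymbol d β₀ j) := by
  cases j with
  | zero => exact hβ.hasCompactSupport_comp_norm
  | succ j =>
    simp only [funext (lpSymbol_succ (d := d) (β₀ := β₀) j)]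
    exact (hβ.hasCompactSupport_bump_comp_smul (by positivity)).sub
      (hβ.hasCompactSupport_bump_comp_smul (by positivity))

lemma IsBump.integrable_lpSymbol (hβ : IsBump β₀) (j : ℕ) : Integrable (lpSymbol d β₀ j) :=
  (hβ.continuous_lpSymbol j).integrable_of_hasCompactSupport (hβ.hasCompactSupport_lpSymbol j)

lemma IsBump.lpSymbol_succ_eq_zero (hβ : IsBump β₀) {j : ℕ} {ξ : Euc d} (hξ : ‖ξ‖ < 2 ^ j / 2) :
    lpSymbol d β₀ (j + 1) ξ = 0 := by
  have hone {k : ℕ} (hk : j ≤ k) : β₀ ‖((2 : ℝ) ^ k)⁻¹ • ξ‖ = 1 := by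
    refine hβ.2.1 _ ?_
    rw [abs_norm, norm_smul, norm_inv, norm_pow, Real.norm_ofNat,
      inv_mul_lt_iff₀ (by positivity)]
    have : (2 : ℝ) ^ j ≤ 2 ^ k := pow_le_pow_right₀ one_le_two hk
    linarith
  rw [lpSymbol_succ, hone j.le_succ, hone le_rfl, sub_self]

lemma IsBump.exists_norm_lpSymbol_le (d : ℕ) (hβ : IsBump β₀) :
    ∃ C : ℝ≥0, ∀ j (ξ : Euc d), ‖lpSymbol d β₀ j ξ‖ ≤ C := by
  obtain ⟨M, hM⟩ := hβ.contDiff_comp_norm.continuous.bounded_above_of_compact_support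
    (hβ.hasCompactSupport_comp_norm (d := d))
  have hM0 : 0 ≤ M := (norm_nonneg _).trans (hM 0)
  refine ⟨.mk (M + M) (by positivity), fun j ξ => ?_⟩
  cases j with
  | zero => exact (hM ξ).trans (le_add_of_nonneg_left hM0)
  | succ j => rw [lpSymbol_succ]; exact (norm_sub_le _ _).trans (add_le_add (hM _) (hM _))

/-- The Schwartz function whose Fourier transform is `β₀(|ξ|)`; every `lpKernel d β₀ j` is a
difference of its dilates. -/
def IsBump.kernel (d : ℕ) (hβ : IsBump β₀) : SchwartzMap (Euc d) ℂ :=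
  𝓕⁻ (hβ.hasCompactSupport_comp_norm.toSchwartzMap hβ.contDiff_comp_norm)

lemma IsBump.fourierInv_bump_comp_inv_smul (hβ : IsBump β₀) {c : ℝ} (hc : 0 < c) (x : Euc d) :
    𝓕⁻ (fun ξ : Euc d => (β₀ ‖c⁻¹ • ξ‖ : ℂ)) x = c ^ d • hβ.kernel d (c • x) := by
  rw [IsBump.kernel, SchwartzMap.fourierInv_coe,
    fourierInv_comp_inv_smul (fun ξ : Euc d => (β₀ ‖ξ‖ : ℂ)) hc x, finrank_euclideanSpace_fin]
  rfl

lemma IsBump.lpKernel_zero (hβ : IsBump β₀) : lpKernel d β₀ 0 = hβ.kernel d := by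
  rw [IsBump.kernel, SchwartzMap.fourierInv_coe]
  rfl

lemma IsBump.lpKernel_succ (hβ : IsBump β₀) (j : ℕ) (x : Euc d) : lpKernel d β₀ (j + 1) x =
    ((2 : ℝ) ^ (j + 1)) ^ d • hβ.kernel d ((2 : ℝ) ^ (j + 1) • x) -
      ((2 : ℝ) ^ j) ^ d • hβ.kernel d ((2 : ℝ) ^ j • x) := by
  have hint (k : ℕ) : Integrable fun ξ : Euc d =>
      𝐞 (inner ℝ ξ x) • (β₀ ‖((2 : ℝ) ^ k)⁻¹ • ξ‖ : ℂ) := by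
    have hbump := (hβ.contDiff_comp_norm (d := d)).continuous.comp
      (continuous_const_smul ((2 : ℝ) ^ k)⁻¹)
    refine Continuous.integrable_of_hasCompactSupport (.smul (by fun_prop) hbump) ?_
    exact (hβ.hasCompactSupport_bump_comp_smul (by positivity)).smul_left
  rw [lpKernel, ← hβ.fourierInv_bump_comp_inv_smul (by positivity),
    ← hβ.fourierInv_bump_comp_inv_smul (by positivity)]
  simp only [Real.fourierInv_eq, lpSymbol_succ, smul_sub]
  exact integral_sub (hint _) (hint _)

/- At `j = 0` the second term is superfluous; keeping it treats all `j` at once. -/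
lemma IsBump.norm_lpKernel_le (hβ : IsBump β₀) (j : ℕ) (x : Euc d) : ‖lpKernel d β₀ j x‖ ≤
    ‖((2 : ℝ) ^ j) ^ d • hβ.kernel d ((2 : ℝ) ^ j • x)‖ +
      ‖((2 : ℝ) ^ (j - 1)) ^ d • hβ.kernel d ((2 : ℝ) ^ (j - 1) • x)‖ := by
  cases j with
  | zero => simp [hβ.lpKernel_zero]
  | succ j => rw [hβ.lpKernel_succ]; exact norm_sub_le _ _

lemma IsBump.continuous_lpKernel (hβ : IsBump β₀) (j : ℕ) : Continuous (lpKernel d β₀ j) :=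
  continuous_fourierInv_of_integrable (hβ.integrable_lpSymbol j)

lemma IsBump.exists_lintegral_enorm_lpKernel_le (d : ℕ) (hβ : IsBump β₀) :
    ∃ C : ℝ≥0, ∀ j, ∫⁻ x, ‖lpKernel d β₀ j x‖ₑ ≤ C := by
  have hdilate (k : ℕ) : ∫⁻ x, ‖((2 : ℝ) ^ k) ^ d • hβ.kernel d ((2 : ℝ) ^ k • x)‖ₑ =
      ∫⁻ x, ‖hβ.kernel d x‖ₑ := by
    simpa only [finrank_euclideanSpace_fin] using lintegral_enorm_pow_smul_comp_smul
      (hβ.kernel d).integrable (c := (2 : ℝ) ^ k) (by positivity)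
  have hcont : Continuous (hβ.kernel d) := (hβ.kernel d).continuous
  have hfin : ∫⁻ x, ‖hβ.kernel d x‖ₑ ≠ ∞ := (hβ.kernel d).integrable.2.ne
  lift ∫⁻ x, ‖hβ.kernel d x‖ₑ to ℝ≥0 using hfin with A
  refine ⟨A + A, fun j => ?_⟩
  calc ∫⁻ x, ‖lpKernel d β₀ j x‖ₑ
      ≤ ∫⁻ x, (‖((2 : ℝ) ^ j) ^ d • hβ.kernel d ((2 : ℝ) ^ j • x)‖ₑ +
          ‖((2 : ℝ) ^ (j - 1)) ^ d • hβ.kernel d ((2 : ℝ) ^ (j - 1) • x)‖ₑ) :=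
        lintegral_mono fun x => by
          simp only [← ofReal_norm]
          rw [← ENNReal.ofReal_add (norm_nonneg _) (norm_nonneg _)]
          exact ENNReal.ofReal_le_ofReal (hβ.norm_lpKernel_le j x)
    _ = A + A := by
        rw [lintegral_add_left (Continuous.measurable (by fun_prop)).enorm, hdilate, hdilate]

lemma IsBump.exists_norm_lpKernel_le (d : ℕ) (hβ : IsBump β₀) :
    ∃ C : ℝ≥0, ∀ j (x : Euc d), 1 ≤ ‖x‖ → (2 ^ j * ‖x‖) ^ (d + 1) * ‖lpKernel d β₀ j x‖ ≤ C := by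
  obtain ⟨C, hC0, hC⟩ := (hβ.kernel d).decay (2 * d + 1) 0
  simp only [norm_iteratedFDeriv_zero] at hC
  have hdilate {j k : ℕ} (hjk : j ≤ k + 1) {x : Euc d} (hx : 1 ≤ ‖x‖) :
      (2 ^ j * ‖x‖) ^ (d + 1) * ‖((2 : ℝ) ^ k) ^ d • hβ.kernel d ((2 : ℝ) ^ k • x)‖ ≤
        2 ^ (d + 1) * C := by
    have hj : (2 : ℝ) ^ j * ‖x‖ ≤ 2 * (2 ^ k * ‖x‖) := by
      rw [← mul_assoc, ← pow_succ']
      gcongr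
      exact one_le_two
    have hk : (2 : ℝ) ^ k ≤ 2 ^ k * ‖x‖ := le_mul_of_one_le_right (by positivity) hx
    have hdecay := hC ((2 : ℝ) ^ k • x)
    rw [norm_smul, Real.norm_of_nonneg (by positivity), show 2 * d + 1 = d + 1 + d by ring,
      pow_add _ (d + 1) d] at hdecay
    rw [norm_smul, Real.norm_of_nonneg (by positivity)]
    calc _ ≤ (2 * (2 ^ k * ‖x‖)) ^ (d + 1) *
            ((2 ^ k * ‖x‖) ^ d * ‖hβ.kernel d ((2 : ℝ) ^ k • x)‖) := by gcongr
      _ = 2 ^ (d + 1) * ((2 ^ k * ‖x‖) ^ (d + 1) * (2 ^ k * ‖x‖) ^ d *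
            ‖hβ.kernel d ((2 : ℝ) ^ k • x)‖) := by rw [mul_pow]; ring
      _ ≤ 2 ^ (d + 1) * C := by gcongr
  refine ⟨.mk (2 ^ (d + 1) * C + 2 ^ (d + 1) * C) (by positivity), fun j x hx => ?_⟩
  refine (mul_le_mul_of_nonneg_left (hβ.norm_lpKernel_le j x) (by positivity)).trans ?_
  rw [mul_add]
  exact add_le_add (hdilate (by omega) hx) (hdilate (by omega) hx)

lemma IsBump.freqLoc_eq_integral (hβ : IsBump β₀) (j : ℕ) {f : Euc d → ℂ} (hf : Integrable f)
    (x : Euc d) : freqLoc d β₀ j f x = ∫ u, lpKernel d β₀ j (x - u) * f u :=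
  fourierInv_mul_fourier_eq_integral (hβ.continuous_lpSymbol j) (hβ.integrable_lpSymbol j) hf x

lemma IsBump.exists_norm_freqLoc_le (d : ℕ) (hβ : IsBump β₀) (j : ℕ) :
    ∃ M : ℝ≥0, ∀ f : Euc d → ℂ, Integrable f → ∀ x, ‖freqLoc d β₀ j f x‖ ≤ M * ∫ u, ‖f u‖ := by
  refine ⟨.mk (∫ ξ, ‖lpSymbol d β₀ j ξ‖) (by positivity), fun f hf x => ?_⟩
  rw [hβ.freqLoc_eq_integral j hf, NNReal.coe_mk, ← integral_const_mul]
  refine norm_integral_le_of_norm_le (hf.norm.const_mul _) (ae_of_all _ fun u => ?_)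
  rw [norm_mul]
  gcongr
  exact norm_fourierInv_le_integral_norm _ _

lemma IsBump.exists_lintegral_enorm_freqLoc_rpow_le (d : ℕ) (hβ : IsBump β₀) {s : ℝ}
    (hs : 1 ≤ s) : ∃ C : ℝ≥0, ∀ j (f : Euc d → ℂ), Integrable f →
      ∫⁻ x, ‖freqLoc d β₀ j f x‖ₑ ^ s ≤ C * ∫⁻ x, ‖f x‖ₑ ^ s := by
  obtain ⟨C, hC⟩ := hβ.exists_lintegral_enorm_lpKernel_le d
  refine ⟨C ^ s, fun j f hf => ?_⟩
  simp_rw [hβ.freqLoc_eq_integral j hf]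
  refine (lintegral_enorm_integral_mul_rpow_le (hβ.continuous_lpKernel j) hf.1 hs).trans ?_
  rw [ENNReal.coe_rpow_of_nonneg _ (by linarith)]
  gcongr
  exact hC j

lemma IsBump.continuous_lpSymbol_mul_fourier (hβ : IsBump β₀) (j : ℕ) {f : Euc d → ℂ}
    (hf : Integrable f) : Continuous fun ξ => lpSymbol d β₀ j ξ * 𝓕 f ξ :=
  (hβ.continuous_lpSymbol j).mul (continuous_fourier_of_integrable hf)

lemma IsBump.continuous_freqLoc (hβ : IsBump β₀) (j : ℕ) {f : Euc d → ℂ} (hf : Integrable f) :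
    Continuous (freqLoc d β₀ j f) :=
  continuous_fourierInv_of_integrable ((hβ.continuous_lpSymbol_mul_fourier j hf)
    |>.integrable_of_hasCompactSupport (hβ.hasCompactSupport_lpSymbol j).mul_right)

/- The Fourier integral takes the junk value `0` off `L¹`. -/
lemma freqLoc_of_not_integrable (j : ℕ) {f : Euc d → ℂ} (hf : ¬Integrable f) :
    freqLoc d β₀ j f = 0 := by
  have hfourier (ξ : Euc d) : 𝓕 f ξ = 0 := by
    rw [Real.fourier_eq]
    exact integral_undef (by rwa [Real.fourierIntegral_convergent_iff])
  funext x
  simp [freqLoc, Real.fourierInv_eq, hfourier]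

lemma IsBump.integrable_lpKernel_mul (hβ : IsBump β₀) (j : ℕ) {f : Euc d → ℂ} (hf : Integrable f)
    (x : Euc d) : Integrable fun u => lpKernel d β₀ j (x - u) * f u := by
  have hK := hβ.continuous_lpKernel (d := d) j
  exact hf.bdd_mul (Continuous.aestronglyMeasurable (by fun_prop))
    (ae_of_all _ fun u => norm_fourierInv_le_integral_norm _ _)

lemma IsBump.freqLoc_add (hβ : IsBump β₀) (j : ℕ) {f g : Euc d → ℂ} (hf : Integrable f)
    (hg : Integrable g) : freqLoc d β₀ j (f + g) = freqLoc d β₀ j f + freqLoc d β₀ j g := by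
  funext x
  simp only [Pi.add_apply, hβ.freqLoc_eq_integral j hf, hβ.freqLoc_eq_integral j hg,
    hβ.freqLoc_eq_integral j (hf.add hg), mul_add]
  exact integral_add (hβ.integrable_lpKernel_mul j hf x) (hβ.integrable_lpKernel_mul j hg x)

lemma IsBump.freqLoc_smul (hβ : IsBump β₀) (j : ℕ) (c : ℂ) {f : Euc d → ℂ} (hf : Integrable f) :
    freqLoc d β₀ j (c • f) = c • freqLoc d β₀ j f := by
  funext x
  simp only [Pi.smul_apply, smul_eq_mul, hβ.freqLoc_eq_integral j hf,
    hβ.freqLoc_eq_integral j (hf.smul c), mul_left_comm _ c]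
  exact integral_const_mul _ _

end LittlewoodPaley

/-! ### Local averages of `𝒜_j f` -/

section LocalAverage

lemma IsCutoff.exists_norm_le {χ : ℝ → ℝ} (hχ : IsCutoff χ) : ∃ M : ℝ≥0, ∀ t, ‖χ t‖ ≤ M := by
  obtain ⟨M, hM⟩ := hχ.1.continuous.bounded_above_of_compact_support
    (.of_support_subset_isCompact isCompact_Icc hχ.2.2)
  exact ⟨M.toNNReal, fun t => (hM t).trans (Real.le_coe_toNNReal M)⟩

variable {d : ℕ} {χ β₀ : ℝ → ℝ}

lemma IsCutoff.Aj_eq_zero (hχ : IsCutoff χ) (j : ℕ) (f : Euc d → ℂ) (y : Euc d) {t : ℝ}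
    (ht : t ∉ Icc (1 / 2) 4) : Aj d χ β₀ j f y t = 0 := by
  simp [Aj, Function.notMem_support.1 fun h => ht (hχ.2.2 h)]

lemma IsCutoff.exists_lintegral_enorm_Aj_rpow_le (d : ℕ) (hχ : IsCutoff χ) {s : ℝ} (hs : 0 < s) :
    ∃ C : ℝ≥0, ∀ (β₀ : ℝ → ℝ) j (f : Euc d → ℂ) y, ∫⁻ t, ‖Aj d χ β₀ j f y t‖ₑ ^ s ≤
      C * ∫⁻ t in Icc (1 / 2) 4, ‖sphAvg (freqLoc d β₀ j f) t y‖ₑ ^ s := by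
  obtain ⟨M, hM⟩ := hχ.exists_norm_le
  refine ⟨M ^ s, fun β₀ j f y => ?_⟩
  have hsupp : Function.support (fun t => ‖Aj d χ β₀ j f y t‖ₑ ^ s) ⊆ Icc (1 / 2) 4 :=
    Function.support_subset_iff'.2 fun t ht => by
      rw [hχ.Aj_eq_zero j f y ht, enorm_zero, ENNReal.zero_rpow_of_pos hs]
  rw [← setLIntegral_eq_of_support_subset hsupp, ← lintegral_const_mul' _ _ ENNReal.coe_ne_top]
  refine lintegral_mono fun t => ?_
  rw [ENNReal.coe_rpow_of_nonneg _ hs.le, ← ENNReal.mul_rpow_of_nonneg _ _ hs.le, Aj, enorm_mul]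
  gcongr
  rw [enorm_le_coe, ← NNReal.coe_le_coe]
  simpa using hM t

lemma Aj_of_not_integrable (j : ℕ) {f : Euc d → ℂ} (hf : ¬Integrable f) (y : Euc d) (t : ℝ) :
    Aj d χ β₀ j f y t = 0 := by
  simp [Aj, freqLoc_of_not_integrable j hf, sphAvg]

/-- The radius `(d + 4) 2^{n-j}` of the balls over which `𝒜_j f` is averaged: a cube with side
at most `2^{n-j}` lies in the ball of this radius about each of its points. -/
def avgRadius (d n j : ℕ) : ℝ := (d + 4) * 2 ^ ((n : ℤ) - j)

lemma avgRadius_pos (d n j : ℕ) : 0 < avgRadius d n j := by unfold avgRadius; positivity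

/-- Up to a dimensional constant, the average of `∫ |𝒜_j f(y, t)|^s dt` over the ball of radius
`avgRadius d n j` about `x`. -/
def localAvg (d : ℕ) (χ β₀ : ℝ → ℝ) (n j : ℕ) (s : ℝ) (f : Euc d → ℂ) (x : Euc d) : ℝ≥0∞ :=
  (ENNReal.ofReal (avgRadius d n j ^ d))⁻¹ *
    ∫⁻ y in closedBall x (avgRadius d n j), ∫⁻ t, ‖Aj d χ β₀ j f y t‖ₑ ^ s

lemma ofReal_avgRadius_pow_ne_zero (d n j : ℕ) : ENNReal.ofReal (avgRadius d n j ^ d) ≠ 0 := by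
  rw [ENNReal.ofReal_ne_zero_iff]
  exact pow_pos (avgRadius_pos d n j) d

lemma volume_closedBall_avgRadius (n j : ℕ) (x : Euc d) :
    volume (closedBall x (avgRadius d n j)) =
      ENNReal.ofReal (avgRadius d n j ^ d) * volume (ball (0 : Euc d) 1) := by
  rw [Measure.addHaar_closedBall _ _ (avgRadius_pos d n j).le, finrank_euclideanSpace_fin]

lemma localAvg_le_volume_mul {n j : ℕ} {s : ℝ} {f : Euc d → ℂ} {x : Euc d} {B : ℝ≥0∞}
    (hB : ∀ y ∈ closedBall x (avgRadius d n j), ∫⁻ t, ‖Aj d χ β₀ j f y t‖ₑ ^ s ≤ B) :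
    localAvg d χ β₀ n j s f x ≤ volume (ball (0 : Euc d) 1) * B := by
  calc _ ≤ (ENNReal.ofReal (avgRadius d n j ^ d))⁻¹ *
          ∫⁻ _ in closedBall x (avgRadius d n j), B := by
        exact mul_le_mul_right (setLIntegral_mono' measurableSet_closedBall hB) _
    _ = _ := by
        rw [setLIntegral_const, volume_closedBall_avgRadius, mul_left_comm,
          ENNReal.inv_mul_cancel_left (ofReal_avgRadius_pow_ne_zero d n j) ENNReal.ofReal_ne_top,
          mul_comm]

lemma two_pow_le_avgRadius_mul (d n k : ℕ) : (2 : ℝ) ^ n ≤ avgRadius d n (k + 1) * (2 ^ k / 2) := by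
  have hscale : avgRadius d n (k + 1) * (2 ^ k / 2) = (d + 4) / 4 * 2 ^ n := by
    rw [avgRadius, zpow_sub₀ two_ne_zero, zpow_natCast, zpow_natCast, pow_succ]
    field
  rw [hscale]
  refine le_mul_of_one_le_left (by positivity) ?_
  linarith [(Nat.cast_nonneg d : (0 : ℝ) ≤ d)]

lemma Aj_smul (hβ : IsBump β₀) (j : ℕ) (c : ℂ) {f : Euc d → ℂ} (hf : Integrable f) (y : Euc d)
    (t : ℝ) : Aj d χ β₀ j (c • f) y t = c * Aj d χ β₀ j f y t := by
  simp only [Aj, sphAvg, hβ.freqLoc_smul j c hf, Pi.smul_apply, smul_eq_mul, mul_left_comm _ c,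
    integral_const_mul]

variable [NeZero d]

lemma continuous_Aj (hχ : IsCutoff χ) (hβ : IsBump β₀) (j : ℕ) {f : Euc d → ℂ}
    (hf : Integrable f) : Continuous fun z : Euc d × ℝ => Aj d χ β₀ j f z.1 z.2 := by
  obtain ⟨M, hM⟩ := hβ.exists_norm_freqLoc_le d j
  have hsph := continuous_sphAvg (hβ.continuous_freqLoc j hf) (hM f hf)
  have hχc : Continuous χ := hχ.1.continuous
  unfold Aj
  fun_prop

lemma measurable_Aj (hχ : IsCutoff χ) (hβ : IsBump β₀) (j : ℕ) (f : Euc d → ℂ) :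
    Measurable fun z : Euc d × ℝ => Aj d χ β₀ j f z.1 z.2 := by
  by_cases hf : Integrable f
  · exact (continuous_Aj hχ hβ j hf).measurable
  · simp only [Aj_of_not_integrable j hf, measurable_const]

lemma exists_norm_Aj_le (d : ℕ) [NeZero d] (hχ : IsCutoff χ) (hβ : IsBump β₀) (j : ℕ) :
    ∃ M : ℝ≥0, ∀ f : Euc d → ℂ, Integrable f → ∀ y t,
      ‖Aj d χ β₀ j f y t‖ ≤ M * ∫ u, ‖f u‖ := by
  obtain ⟨M, hM⟩ := hχ.exists_norm_le
  obtain ⟨M', hM'⟩ := hβ.exists_norm_freqLoc_le d j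
  refine ⟨M * M', fun f hf y t => ?_⟩
  have hsph : ‖sphAvg (freqLoc d β₀ j f) t y‖ ≤ M' * ∫ u, ‖f u‖ := by
    simpa [sphAvg] using norm_integral_le_of_norm_le_const (μ := sphereMeasure d)
      (ae_of_all _ fun w => hM' f hf (y - t • w))
  rw [Aj, norm_mul, Complex.norm_real, NNReal.coe_mul, mul_assoc]
  gcongr
  exact hM t

lemma integrable_freqLoc_sphereMeasure (hβ : IsBump β₀) (j : ℕ) {f : Euc d → ℂ}
    (hf : Integrable f) (y : Euc d) (t : ℝ) :
    Integrable (fun w => freqLoc d β₀ j f (y - t • w)) (sphereMeasure d) := by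
  obtain ⟨M, hM⟩ := hβ.exists_norm_freqLoc_le d j
  have hcont := hβ.continuous_freqLoc j hf
  exact .of_bound (Continuous.aestronglyMeasurable (by fun_prop)) _
    (ae_of_all _ fun w => hM f hf _)

lemma Aj_add (hβ : IsBump β₀) (j : ℕ) {f g : Euc d → ℂ} (hf : Integrable f) (hg : Integrable g)
    (y : Euc d) (t : ℝ) : Aj d χ β₀ j (f + g) y t = Aj d χ β₀ j f y t + Aj d χ β₀ j g y t := by
  simp only [Aj, sphAvg, hβ.freqLoc_add j hf hg, Pi.add_apply]
  rw [integral_add (integrable_freqLoc_sphereMeasure hβ j hf y t)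
    (integrable_freqLoc_sphereMeasure hβ j hg y t), mul_add]

lemma exists_setLIntegral_sphAvg_rpow_le (d : ℕ) [NeZero d] {s : ℝ} (hs : 1 ≤ s) :
    ∃ C : ℝ≥0, ∀ h : Euc d → ℂ, Continuous h → ∀ y,
      ∫⁻ t in Icc (1 / 2) 4, ‖sphAvg h t y‖ₑ ^ s ≤ C * ∫⁻ x, ‖h x‖ₑ ^ s := by
  obtain ⟨C, hC⟩ := setLIntegral_Icc_le_lintegral_comp_norm (d := d)
  refine ⟨C, fun h hh y => ?_⟩
  have hhm := hh.measurable
  have hJensen (t : ℝ) :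
      ‖sphAvg h t y‖ₑ ^ s ≤ ∫⁻ w, ‖h (y - t • w)‖ₑ ^ s ∂sphereMeasure d := by
    calc _ ≤ (∫⁻ w, ‖h (y - t • w)‖ₑ ∂sphereMeasure d) ^ s := by
          gcongr; exact enorm_integral_le_lintegral_enorm _
      _ ≤ _ := by
          simpa using lintegral_rpow_le_measure_univ_mul (μ := sphereMeasure d)
            (g := fun w => ‖h (y - t • w)‖ₑ) (by fun_prop) hs
  calc _ ≤ ∫⁻ t in Icc (1 / 2) 4, ∫⁻ w, ‖h (y - t • w)‖ₑ ^ s ∂sphereMeasure d :=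
        lintegral_mono hJensen
    _ ≤ C * ∫⁻ u : Euc d, ∫⁻ w, ‖h (y - ‖u‖ • w)‖ₑ ^ s ∂sphereMeasure d :=
        hC _ (Measurable.lintegral_prod_right' (f := fun z : ℝ × Euc d => ‖h (y - z.1 • z.2)‖ₑ ^ s)
          (by fun_prop))
    _ = C * ∫⁻ x, ‖h x‖ₑ ^ s := by
        rw [← lintegral_eq_lintegral_lintegral_norm_smul (g := fun u => ‖h (y - u)‖ₑ ^ s)
          (by fun_prop), lintegral_sub_left_eq_self (fun u => ‖h u‖ₑ ^ s) y]

lemma exists_lintegral_enorm_Aj_rpow_le (d : ℕ) [NeZero d] (hχ : IsCutoff χ) (hβ : IsBump β₀)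
    {s : ℝ} (hs : 1 ≤ s) : ∃ C : ℝ≥0, ∀ j (f : Euc d → ℂ), Integrable f → ∀ y,
      ∫⁻ t, ‖Aj d χ β₀ j f y t‖ₑ ^ s ≤ C * ∫⁻ x, ‖f x‖ₑ ^ s := by
  obtain ⟨C₁, hC₁⟩ := hχ.exists_lintegral_enorm_Aj_rpow_le d (zero_lt_one.trans_le hs)
  obtain ⟨C₂, hC₂⟩ := exists_setLIntegral_sphAvg_rpow_le d hs
  obtain ⟨C₃, hC₃⟩ := hβ.exists_lintegral_enorm_freqLoc_rpow_le d hs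
  refine ⟨C₁ * C₂ * C₃, fun j f hf y => ?_⟩
  calc _ ≤ C₁ * (C₂ * (C₃ * ∫⁻ x, ‖f x‖ₑ ^ s)) := (hC₁ β₀ j f y).trans <| by
        gcongr; exact (hC₂ _ (hβ.continuous_freqLoc j hf) y).trans (by gcongr; exact hC₃ j f hf)
    _ = _ := by push_cast; ring

lemma exists_localAvg_le (d : ℕ) [NeZero d] (hχ : IsCutoff χ) (hβ : IsBump β₀) {s : ℝ}
    (hs : 1 ≤ s) : ∃ C : ℝ≥0, ∀ n j (f : Euc d → ℂ), Integrable f → ∀ x,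
      localAvg d χ β₀ n j s f x ≤ C * ∫⁻ y, ‖f y‖ₑ ^ s := by
  obtain ⟨C, hC⟩ := exists_lintegral_enorm_Aj_rpow_le d hχ hβ hs
  refine ⟨(volume (ball (0 : Euc d) 1)).toNNReal * C, fun n j f hf x => ?_⟩
  rw [ENNReal.coe_mul, ENNReal.coe_toNNReal measure_ball_lt_top.ne, mul_assoc]
  exact localAvg_le_volume_mul fun y _ => hC j f hf y

lemma IsBump.exists_lintegral_enorm_lpSymbol_mul_fourier_sq_le (d : ℕ) (hβ : IsBump β₀) :
    ∃ C : ℝ≥0, ∀ j (f : Euc d → ℂ), Integrable f →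
      ∫⁻ ξ, ‖lpSymbol d β₀ j ξ * 𝓕 f ξ‖ₑ ^ 2 ≤ C * ∫⁻ x, ‖f x‖ₑ ^ 2 := by
  obtain ⟨B, hB⟩ := hβ.exists_norm_lpSymbol_le d
  refine ⟨B ^ 2, fun j f hf => ?_⟩
  calc _ ≤ ∫⁻ ξ, (B : ℝ≥0∞) ^ 2 * ‖𝓕 f ξ‖ₑ ^ 2 := lintegral_mono fun ξ => by
        rw [enorm_mul, mul_pow]
        gcongr
        rw [enorm_le_coe]
        exact hB j ξ
    _ = (B : ℝ≥0∞) ^ 2 * ∫⁻ ξ, ‖𝓕 f ξ‖ₑ ^ 2 := lintegral_const_mul' _ _ (by simp)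
    _ ≤ _ := by push_cast; gcongr 1; exact lintegral_enorm_fourier_sq_le hf

lemma ofReal_pow_mul_rpow_le {R ρ : ℝ} (hR : 0 < R) (d : ℕ) {n : ℕ} (hρ : 2 ^ n ≤ R * ρ) :
    ENNReal.ofReal (R ^ d * (R * ρ) ^ (-(1 / 2 : ℝ))) ≤
      ENNReal.ofReal (R ^ d) * 2 ^ (-((n : ℝ) * (1 / 2))) := by
  rw [ENNReal.ofReal_mul (by positivity), ← ENNReal.ofReal_ofNat 2,
    ENNReal.ofReal_rpow_of_pos two_pos]
  gcongr
  calc (R * ρ) ^ (-(1 / 2 : ℝ)) ≤ ((2 : ℝ) ^ n) ^ (-(1 / 2 : ℝ)) :=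
        Real.rpow_le_rpow_of_nonpos (by positivity) hρ (by norm_num)
    _ = 2 ^ (-((n : ℝ) * (1 / 2))) := by
        rw [← Real.rpow_natCast, ← Real.rpow_mul two_pos.le, mul_neg]

lemma exists_setLIntegral_closedBall_sphAvg_freqLoc_sq_le (hd : 2 ≤ d) (hβ : IsBump β₀) :
    ∃ C : ℝ≥0, ∀ n k (f : Euc d → ℂ), Integrable f → ∀ x,
      ∫⁻ y in closedBall x (avgRadius d n (k + 1)), ∫⁻ t in Icc (1 / 2) 4,
        ‖sphAvg (freqLoc d β₀ (k + 1) f) t y‖ₑ ^ 2 ≤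
      C * (ENNReal.ofReal (avgRadius d n (k + 1) ^ d) * 2 ^ (-((n : ℝ) * (1 / 2)))) *
        ∫⁻ y, ‖f y‖ₑ ^ 2 := by
  obtain ⟨C₁, hC₁⟩ := exists_setLIntegral_closedBall_sphAvg_sq_le hd
  obtain ⟨C₂, hC₂⟩ := hβ.exists_lintegral_enorm_lpSymbol_mul_fourier_sq_le d
  refine ⟨C₁ * C₂, fun n k f hf x => ?_⟩
  have hRρ := two_pow_le_avgRadius_mul d n k
  have hR := avgRadius_pos d n (k + 1)
  calc _ ≤ C₁ * ENNReal.ofReal (avgRadius d n (k + 1) ^ d *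
          (avgRadius d n (k + 1) * (2 ^ k / 2)) ^ (-(1 / 2 : ℝ))) *
            ∫⁻ ξ, ‖lpSymbol d β₀ (k + 1) ξ * 𝓕 f ξ‖ₑ ^ 2 :=
        hC₁ _ (hβ.continuous_lpSymbol_mul_fourier (k + 1) hf)
          (hβ.hasCompactSupport_lpSymbol (k + 1)).mul_right x hR
          ((one_le_pow₀ one_le_two).trans hRρ)
          fun ξ hξ => by rw [hβ.lpSymbol_succ_eq_zero hξ, zero_mul]
    _ ≤ C₁ * (ENNReal.ofReal (avgRadius d n (k + 1) ^ d) * 2 ^ (-((n : ℝ) * (1 / 2)))) *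
          (C₂ * ∫⁻ y, ‖f y‖ₑ ^ 2) :=
        mul_le_mul' (mul_le_mul_right (ofReal_pow_mul_rpow_le hR d hRρ) _) (hC₂ (k + 1) f hf)
    _ = _ := by push_cast; ring

theorem exists_localAvg_two_le (hd : 2 ≤ d) (hχ : IsCutoff χ) (hβ : IsBump β₀) :
    ∃ C : ℝ≥0, ∀ n j, n ≤ j → ∀ f : Euc d → ℂ, Integrable f → ∀ x,
      localAvg d χ β₀ n j 2 f x ≤
        C * (2 : ℝ≥0∞) ^ (-((n : ℝ) * (1 / 2))) * ∫⁻ y, ‖f y‖ₑ ^ (2 : ℝ) := by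
  obtain ⟨C₀, hC₀⟩ := exists_localAvg_le d hχ hβ one_le_two
  obtain ⟨C₁, hC₁⟩ := hχ.exists_lintegral_enorm_Aj_rpow_le d two_pos
  obtain ⟨C₂, hC₂⟩ := exists_setLIntegral_closedBall_sphAvg_freqLoc_sq_le hd hβ
  simp only [ENNReal.rpow_two] at hC₀ hC₁ ⊢
  refine ⟨C₀ + C₁ * C₂, fun n j hnj f hf x => ?_⟩
  rcases j with _ | k
  · obtain rfl : n = 0 := by omega
    refine (hC₀ 0 0 f hf x).trans ?_
    simp only [Nat.cast_zero, zero_mul, neg_zero, ENNReal.rpow_zero, mul_one]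
    gcongr
    exact le_self_add
  set R := avgRadius d n (k + 1) with hR
  set decay := (2 : ℝ≥0∞) ^ (-((n : ℝ) * (1 / 2)))
  calc localAvg d χ β₀ n (k + 1) 2 f x
      ≤ (ENNReal.ofReal (R ^ d))⁻¹ * ∫⁻ y in closedBall x R,
          C₁ * ∫⁻ t in Icc (1 / 2) 4, ‖sphAvg (freqLoc d β₀ (k + 1) f) t y‖ₑ ^ 2 := by
        rw [localAvg, ← hR]
        simp only [ENNReal.rpow_two]
        gcongr with y
        exact hC₁ β₀ (k + 1) f y
    _ ≤ (ENNReal.ofReal (R ^ d))⁻¹ *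
          (C₁ * (C₂ * (ENNReal.ofReal (R ^ d) * decay) * ∫⁻ y, ‖f y‖ₑ ^ 2)) := by
        rw [lintegral_const_mul' _ _ ENNReal.coe_ne_top]
        gcongr
        exact hC₂ n k f hf x
    _ = (ENNReal.ofReal (R ^ d))⁻¹ * ENNReal.ofReal (R ^ d) *
          (C₁ * C₂ * decay * ∫⁻ y, ‖f y‖ₑ ^ 2) := by ring
    _ ≤ _ := by
        rw [ENNReal.inv_mul_cancel (ofReal_avgRadius_pow_ne_zero d n (k + 1))
          ENNReal.ofReal_ne_top, one_mul]
        push_cast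
        gcongr
        exact le_add_self

end LocalAverage

/-! ### Real interpolation of subadditive operators -/

lemma exists_tsum_two_rpow_neg_mul_abs_sub_le {η : ℝ} (hη : 0 < η) :
    ∃ K : ℝ≥0, ∀ τ : ℝ, ∑' k : ℤ, (2 : ℝ≥0∞) ^ (-(η * |k - τ|)) ≤ K := by
  have hsum : Summable fun k : ℤ => (2 : ℝ) ^ (-(η * |(k : ℝ)|)) := by
    have hnat : Summable fun k : ℕ => (2 : ℝ) ^ (-(η * |(k : ℝ)|)) := by
      refine (summable_geometric_of_lt_one (r := (2 : ℝ) ^ (-η)) (by positivity)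
        (Real.rpow_lt_one_of_one_lt_of_neg one_lt_two (neg_lt_zero.2 hη))).congr fun k => ?_
      rw [← Real.rpow_natCast, ← Real.rpow_mul two_pos.le, Nat.abs_cast, neg_mul]
    refine Summable.of_nat_of_neg ?_ ?_
    · simpa using hnat
    · simpa using hnat
  have hfin : ∑' k : ℤ, (2 : ℝ≥0∞) ^ (-(η * |(k : ℝ)|)) ≠ ∞ := by
    have h2 (k : ℤ) : (2 : ℝ≥0∞) ^ (-(η * |(k : ℝ)|)) =
        ENNReal.ofReal ((2 : ℝ) ^ (-(η * |(k : ℝ)|))) := by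
      rw [← ENNReal.ofReal_rpow_of_pos two_pos, ENNReal.ofReal_ofNat]
    simpa only [h2] using hsum.tsum_ofReal_ne_top
  lift ∑' k : ℤ, (2 : ℝ≥0∞) ^ (-(η * |(k : ℝ)|)) to ℝ≥0 using hfin with S hS
  refine ⟨2 ^ η * S, fun τ => ?_⟩
  have hround (k : ℤ) : (2 : ℝ≥0∞) ^ (-(η * |k - τ|)) ≤
      2 ^ η * 2 ^ (-(η * |((k - round τ : ℤ) : ℝ)|)) := by
    rw [← ENNReal.rpow_add _ _ two_ne_zero ENNReal.ofNat_ne_top]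
    refine ENNReal.rpow_le_rpow_of_exponent_le one_le_two ?_
    have := abs_sub_round τ
    have : |(k : ℝ) - round τ| ≤ |k - τ| + |τ - round τ| := abs_sub_le ..
    push_cast
    nlinarith
  calc ∑' k : ℤ, (2 : ℝ≥0∞) ^ (-(η * |k - τ|))
      ≤ ∑' k : ℤ, 2 ^ η * (2 : ℝ≥0∞) ^ (-(η * |((k - round τ : ℤ) : ℝ)|)) :=
        ENNReal.tsum_le_tsum hround
    _ = (2 ^ η * S : ℝ≥0) := by
        have hshift := (Equiv.subRight (round τ)).tsum_eq
          fun k : ℤ => (2 : ℝ≥0∞) ^ (-(η * |(k : ℝ)|))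
        simp only [Equiv.subRight_apply] at hshift
        rw [ENNReal.tsum_mul_left, hshift, ← hS, ENNReal.coe_mul,
          ENNReal.coe_rpow_of_nonneg _ hη.le, ENNReal.coe_ofNat]

lemma exists_eq_two_rpow {a : ℝ≥0∞} (h0 : a ≠ 0) (h : a ≠ ∞) : ∃ x : ℝ, a = 2 ^ x := by
  lift a to ℝ≥0 using h
  have ha : (0 : ℝ) < a := NNReal.coe_pos.2 (pos_iff_ne_zero.2 (by exact_mod_cast h0))
  refine ⟨Real.logb 2 a, ?_⟩
  rw [show (2 : ℝ≥0∞) = ENNReal.ofReal 2 by simp, ENNReal.ofReal_rpow_of_pos two_pos,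
    Real.rpow_logb two_pos (by norm_num) ha, ENNReal.ofReal_coe_nnreal]

lemma le_two_rpow_of_two_rpow_mul_le {a e x : ℝ} {y : ℝ≥0∞}
    (h : 2 ^ e * y ≤ (2 : ℝ≥0∞) ^ a) (hx : a - e ≤ x) : y ≤ 2 ^ x := by
  calc y = 2 ^ (-e) * (2 ^ e * y) := by
        rw [← mul_assoc, ← ENNReal.rpow_add _ _ two_ne_zero ENNReal.ofNat_ne_top,
          neg_add_cancel, ENNReal.rpow_zero, one_mul]
    _ ≤ 2 ^ (-e) * 2 ^ a := mul_le_mul_right h _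
    _ = 2 ^ (a - e) := by
        rw [← ENNReal.rpow_add _ _ two_ne_zero ENNReal.ofNat_ne_top, neg_add_eq_sub]
    _ ≤ 2 ^ x := ENNReal.rpow_le_rpow_of_exponent_le one_le_two hx

lemma exists_tsum_le_mul_two_rpow {θ e₀ e₁ : ℝ} (hθ₀ : 0 < θ) (hθ₁ : θ < 1) (he₁ : e₁ ≠ 0)
    (he : (1 - θ) * e₁ + θ * e₀ = 0) :
    ∃ K : ℝ≥0, ∀ (b : ℤ → ℝ≥0∞) (x₁ x₀ : ℝ), (∀ k : ℤ, 2 ^ (k * e₁) * b k ≤ 2 ^ x₁) →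
      (∀ k : ℤ, 2 ^ (k * e₀) * b k ≤ 2 ^ x₀) →
      ∑' k, b k ≤ K * 2 ^ ((1 - θ) * x₁ + θ * x₀) := by
  obtain ⟨c, hc⟩ : ∃ c, c = e₁ - e₀ := ⟨_, rfl⟩
  obtain rfl : e₁ = θ * c := by linear_combination he - θ * hc
  obtain rfl : e₀ = -((1 - θ) * c) := by linear_combination hc
  have hc₀ : c ≠ 0 := right_ne_zero_of_mul he₁
  obtain ⟨K, hK⟩ := exists_tsum_two_rpow_neg_mul_abs_sub_le
    (mul_pos (lt_min hθ₀ (sub_pos.2 hθ₁)) (abs_pos.2 hc₀))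
  refine ⟨K, fun b x₁ x₀ h₁ h₀ => ?_⟩
  -- The two bounds balance at `k = τ`, and one of them decays geometrically on each side of it.
  obtain ⟨τ, hτ⟩ : ∃ τ, x₁ - x₀ = c * τ := ⟨(x₁ - x₀) / c, (mul_div_cancel₀ _ hc₀).symm⟩
  have hb (k : ℤ) : b k ≤ 2 ^ ((1 - θ) * x₁ + θ * x₀) *
      2 ^ (-(min θ (1 - θ) * |c| * |k - τ|)) := by
    rw [← ENNReal.rpow_add _ _ two_ne_zero ENNReal.ofNat_ne_top, mul_assoc, ← abs_mul]
    rcases le_total 0 (c * (k - τ)) with hk | hk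
    · refine le_two_rpow_of_two_rpow_mul_le (h₁ k) ?_
      rw [abs_of_nonneg hk]
      nlinarith [min_le_left θ (1 - θ)]
    · refine le_two_rpow_of_two_rpow_mul_le (h₀ k) ?_
      rw [abs_of_nonpos hk]
      nlinarith [min_le_right θ (1 - θ)]
  calc ∑' k, b k ≤ ∑' k : ℤ, 2 ^ ((1 - θ) * x₁ + θ * x₀) *
        (2 : ℝ≥0∞) ^ (-(min θ (1 - θ) * |c| * |k - τ|)) := ENNReal.tsum_le_tsum hb
    _ ≤ K * 2 ^ ((1 - θ) * x₁ + θ * x₀) := by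
        rw [ENNReal.tsum_mul_left, mul_comm]
        exact mul_le_mul_left (hK τ) _

lemma exists_tsum_le_rpow_mul_rpow {θ e₀ e₁ : ℝ} (hθ₀ : 0 < θ) (hθ₁ : θ < 1) (he₁ : e₁ ≠ 0)
    (he : (1 - θ) * e₁ + θ * e₀ = 0) :
    ∃ K : ℝ≥0, ∀ (b : ℤ → ℝ≥0∞) (A₁ A₀ : ℝ≥0∞), (∀ k : ℤ, 2 ^ (k * e₁) * b k ≤ A₁) →
      (∀ k : ℤ, 2 ^ (k * e₀) * b k ≤ A₀) → ∑' k, b k ≤ K * (A₁ ^ (1 - θ) * A₀ ^ θ) := by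
  obtain ⟨K, hK⟩ := exists_tsum_le_mul_two_rpow hθ₀ hθ₁ he₁ he
  have hzero {e : ℝ} {b : ℤ → ℝ≥0∞} (h : ∀ k : ℤ, 2 ^ (k * e) * b k ≤ 0) : ∑' k, b k = 0 :=
    ENNReal.tsum_eq_zero.2 fun k => by simpa [ENNReal.rpow_eq_zero_iff] using h k
  refine ⟨K + 1, fun b A₁ A₀ h₁ h₀ => ?_⟩
  rcases eq_or_ne A₁ 0 with rfl | hA₁
  · simp [hzero h₁]
  rcases eq_or_ne A₀ 0 with rfl | hA₀
  · simp [hzero h₀]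
  by_cases htop : A₁ = ∞ ∨ A₀ = ∞
  · have hprod : A₁ ^ (1 - θ) * A₀ ^ θ = ∞ := by
      rw [ENNReal.mul_eq_top]
      rcases htop with rfl | rfl
      · exact Or.inr ⟨ENNReal.top_rpow_of_pos (sub_pos.2 hθ₁),
          by simp [ENNReal.rpow_eq_zero_iff, hA₀, hθ₀.le]⟩
      · exact Or.inl ⟨by simp [ENNReal.rpow_eq_zero_iff, hA₁, hθ₁.le],
          ENNReal.top_rpow_of_pos hθ₀⟩
    simp [hprod]
  obtain ⟨hA₁t, hA₀t⟩ := not_or.1 htop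
  obtain ⟨x₁, rfl⟩ := exists_eq_two_rpow hA₁ hA₁t
  obtain ⟨x₀, rfl⟩ := exists_eq_two_rpow hA₀ hA₀t
  rw [← ENNReal.rpow_mul, ← ENNReal.rpow_mul,
    ← ENNReal.rpow_add _ _ two_ne_zero ENNReal.ofNat_ne_top, mul_comm x₁, mul_comm x₀]
  exact (hK b x₁ x₀ h₁ h₀).trans (mul_le_mul_left (ENNReal.coe_le_coe.2 le_self_add) _)

section Interpolation

variable {X Y E : Type*} [NormedAddCommGroup E]

/-- The part of `f` with values of size between `2 ^ k` and `2 ^ (k + 1)`, used to decompose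
functions into pieces that behave alike for all `L^p` norms. -/
def dyadicPiece (f : X → E) (k : ℤ) : X → E :=
  ((fun x => ‖f x‖) ⁻¹' Ico ((2 : ℝ) ^ k) (2 ^ (k + 1))).indicator f

lemma dyadicPiece_apply (f : X → E) (k : ℤ) (x : X) :
    dyadicPiece f k x = if k = Int.log 2 ‖f x‖ then f x else 0 := by
  rcases eq_or_ne (f x) 0 with hx | hx
  · simp [dyadicPiece, hx]
  have hk : x ∈ (fun x => ‖f x‖) ⁻¹' Ico ((2 : ℝ) ^ k) (2 ^ (k + 1)) ↔ k = Int.log 2 ‖f x‖ := by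
    have hpos : 0 < ‖f x‖ := norm_pos_iff.2 hx
    have hle := Int.zpow_le_iff_le_log (b := 2) one_lt_two hpos (x := k)
    have hlt := Int.lt_zpow_iff_log_lt (b := 2) one_lt_two hpos (x := k + 1)
    push_cast at hle hlt
    rw [mem_preimage, mem_Ico, hle, hlt]
    omega
  split_ifs with h
  · exact indicator_of_mem (hk.2 h) f
  · exact indicator_of_notMem (mt hk.1 h) f

lemma hasSum_dyadicPiece (f : X → E) (x : X) : HasSum (dyadicPiece f · x) (f x) := by
  simp only [dyadicPiece_apply]
  exact hasSum_ite_eq _ _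

lemma two_rpow_mul_le_mul_rpow {l e : ℝ} {r : ℝ≥0∞} (hl : 2 ^ l ≤ r) (hr : r ≤ 2 ^ (l + 1)) :
    2 ^ (l * e) ≤ (2 : ℝ≥0∞) ^ |e| * r ^ e := by
  rcases le_total 0 e with he | he
  · calc (2 : ℝ≥0∞) ^ (l * e) = (2 ^ l) ^ e := ENNReal.rpow_mul ..
      _ ≤ r ^ e := ENNReal.rpow_le_rpow hl he
      _ ≤ 2 ^ |e| * r ^ e :=
        le_mul_of_one_le_left' (by
          simpa using ENNReal.rpow_le_rpow_of_exponent_le one_le_two (abs_nonneg e))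
  · calc (2 : ℝ≥0∞) ^ (l * e) = 2 ^ |e| * (2 ^ (l + 1)) ^ e := by
          rw [← ENNReal.rpow_mul, ← ENNReal.rpow_add _ _ two_ne_zero ENNReal.ofNat_ne_top,
            abs_of_nonpos he]
          ring_nf
      _ ≤ 2 ^ |e| * r ^ e := by
        refine mul_le_mul_right ?_ _
        rw [← neg_neg e, ENNReal.rpow_neg, ENNReal.rpow_neg r, ENNReal.inv_le_inv]
        exact ENNReal.rpow_le_rpow hr (neg_nonneg.2 he)

lemma two_rpow_log_le_enorm {z : E} (hz : z ≠ 0) :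
    (2 : ℝ≥0∞) ^ (Int.log 2 ‖z‖ : ℝ) ≤ ‖z‖ₑ ∧ ‖z‖ₑ ≤ 2 ^ ((Int.log 2 ‖z‖ : ℝ) + 1) := by
  have hofReal (l : ℤ) : (2 : ℝ≥0∞) ^ (l : ℝ) = ENNReal.ofReal ((2 : ℝ) ^ l) := by
    rw [← Real.rpow_intCast, ← ENNReal.ofReal_rpow_of_pos two_pos, ENNReal.ofReal_ofNat]
  have hle := Int.zpow_log_le_self (b := 2) one_lt_two (norm_pos_iff.2 hz)
  have hlt := Int.lt_zpow_succ_log_self (b := 2) one_lt_two ‖z‖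
  push_cast at hle hlt
  rw [hofReal, show (Int.log 2 ‖z‖ : ℝ) + 1 = (Int.log 2 ‖z‖ + 1 : ℤ) by push_cast; rfl, hofReal,
    ← ofReal_norm]
  exact ⟨ENNReal.ofReal_le_ofReal hle, ENNReal.ofReal_le_ofReal hlt.le⟩

variable [MeasurableSpace X] [MeasurableSpace Y] {μ : Measure X}

lemma integrable_dyadicPiece {f : X → E} (hf : Integrable f μ) (k : ℤ) :
    Integrable (dyadicPiece f k) μ :=
  hf.integrableOn.integrable_indicator₀
    (hf.norm.aemeasurable.nullMeasurableSet_preimage measurableSet_Ico)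

lemma tsum_two_rpow_mul_lintegral_enorm_dyadicPiece_rpow_le {f : X → E} (hf : Integrable f μ)
    {s : ℝ} (hs : 0 < s) (p : ℝ) :
    ∑' k : ℤ, (2 : ℝ≥0∞) ^ (k * (p - s)) * ∫⁻ x, ‖dyadicPiece f k x‖ₑ ^ s ∂μ ≤
      2 ^ |p - s| * ∫⁻ x, ‖f x‖ₑ ^ p ∂μ := by
  have hmeas (k : ℤ) : AEMeasurable (fun x => ‖dyadicPiece f k x‖ₑ ^ s) μ :=
    (integrable_dyadicPiece hf k).aestronglyMeasurable.enorm.pow_const s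
  have htop (e : ℝ) : (2 : ℝ≥0∞) ^ e ≠ ∞ := by simp
  simp only [← lintegral_const_mul' _ _ (htop _)]
  rw [← lintegral_tsum fun k => (hmeas k).const_mul _]
  refine lintegral_mono fun x => ?_
  rcases eq_or_ne (f x) 0 with hx | hx
  · simp [dyadicPiece_apply, hx, hs]
  have hterm (k : ℤ) : (2 : ℝ≥0∞) ^ (k * (p - s)) * ‖dyadicPiece f k x‖ₑ ^ s =
      if k = Int.log 2 ‖f x‖ then 2 ^ ((Int.log 2 ‖f x‖ : ℝ) * (p - s)) * ‖f x‖ₑ ^ s else 0 := by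
    rw [dyadicPiece_apply]
    split_ifs with h <;> simp [h, hs]
  obtain ⟨hl, hr⟩ := two_rpow_log_le_enorm hx
  calc ∑' k : ℤ, (2 : ℝ≥0∞) ^ (k * (p - s)) * ‖dyadicPiece f k x‖ₑ ^ s
      = 2 ^ ((Int.log 2 ‖f x‖ : ℝ) * (p - s)) * ‖f x‖ₑ ^ s := by
        simp only [hterm, tsum_ite_eq]
    _ ≤ 2 ^ |p - s| * ‖f x‖ₑ ^ (p - s) * ‖f x‖ₑ ^ s :=
        mul_le_mul_left (two_rpow_mul_le_mul_rpow hl hr) _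
    _ = 2 ^ |p - s| * ‖f x‖ₑ ^ p := by
        rw [mul_assoc, ← ENNReal.rpow_add _ _ (by simpa) (by simp), sub_add_cancel]

/-- A subadditive operator on integrable functions, bounded from `L¹` to `L^∞`. Its values are
recorded in `ℝ≥0∞`, so that `T f y` plays the role of the modulus of an actual operator. -/
structure IsSubadditiveL1 (μ : Measure X) (T : (X → E) → Y → ℝ≥0∞) : Prop where
  measurable : ∀ f, Integrable f μ → Measurable (T f)
  map_add_le : ∀ f g, Integrable f μ → Integrable g μ → ∀ y, T (f + g) y ≤ T f y + T g y
  exists_le : ∃ M : ℝ≥0, ∀ f, Integrable f μ → ∀ y, T f y ≤ M * ∫⁻ x, ‖f x‖ₑ ∂μ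

namespace IsSubadditiveL1

variable {T : (X → E) → Y → ℝ≥0∞}

lemma map_sum_le (hT : IsSubadditiveL1 μ T) {ι : Type*} {g : ι → X → E}
    (hg : ∀ k, Integrable (g k) μ) (s : Finset ι) (y : Y) :
    T (∑ k ∈ s, g k) y ≤ ∑ k ∈ s, T (g k) y := by
  classical
  induction s using Finset.induction_on with
  | empty =>
    obtain ⟨M, hM⟩ := hT.exists_le
    simpa using hM 0 (integrable_zero X E μ) y
  | insert k s hk ih =>
    rw [Finset.sum_insert hk, Finset.sum_insert hk]
    exact (hT.map_add_le _ _ (hg k) (integrable_finsetSum' _ fun i _ => hg i) y).trans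
      (add_le_add_right ih _)

lemma le_tsum (hT : IsSubadditiveL1 μ T) {ι : Type*} [Countable ι] {f : X → E}
    {g : ι → X → E} (hf : Integrable f μ) (hg : ∀ k, Integrable (g k) μ)
    (hsum : ∀ x, HasSum (g · x) (f x)) (hfin : ∑' k, ∫⁻ x, ‖g k x‖ₑ ∂μ ≠ ∞) (y : Y) :
    T f y ≤ ∑' k, T (g k) y := by
  obtain ⟨M, hM⟩ := hT.exists_le
  have hrest (s : Finset ι) : ∫⁻ x, ‖(f - ∑ k ∈ s, g k) x‖ₑ ∂μ ≤
      ∑' k : {k // k ∉ s}, ∫⁻ x, ‖g k x‖ₑ ∂μ := by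
    rw [← lintegral_tsum fun k : {k // k ∉ s} => (hg k).aestronglyMeasurable.enorm]
    refine lintegral_mono fun x => ?_
    have hcompl : HasSum (fun k : {k // k ∉ s} => g k x) ((f - ∑ k ∈ s, g k) x) := by
      refine (Finset.hasSum_compl_iff (f := (g · x)) s).2 ?_
      rw [Pi.sub_apply, Finset.sum_apply, sub_add_cancel]
      exact hsum x
    rw [← hcompl.tsum_eq]
    exact enorm_tsum_le_tsum_enorm (f := fun k : {k // k ∉ s} => g k x)
  have hlim : Filter.Tendsto (fun s : Finset ι => ∑' k, T (g k) y +
      M * ∑' k : {k // k ∉ s}, ∫⁻ x, ‖g k x‖ₑ ∂μ) Filter.atTop (nhds (∑' k, T (g k) y)) := by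
    have h := ENNReal.Tendsto.const_mul (a := (M : ℝ≥0∞))
      (ENNReal.tendsto_tsum_compl_atTop_zero hfin) (Or.inr ENNReal.coe_ne_top)
    simpa only [mul_zero, add_zero] using h.const_add (∑' k, T (g k) y)
  refine ge_of_tendsto' hlim fun s => ?_
  have hint : Integrable (∑ k ∈ s, g k) μ := integrable_finsetSum' _ fun k _ => hg k
  calc T f y = T (∑ k ∈ s, g k + (f - ∑ k ∈ s, g k)) y := by rw [add_sub_cancel]
    _ ≤ T (∑ k ∈ s, g k) y + T (f - ∑ k ∈ s, g k) y :=
        hT.map_add_le _ _ hint (hf.sub hint) y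
    _ ≤ ∑' k, T (g k) y + M * ∑' k : {k // k ∉ s}, ∫⁻ x, ‖g k x‖ₑ ∂μ :=
        add_le_add ((hT.map_sum_le hg s y).trans (ENNReal.sum_le_tsum s))
          ((hM _ (hf.sub hint) y).trans (mul_le_mul_right (hrest s) _))

lemma le_tsum_dyadicPiece (hT : IsSubadditiveL1 μ T) {f : X → E} (hf : Integrable f μ) (y : Y) :
    T f y ≤ ∑' k, T (dyadicPiece f k) y := by
  refine hT.le_tsum hf (integrable_dyadicPiece hf) (hasSum_dyadicPiece f) ?_ y
  have h := tsum_two_rpow_mul_lintegral_enorm_dyadicPiece_rpow_le hf one_pos 1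
  simp only [sub_self, mul_zero, ENNReal.rpow_zero, one_mul, ENNReal.rpow_one, abs_zero] at h
  exact (h.trans_lt hf.hasFiniteIntegral).ne

end IsSubadditiveL1

end Interpolation

lemma lintegral_sum_rpow_rpow_le {α ι : Type*} [MeasurableSpace α] {μ : Measure α} {m : ℝ}
    (hm : 1 ≤ m) {h : ι → α → ℝ≥0∞} (hh : ∀ k, AEMeasurable (h k) μ) (s : Finset ι) :
    (∫⁻ x, (∑ k ∈ s, h k x) ^ m ∂μ) ^ (1 / m) ≤ ∑ k ∈ s, (∫⁻ x, h k x ^ m ∂μ) ^ (1 / m) := by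
  classical
  have hm₀ : 0 < m := one_pos.trans_le hm
  induction s using Finset.induction_on with
  | empty => simp [hm₀]
  | insert k s hk ih =>
    simp only [Finset.sum_insert hk]
    exact (ENNReal.lintegral_Lp_add_le (hh k) (Finset.aemeasurable_fun_sum s fun i _ => hh i)
      hm).trans (add_le_add_right ih _)

lemma lintegral_tsum_rpow_rpow_le {α ι : Type*} [Countable ι] [MeasurableSpace α] {μ : Measure α}
    {m : ℝ} (hm : 1 ≤ m) {h : ι → α → ℝ≥0∞} (hh : ∀ k, AEMeasurable (h k) μ) :
    (∫⁻ x, (∑' k, h k x) ^ m ∂μ) ^ (1 / m) ≤ ∑' k, (∫⁻ x, h k x ^ m ∂μ) ^ (1 / m) := by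
  have hm₀ : 0 < m := one_pos.trans_le hm
  have hsup (x : α) : (∑' k, h k x) ^ m = ⨆ s : Finset ι, (∑ k ∈ s, h k x) ^ m := by
    rw [ENNReal.tsum_eq_iSup_sum]
    exact (ENNReal.orderIsoRpow m hm₀).map_iSup _
  have hdir : Directed (· ≤ ·) fun (s : Finset ι) x => (∑ k ∈ s, h k x) ^ m :=
    Monotone.directed_le fun s t hst x =>
      ENNReal.rpow_le_rpow (Finset.sum_le_sum_of_subset hst) hm₀.le
  simp only [hsup]
  rw [lintegral_iSup_directed
      (fun s => (Finset.aemeasurable_fun_sum s fun i _ => hh i).pow_const m) hdir,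
    one_div, ENNReal.rpow_inv_le_iff hm₀]
  refine iSup_le fun s => ?_
  rw [← ENNReal.rpow_inv_le_iff hm₀, ← one_div]
  exact (lintegral_sum_rpow_rpow_le hm hh s).trans (ENNReal.sum_le_tsum s)

lemma exists_tsum_rpow_le_mul {p p₀ p₁ β : ℝ} (hp₀ : 0 < p₀) (hp₁ : 0 < p₁) (hne : p₁ ≠ p₀)
    (hβ₀ : 0 < β) (hβ₁ : β < 1) (hp : p = (1 - β) * p₁ + β * p₀) :
    ∃ K : ℝ≥0, ∀ b : ℤ → ℝ≥0∞, (∑' k, b k) ^ p ≤ K *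
      ((∑' k : ℤ, 2 ^ (k * (p - p₁)) * b k ^ p₁) ^ (1 - β) *
        (∑' k : ℤ, 2 ^ (k * (p - p₀)) * b k ^ p₀) ^ β) := by
  have hβ' : 0 < 1 - β := sub_pos.2 hβ₁
  have hp_pos : 0 < p := by rw [hp]; positivity
  have hθ : 1 - β * p₀ / p = (1 - β) * p₁ / p := by
    field_simp
    linarith
  obtain ⟨K, hK⟩ := exists_tsum_le_rpow_mul_rpow (θ := β * p₀ / p) (e₀ := p / p₀ - 1)
    (e₁ := p / p₁ - 1) (by positivity) (sub_pos.1 (hθ ▸ by positivity))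
    (by
      rw [sub_ne_zero, Ne, div_eq_one_iff_eq hp₁.ne', hp]
      contrapose! hne
      exact mul_left_cancel₀ hβ₀.ne' (by linarith))
    (by
      rw [hθ]
      field_simp
      linarith)
  have hterm {s : ℝ} (hs : 0 < s) (b : ℤ → ℝ≥0∞) (k : ℤ) : 2 ^ (k * (p / s - 1)) * b k ≤
      (∑' k : ℤ, 2 ^ (k * (p - s)) * b k ^ s) ^ (1 / s) := by
    rw [one_div, ENNReal.le_rpow_inv_iff hs, ENNReal.mul_rpow_of_nonneg _ _ hs.le,
      ← ENNReal.rpow_mul, mul_assoc, sub_mul, div_mul_cancel₀ _ hs.ne', one_mul]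
    exact ENNReal.le_tsum (f := fun k : ℤ => 2 ^ (k * (p - s)) * b k ^ s) k
  refine ⟨K ^ p, fun b => ?_⟩
  calc (∑' k, b k) ^ p
      ≤ (K * (((∑' k : ℤ, 2 ^ (k * (p - p₁)) * b k ^ p₁) ^ (1 / p₁)) ^ (1 - β * p₀ / p) *
          ((∑' k : ℤ, 2 ^ (k * (p - p₀)) * b k ^ p₀) ^ (1 / p₀)) ^ (β * p₀ / p))) ^ p :=
        ENNReal.rpow_le_rpow (hK b _ _ (hterm hp₁ b) (hterm hp₀ b)) hp_pos.le
    _ = _ := by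
        rw [ENNReal.mul_rpow_of_nonneg _ _ hp_pos.le, ENNReal.mul_rpow_of_nonneg _ _ hp_pos.le,
          ENNReal.coe_rpow_of_nonneg _ hp_pos.le, hθ]
        simp only [← ENNReal.rpow_mul]
        congr 4 <;> field_simp

lemma exists_lintegral_rpow_div_le {W : Type*} [MeasurableSpace W] {β m : ℝ} (hβ₀ : 0 < β)
    (hβ₁ : β < 1) (hm : 0 < m) {K a₁ a₀ : ℝ≥0∞} (hK : K ≠ ∞) (ha₁ : a₁ ≠ ∞) (ha₀ : a₀ ≠ ∞) :
    ∃ C : ℝ≥0, ∀ {ω : Measure W} {U V₁ V₀ : W → ℝ≥0∞} {B₁ B₀ N : ℝ≥0∞}, Measurable V₀ →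
      (∀ w, U w ≤ K * (V₁ w ^ (1 - β) * V₀ w ^ β)) → (∀ w, V₁ w ≤ B₁ * (a₁ * N)) →
      ∫⁻ w, V₀ w ^ m ∂ω ≤ B₀ * (a₀ * N) ^ m →
      ∫⁻ w, U w ^ (m / β) ∂ω ≤ C * (B₁ ^ ((1 - β) * (m / β)) * B₀ * N ^ (m / β)) := by
  have hβ' : 0 < 1 - β := sub_pos.2 hβ₁
  have hmβ : 0 < m / β := by positivity
  obtain ⟨C, hC⟩ : ∃ C : ℝ≥0, C = K ^ (m / β) * a₁ ^ ((1 - β) * (m / β)) * a₀ ^ m :=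
    ⟨_, ENNReal.coe_toNNReal (by finiteness)⟩
  refine ⟨C, fun {ω U V₁ V₀ B₁ B₀ N} hV₀ hU h₁ h₀ => ?_⟩
  have hpow (w : W) : U w ^ (m / β) ≤ (K * (B₁ * (a₁ * N)) ^ (1 - β)) ^ (m / β) * V₀ w ^ m := by
    calc U w ^ (m / β) ≤ (K * ((B₁ * (a₁ * N)) ^ (1 - β) * V₀ w ^ β)) ^ (m / β) :=
          ENNReal.rpow_le_rpow ((hU w).trans (mul_le_mul_right
            (mul_le_mul_left (ENNReal.rpow_le_rpow (h₁ w) hβ'.le) _) _)) hmβ.le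
      _ = (K * (B₁ * (a₁ * N)) ^ (1 - β)) ^ (m / β) * V₀ w ^ m := by
          rw [← mul_assoc, ENNReal.mul_rpow_of_nonneg _ _ hmβ.le, ← ENNReal.rpow_mul,
            mul_div_cancel₀ _ hβ₀.ne']
  have hN : N ^ (m / β) = N ^ ((1 - β) * (m / β)) * N ^ m := by
    rw [← ENNReal.rpow_add_of_nonneg _ _ (by positivity) hm.le]
    congr 1
    field_simp
    ring
  calc ∫⁻ w, U w ^ (m / β) ∂ω
      ≤ (K * (B₁ * (a₁ * N)) ^ (1 - β)) ^ (m / β) * ∫⁻ w, V₀ w ^ m ∂ω :=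
        (lintegral_mono hpow).trans (lintegral_const_mul _ (hV₀.pow_const m)).le
    _ ≤ (K * (B₁ * (a₁ * N)) ^ (1 - β)) ^ (m / β) * (B₀ * (a₀ * N) ^ m) := mul_le_mul_right h₀ _
    _ = C * (B₁ ^ ((1 - β) * (m / β)) * B₀ * N ^ (m / β)) := by
        simp only [ENNReal.mul_rpow_of_nonneg _ _ hmβ.le, ENNReal.mul_rpow_of_nonneg _ _ hβ'.le,
          ENNReal.mul_rpow_of_nonneg _ _ hm.le, ← ENNReal.rpow_mul, hN, hC]
        ring

namespace IsSubadditiveL1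

variable {X Y E W : Type*} [MeasurableSpace X] [MeasurableSpace Y] [NormedAddCommGroup E]
  [MeasurableSpace W] {μ : Measure X} {T : (X → E) → Y → ℝ≥0∞}

lemma measurable_tsum (hT : IsSubadditiveL1 μ T) {f : X → E} (hf : Integrable f μ) (p s : ℝ) :
    Measurable fun y => ∑' k : ℤ, (2 : ℝ≥0∞) ^ (k * (p - s)) * T (dyadicPiece f k) y ^ s :=
  Measurable.tsum fun k =>
    ((hT.measurable _ (integrable_dyadicPiece hf k)).pow_const s).const_mul _

lemma lintegral_tsum_eq (hT : IsSubadditiveL1 μ T) {f : X → E} (hf : Integrable f μ) (p s : ℝ)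
    (ν : Measure Y) :
    ∫⁻ y, ∑' k : ℤ, (2 : ℝ≥0∞) ^ (k * (p - s)) * T (dyadicPiece f k) y ^ s ∂ν =
      ∑' k : ℤ, (2 : ℝ≥0∞) ^ (k * (p - s)) * ∫⁻ y, T (dyadicPiece f k) y ^ s ∂ν := by
  have hmeas (k : ℤ) : Measurable fun y => T (dyadicPiece f k) y ^ s :=
    (hT.measurable _ (integrable_dyadicPiece hf k)).pow_const s
  rw [lintegral_tsum fun k => ((hmeas k).const_mul _).aemeasurable]
  simp only [lintegral_const_mul _ (hmeas _)]

lemma lintegral_tsum_le (hT : IsSubadditiveL1 μ T) {f : X → E} (hf : Integrable f μ) (p : ℝ)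
    {s : ℝ} (hs : 0 < s) {ν : Measure Y} {B : ℝ≥0∞}
    (hB : ∀ f, Integrable f μ → ∫⁻ y, T f y ^ s ∂ν ≤ B * ∫⁻ x, ‖f x‖ₑ ^ s ∂μ) :
    ∫⁻ y, ∑' k : ℤ, (2 : ℝ≥0∞) ^ (k * (p - s)) * T (dyadicPiece f k) y ^ s ∂ν ≤
      B * (2 ^ |p - s| * ∫⁻ x, ‖f x‖ₑ ^ p ∂μ) := by
  rw [hT.lintegral_tsum_eq hf]
  calc ∑' k : ℤ, (2 : ℝ≥0∞) ^ (k * (p - s)) * ∫⁻ y, T (dyadicPiece f k) y ^ s ∂ν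
      ≤ ∑' k : ℤ, B * ((2 : ℝ≥0∞) ^ (k * (p - s)) * ∫⁻ x, ‖dyadicPiece f k x‖ₑ ^ s ∂μ) :=
        ENNReal.tsum_le_tsum fun k => by
          rw [mul_left_comm]
          exact mul_le_mul_right (hB _ (integrable_dyadicPiece hf k)) _
    _ ≤ B * (2 ^ |p - s| * ∫⁻ x, ‖f x‖ₑ ^ p ∂μ) := by
        rw [ENNReal.tsum_mul_left]
        exact mul_le_mul_right
          (tsum_two_rpow_mul_lintegral_enorm_dyadicPiece_rpow_le hf hs p) _

lemma lintegral_lintegral_tsum_rpow_le (hT : IsSubadditiveL1 μ T) {f : X → E}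
    (hf : Integrable f μ) (p : ℝ) {s m : ℝ} (hs : 0 < s) (hm : 1 ≤ m) {ν : W → Measure Y}
    (hν : Measurable ν) {ω : Measure W} {B : ℝ≥0∞}
    (hB : ∀ f, Integrable f μ →
      ∫⁻ w, (∫⁻ y, T f y ^ s ∂ν w) ^ m ∂ω ≤ B * (∫⁻ x, ‖f x‖ₑ ^ s ∂μ) ^ m) :
    ∫⁻ w, (∫⁻ y, ∑' k : ℤ, (2 : ℝ≥0∞) ^ (k * (p - s)) * T (dyadicPiece f k) y ^ s ∂ν w) ^ m ∂ω ≤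
      B * (2 ^ |p - s| * ∫⁻ x, ‖f x‖ₑ ^ p ∂μ) ^ m := by
  have hm₀ : 0 < m := one_pos.trans_le hm
  have hmeas (k : ℤ) : Measurable fun w => ∫⁻ y, T (dyadicPiece f k) y ^ s ∂ν w :=
    (Measure.measurable_lintegral
      ((hT.measurable _ (integrable_dyadicPiece hf k)).pow_const s)).comp hν
  simp only [hT.lintegral_tsum_eq hf]
  rw [← ENNReal.rpow_le_rpow_iff (one_div_pos.2 hm₀),
    ENNReal.mul_rpow_of_nonneg _ _ (by positivity), ← ENNReal.rpow_mul,
    mul_one_div_cancel hm₀.ne', ENNReal.rpow_one]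
  refine (lintegral_tsum_rpow_rpow_le hm fun k => ((hmeas k).const_mul _).aemeasurable).trans ?_
  calc ∑' k : ℤ, (∫⁻ w, ((2 : ℝ≥0∞) ^ (k * (p - s)) *
        ∫⁻ y, T (dyadicPiece f k) y ^ s ∂ν w) ^ m ∂ω) ^ (1 / m)
      ≤ ∑' k : ℤ, B ^ (1 / m) * ((2 : ℝ≥0∞) ^ (k * (p - s)) *
          ∫⁻ x, ‖dyadicPiece f k x‖ₑ ^ s ∂μ) := by
        refine ENNReal.tsum_le_tsum fun k => ?_
        simp only [ENNReal.mul_rpow_of_nonneg _ _ hm₀.le]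
        rw [lintegral_const_mul _ ((hmeas k).pow_const m), one_div, ENNReal.rpow_inv_le_iff hm₀,
          ENNReal.mul_rpow_of_nonneg _ _ hm₀.le, ENNReal.mul_rpow_of_nonneg _ _ hm₀.le,
          ENNReal.rpow_inv_rpow hm₀.ne', mul_left_comm]
        exact mul_le_mul_right (hB _ (integrable_dyadicPiece hf k)) _
    _ ≤ B ^ (1 / m) * (2 ^ |p - s| * ∫⁻ x, ‖f x‖ₑ ^ p ∂μ) := by
        rw [ENNReal.tsum_mul_left]
        exact mul_le_mul_right
          (tsum_two_rpow_mul_lintegral_enorm_dyadicPiece_rpow_le hf hs p) _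

lemma exists_lintegral_rpow_le_mul {p p₀ p₁ β : ℝ} (hp₀ : 0 < p₀) (hp₁ : 0 < p₁) (hne : p₁ ≠ p₀)
    (hβ₀ : 0 < β) (hβ₁ : β < 1) (hp : p = (1 - β) * p₁ + β * p₀) :
    ∃ K : ℝ≥0, ∀ {T : (X → E) → Y → ℝ≥0∞}, IsSubadditiveL1 μ T → ∀ {f}, Integrable f μ →
      ∀ ν : Measure Y, ∫⁻ y, T f y ^ p ∂ν ≤ K *
        ((∫⁻ y, ∑' k : ℤ, 2 ^ (k * (p - p₁)) * T (dyadicPiece f k) y ^ p₁ ∂ν) ^ (1 - β) *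
          (∫⁻ y, ∑' k : ℤ, 2 ^ (k * (p - p₀)) * T (dyadicPiece f k) y ^ p₀ ∂ν) ^ β) := by
  have hp_pos : 0 ≤ p := by
    have := sub_pos.2 hβ₁
    rw [hp]
    positivity
  obtain ⟨K, hK⟩ := exists_tsum_rpow_le_mul hp₀ hp₁ hne hβ₀ hβ₁ hp
  refine ⟨K, fun {T} hT {f} hf ν => ?_⟩
  have h₁ := hT.measurable_tsum hf p p₁
  have h₀ := hT.measurable_tsum hf p p₀
  calc ∫⁻ y, T f y ^ p ∂ν
      ≤ ∫⁻ y, K * ((∑' k : ℤ, 2 ^ (k * (p - p₁)) * T (dyadicPiece f k) y ^ p₁) ^ (1 - β) *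
          (∑' k : ℤ, 2 ^ (k * (p - p₀)) * T (dyadicPiece f k) y ^ p₀) ^ β) ∂ν :=
        lintegral_mono fun y =>
          (ENNReal.rpow_le_rpow (hT.le_tsum_dyadicPiece hf y) hp_pos).trans (hK _)
    _ ≤ _ := by
        rw [lintegral_const_mul' _ _ ENNReal.coe_ne_top]
        exact mul_le_mul_right (ENNReal.lintegral_mul_norm_pow_le h₁.aemeasurable
          h₀.aemeasurable (sub_pos.2 hβ₁).le hβ₀.le (sub_add_cancel 1 β)) _

theorem exists_lintegral_lintegral_rpow_le {p p₀ p₁ β m : ℝ} (hp₀ : 0 < p₀) (hp₁ : 0 < p₁)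
    (hβ₀ : 0 < β) (hβ₁ : β < 1) (hp : p = (1 - β) * p₁ + β * p₀) (hm : 1 ≤ m) :
    ∃ C : ℝ≥0, ∀ {T : (X → E) → Y → ℝ≥0∞}, IsSubadditiveL1 μ T → ∀ {ν : W → Measure Y},
      Measurable ν → ∀ {ω : Measure W} {B₁ B₀ : ℝ≥0∞},
      (∀ f, Integrable f μ → ∀ w, ∫⁻ y, T f y ^ p₁ ∂ν w ≤ B₁ * ∫⁻ x, ‖f x‖ₑ ^ p₁ ∂μ) →
      (∀ f, Integrable f μ →
        ∫⁻ w, (∫⁻ y, T f y ^ p₀ ∂ν w) ^ m ∂ω ≤ B₀ * (∫⁻ x, ‖f x‖ₑ ^ p₀ ∂μ) ^ m) →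
      ∀ f, Integrable f μ → ∫⁻ w, (∫⁻ y, T f y ^ p ∂ν w) ^ (m / β) ∂ω ≤
        C * (B₁ ^ ((1 - β) * (m / β)) * B₀ * (∫⁻ x, ‖f x‖ₑ ^ p ∂μ) ^ (m / β)) := by
  have hm₀ : 0 < m := one_pos.trans_le hm
  rcases eq_or_ne p₁ p₀ with rfl | hne
  · obtain rfl : p = p₁ := by linarith
    obtain ⟨C, hC⟩ := exists_lintegral_rpow_div_le (W := W) hβ₀ hβ₁ hm₀ ENNReal.one_ne_top
      ENNReal.one_ne_top ENNReal.one_ne_top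
    refine ⟨C, fun {T} hT {ν} hν {ω B₁ B₀} h₁ h₀ f hf =>
      hC ((Measure.measurable_lintegral ((hT.measurable f hf).pow_const p)).comp hν)
        (fun w => ?_) (fun w => (h₁ f hf w).trans_eq (by rw [one_mul]))
        ((h₀ f hf).trans_eq (by rw [one_mul]))⟩
    rw [Function.comp_apply, ← ENNReal.rpow_add_of_nonneg _ _ (sub_pos.2 hβ₁).le hβ₀.le,
      sub_add_cancel, ENNReal.rpow_one, one_mul]
  have htop (s : ℝ) : (2 : ℝ≥0∞) ^ |p - s| ≠ ∞ := by simp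
  obtain ⟨K, hK⟩ := exists_lintegral_rpow_le_mul (X := X) (Y := Y) (E := E) (μ := μ)
    hp₀ hp₁ hne hβ₀ hβ₁ hp
  obtain ⟨C, hC⟩ := exists_lintegral_rpow_div_le (W := W) hβ₀ hβ₁ hm₀ ENNReal.coe_ne_top
    (htop p₁) (htop p₀)
  exact ⟨C, fun {T} hT {ν} hν {ω B₁ B₀} h₁ h₀ f hf =>
    hC ((Measure.measurable_lintegral (hT.measurable_tsum hf p p₀)).comp hν)
      (fun w => hK hT hf (ν w)) (fun w => hT.lintegral_tsum_le hf p hp₁ (h₁ · · w))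
      (hT.lintegral_lintegral_tsum_rpow_le hf p hp₀ hm hν h₀)⟩

end IsSubadditiveL1

/-! ### Interpolated bounds for the local averages -/

section ClosedBall

variable {X : Type*} [PseudoMetricSpace X] [MeasurableSpace X] [BorelSpace X] {μ : Measure X}
  {H : X → ℝ≥0∞}

lemma setLIntegral_closedBall_eq_lintegral_indicator (x : X) (R : ℝ) :
    ∫⁻ y in closedBall x R, H y ∂μ =
      ∫⁻ y, {z : X × X | dist z.2 z.1 ≤ R}.indicator (fun z => H z.2) (x, y) ∂μ :=
  (lintegral_indicator measurableSet_closedBall _).symm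

variable [SecondCountableTopology X]

lemma measurable_indicator_dist_le (hH : Measurable H) (R : ℝ) :
    Measurable ({z : X × X | dist z.2 z.1 ≤ R}.indicator fun z => H z.2) :=
  (hH.comp measurable_snd).indicator
    (measurableSet_le (measurable_snd.dist measurable_fst) measurable_const)

variable [SFinite μ]

lemma measurable_setLIntegral_closedBall (hH : Measurable H) (R : ℝ) :
    Measurable fun x => ∫⁻ y in closedBall x R, H y ∂μ := by
  simp_rw [setLIntegral_closedBall_eq_lintegral_indicator]
  exact (measurable_indicator_dist_le hH R).lintegral_prod_right'

lemma lintegral_setLIntegral_closedBall (hH : Measurable H) (R : ℝ) :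
    ∫⁻ x, ∫⁻ y in closedBall x R, H y ∂μ ∂μ = ∫⁻ y, μ (closedBall y R) * H y ∂μ := by
  simp_rw [setLIntegral_closedBall_eq_lintegral_indicator]
  rw [lintegral_lintegral_swap
    (f := fun x y => {z : X × X | dist z.2 z.1 ≤ R}.indicator (fun z => H z.2) (x, y))
    (measurable_indicator_dist_le hH R).aemeasurable]
  refine lintegral_congr fun y => ?_
  calc _ = ∫⁻ x, (closedBall y R).indicator (fun _ => H y) x ∂μ := by
        simp only [indicator, mem_closedBall, mem_ofPred_eq, dist_comm y]
    _ = _ := by rw [lintegral_indicator_const measurableSet_closedBall, mul_comm]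

end ClosedBall

/-- The measure on space-time for which `localAvg d χ β₀ n j s f x` is the integral of
`|𝒜_j f|^s`; it lets the interpolation theorem be applied to `𝒜_j`. -/
def avgMeasure (d n j : ℕ) (x : Euc d) : Measure (Euc d × ℝ) :=
  (ENNReal.ofReal (avgRadius d n j ^ d))⁻¹ •
    (volume.restrict (closedBall x (avgRadius d n j))).prod volume

lemma measurable_avgMeasure (d n j : ℕ) : Measurable (avgMeasure d n j) := by
  refine Measure.measurable_of_measurable_coe _ fun s hs => ?_
  simp only [avgMeasure, Measure.smul_apply, smul_eq_mul, Measure.prod_apply hs]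
  exact (measurable_setLIntegral_closedBall (measurable_measure_prodMk_left hs) _).const_mul _

section Interpolation

variable {d : ℕ} {χ β₀ : ℝ → ℝ} [NeZero d]

lemma localAvg_eq_lintegral_avgMeasure (hχ : IsCutoff χ) (hβ : IsBump β₀) (n j : ℕ) (s : ℝ)
    (f : Euc d → ℂ) (x : Euc d) :
    localAvg d χ β₀ n j s f x = ∫⁻ z, ‖Aj d χ β₀ j f z.1 z.2‖ₑ ^ s ∂avgMeasure d n j x := by
  rw [avgMeasure, lintegral_smul_measure, smul_eq_mul, localAvg,
    lintegral_prod _ ((measurable_Aj hχ hβ j f).enorm.pow_const s).aemeasurable]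

lemma isSubadditiveL1_enorm_Aj (hχ : IsCutoff χ) (hβ : IsBump β₀) (j : ℕ) :
    IsSubadditiveL1 volume fun (f : Euc d → ℂ) (z : Euc d × ℝ) => ‖Aj d χ β₀ j f z.1 z.2‖ₑ where
  measurable f _ := (measurable_Aj hχ hβ j f).enorm
  map_add_le f g hf hg z := by
    rw [Aj_add hβ j hf hg]
    exact enorm_add_le _ _
  exists_le := by
    obtain ⟨M, hM⟩ := exists_norm_Aj_le d hχ hβ j
    refine ⟨M, fun f hf z => ?_⟩
    rw [← ofReal_integral_norm_eq_lintegral_enorm hf, ← ENNReal.ofReal_coe_nnreal,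
      ← ENNReal.ofReal_mul M.coe_nonneg, ← ofReal_norm]
    exact ENNReal.ofReal_le_ofReal (hM f hf z.1 z.2)

lemma measurable_lintegral_enorm_Aj_rpow (hχ : IsCutoff χ) (hβ : IsBump β₀) (j : ℕ) (s : ℝ)
    (f : Euc d → ℂ) : Measurable fun y => ∫⁻ t, ‖Aj d χ β₀ j f y t‖ₑ ^ s :=
  ((measurable_Aj hχ hβ j f).enorm.pow_const s).lintegral_prod_right'

lemma measurable_localAvg (hχ : IsCutoff χ) (hβ : IsBump β₀) (n j : ℕ) (s : ℝ) (f : Euc d → ℂ) :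
    Measurable (localAvg d χ β₀ n j s f) :=
  (measurable_setLIntegral_closedBall (measurable_lintegral_enorm_Aj_rpow hχ hβ j s f) _).const_mul
    _

lemma lintegral_localAvg_rpow_le (hχ : IsCutoff χ) (hβ : IsBump β₀) (n j : ℕ) (s : ℝ)
    (f : Euc d → ℂ) {m : ℝ} (hm : 1 ≤ m) :
    ∫⁻ x, localAvg d χ β₀ n j s f x ^ m ≤
      volume (ball (0 : Euc d) 1) ^ m * ∫⁻ y, (∫⁻ t, ‖Aj d χ β₀ j f y t‖ₑ ^ s) ^ m := by
  have hGm := measurable_lintegral_enorm_Aj_rpow hχ hβ j s f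
  set G : Euc d → ℝ≥0∞ := fun y => ∫⁻ t, ‖Aj d χ β₀ j f y t‖ₑ ^ s
  set V := volume (ball (0 : Euc d) 1)
  set R := avgRadius d n j
  set a := ENNReal.ofReal (R ^ d)
  have ha₀ : a ≠ 0 := ofReal_avgRadius_pow_ne_zero d n j
  have ha' : a ≠ ∞ := ENNReal.ofReal_ne_top
  have hm₀ : 0 ≤ m := by positivity
  have hV₀ : V ≠ 0 := (measure_ball_pos _ _ one_pos).ne'
  have hV' : V ≠ ∞ := measure_ball_lt_top.ne
  have hball (x : Euc d) : volume (closedBall x R) = a * V := volume_closedBall_avgRadius n j x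
  have hjensen (x : Euc d) :
      localAvg d χ β₀ n j s f x ^ m ≤ a⁻¹ ^ m * (a * V) ^ (m - 1) *
        ∫⁻ y in closedBall x R, G y ^ m := by
    rw [localAvg, ENNReal.mul_rpow_of_nonneg _ _ hm₀, mul_assoc]
    gcongr
    simpa [hball] using lintegral_rpow_le_measure_univ_mul
      (μ := volume.restrict (closedBall x R)) hGm.aemeasurable hm
  calc _ ≤ ∫⁻ x, a⁻¹ ^ m * (a * V) ^ (m - 1) * ∫⁻ y in closedBall x R, G y ^ m :=
        lintegral_mono hjensen
    _ = a⁻¹ ^ m * ((a * V) ^ (m - 1) * (a * V)) * ∫⁻ y, G y ^ m := by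
        rw [lintegral_const_mul _ (measurable_setLIntegral_closedBall (hGm.pow_const m) R),
          lintegral_setLIntegral_closedBall (hGm.pow_const m)]
        simp_rw [hball]
        rw [lintegral_const_mul _ (hGm.pow_const m)]
        ring
    _ = _ := by
        have hpow : (a * V) ^ (m - 1) * (a * V) = (a * V) ^ m := by
          simpa using (ENNReal.rpow_add (m - 1) 1 (mul_ne_zero ha₀ hV₀)
            (ENNReal.mul_ne_top ha' hV')).symm
        rw [hpow, ← ENNReal.mul_rpow_of_nonneg _ _ hm₀, ← mul_assoc,
          ENNReal.inv_mul_cancel ha₀ ha', one_mul]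

lemma exists_localAvg_le_two_rpow (hd : 2 ≤ d) (hχ : IsCutoff χ) (hβ : IsBump β₀) {s : ℝ}
    (hs : 1 < s) : ∃ ε : ℝ, 0 < ε ∧ ∃ C : ℝ≥0, ∀ n j, n ≤ j → ∀ f : Euc d → ℂ, Integrable f → ∀ x,
      localAvg d χ β₀ n j s f x ≤ C * 2 ^ (-((n : ℝ) * ε)) * ∫⁻ y, ‖f y‖ₑ ^ s := by
  -- Interpolate between the gain `2^{-n/2}` at exponent `2` and no gain at an exponent `p₁ ≥ 1`.
  obtain ⟨β, hβ₀, hβ₁, hβs⟩ : ∃ β : ℝ, 0 < β ∧ β < 1 ∧ β ≤ s - 1 :=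
    ⟨min (s - 1) (1 / 2), lt_min (by linarith) (by norm_num),
      (min_le_right _ _).trans_lt (by norm_num), min_le_left _ _⟩
  have hβ₁' : 0 < 1 - β := by linarith
  obtain ⟨p₁, hp₁⟩ : ∃ p₁, p₁ = (s - β * 2) / (1 - β) := ⟨_, rfl⟩
  have hp₁₁ : 1 ≤ p₁ := by rw [hp₁, one_le_div hβ₁']; linarith
  have hsplit : s = (1 - β) * p₁ + β * 2 := by rw [hp₁]; field
  obtain ⟨C₁, hC₁⟩ := exists_localAvg_le d hχ hβ hp₁₁
  obtain ⟨C₂, hC₂⟩ := exists_localAvg_two_le hd hχ hβ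
  obtain ⟨C, hC⟩ := IsSubadditiveL1.exists_lintegral_lintegral_rpow_le (W := Unit)
    (Y := Euc d × ℝ) (X := Euc d) (E := ℂ) (μ := volume) two_pos (zero_lt_one.trans_le hp₁₁)
    hβ₀ hβ₁ hsplit le_rfl
  obtain ⟨K, hK⟩ : ∃ K : ℝ≥0, K = ((C : ℝ≥0∞) * (C₁ ^ ((1 - β) * (1 / β)) * C₂)) ^ β :=
    ⟨_, ENNReal.coe_toNNReal (by finiteness)⟩
  refine ⟨β / 2, by positivity, K, fun n j hnj f hf x => ?_⟩
  have hinterp := hC (isSubadditiveL1_enorm_Aj hχ hβ j) (ν := fun _ => avgMeasure d n j x)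
    measurable_const (ω := Measure.dirac ()) (B₁ := C₁) (B₀ := C₂ * 2 ^ (-((n : ℝ) * (1 / 2))))
    (fun g hg _ => by
      rw [← localAvg_eq_lintegral_avgMeasure hχ hβ]
      exact hC₁ n j g hg x)
    (fun g hg => by
      simp only [ENNReal.rpow_one, lintegral_dirac, ← localAvg_eq_lintegral_avgMeasure hχ hβ]
      exact hC₂ n j hnj g hg x) f hf
  rw [lintegral_dirac, ← localAvg_eq_lintegral_avgMeasure hχ hβ, one_div,
    ENNReal.rpow_inv_le_iff hβ₀] at hinterp
  refine hinterp.trans_eq ?_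
  rw [hK, one_div, show -((n : ℝ) * (β / 2)) = -((n : ℝ) * 2⁻¹) * β by ring, ENNReal.rpow_mul 2]
  simp only [ENNReal.mul_rpow_of_nonneg _ _ hβ₀.le, ENNReal.rpow_inv_rpow hβ₀.ne', one_div]
  ring

/-- The endpoint hypothesis `sup_j 2^{jd/q₀} ‖𝒜_j‖_{L^{p₀} → L^{q₀}(L^{p₀})} < ∞`, tested on
integrable functions and raised to the power `q₀`. -/
def HasEndpointBound (d : ℕ) (χ β₀ : ℝ → ℝ) (p₀ q₀ : ℝ) : Prop :=
  ∃ K : ℝ≥0, ∀ (j : ℕ) (f : Euc d → ℂ), Integrable f →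
    ∫⁻ y, (∫⁻ t, ‖Aj d χ β₀ j f y t‖ₑ ^ p₀) ^ (q₀ / p₀) ≤
      K * 2 ^ (-((j : ℝ) * d)) * (∫⁻ x, ‖f x‖ₑ ^ p₀) ^ (q₀ / p₀)

lemma HasEndpointBound.exists_lintegral_localAvg_rpow_le {p₀ q₀ : ℝ}
    (hend : HasEndpointBound d χ β₀ p₀ q₀) (hχ : IsCutoff χ) (hβ : IsBump β₀) (hp₀ : 0 < p₀)
    (hpq₀ : p₀ ≤ q₀) : ∃ C : ℝ≥0, ∀ n j (f : Euc d → ℂ), Integrable f →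
      ∫⁻ x, localAvg d χ β₀ n j p₀ f x ^ (q₀ / p₀) ≤
        C * 2 ^ (-((j : ℝ) * d)) * (∫⁻ x, ‖f x‖ₑ ^ p₀) ^ (q₀ / p₀) := by
  obtain ⟨K, hK⟩ := hend
  have hV' : volume (ball (0 : Euc d) 1) ≠ ∞ := measure_ball_lt_top.ne
  have hm : 1 ≤ q₀ / p₀ := (one_le_div hp₀).2 hpq₀
  obtain ⟨C, hC⟩ : ∃ C : ℝ≥0, C = volume (ball (0 : Euc d) 1) ^ (q₀ / p₀) * K :=
    ⟨_, ENNReal.coe_toNNReal (by finiteness)⟩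
  refine ⟨C, fun n j f hf => (lintegral_localAvg_rpow_le hχ hβ n j p₀ f hm).trans ?_⟩
  rw [hC, mul_assoc, mul_assoc, ← mul_assoc (K : ℝ≥0∞)]
  gcongr
  exact hK j f hf

lemma exists_interpolation_exponent {p₀ p θ : ℝ} (hp₀ : 0 < p₀) (hp : 0 < p)
    (hp₁ : θ / p₀ < 1 / p) (hp₂ : 1 / p < 1 - θ + θ / p₀) :
    θ * (p / p₀) < 1 ∧ ∃ s, 1 < s ∧ p = (1 - θ * (p / p₀)) * s + θ * (p / p₀) * p₀ := by
  have hβ : θ * (p / p₀) < 1 := by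
    have := mul_lt_mul_of_pos_right hp₁ hp
    rwa [one_div_mul_cancel hp.ne', div_mul_eq_mul_div, mul_div_assoc] at this
  have hβ' : 0 < 1 - θ * (p / p₀) := by linarith
  refine ⟨hβ, (p - θ * (p / p₀) * p₀) / (1 - θ * (p / p₀)), ?_,
    by rw [mul_div_cancel₀ _ hβ'.ne']; ring⟩
  have := mul_lt_mul_of_pos_right hp₂ hp
  rw [one_lt_div hβ']
  field_simp at this ⊢
  linarith

/-- The bound for the `L^s` local averages at finite exponents that has to be summed over `j`: the
factor `2^{-jd}` of the endpoint bound, and a gain `2^{-nε}`. -/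
def HasIntegralGain (d : ℕ) (χ β₀ : ℝ → ℝ) (s p q : ℝ) : Prop :=
  ∃ ε : ℝ, 0 < ε ∧ ∃ C : ℝ≥0, ∀ n j, n ≤ j → ∀ f : Euc d → ℂ, Integrable f →
    ∫⁻ x, localAvg d χ β₀ n j s f x ^ (q / s) ≤
      C * 2 ^ (-((n : ℝ) * ε)) * 2 ^ (-((j : ℝ) * d)) * (∫⁻ x, ‖f x‖ₑ ^ p) ^ (q / p)

lemma HasEndpointBound.hasIntegralGain (hd : 2 ≤ d) {p₀ q₀ p q : ℝ}
    (hend : HasEndpointBound d χ β₀ p₀ q₀) (hχ : IsCutoff χ) (hβ : IsBump β₀) (hp₀ : 0 < p₀)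
    (hpq₀ : p₀ ≤ q₀) (hq : q₀ < q) (hp : 0 < p) (hp₁ : q₀ / q / p₀ < 1 / p)
    (hp₂ : 1 / p < 1 - q₀ / q + q₀ / q / p₀) : HasIntegralGain d χ β₀ p p q := by
  -- Interpolate with weight `θ = q₀ / q` between the endpoint bound and the gain at `q = ∞` and
  -- the exponent `s` determined by `1 / p = (1 - θ) / s + θ / p₀`.
  have hq₀ : 0 < q₀ := hp₀.trans_le hpq₀
  obtain ⟨θ, hθ⟩ : ∃ θ, θ = q₀ / q := ⟨_, rfl⟩
  obtain ⟨β, hβd⟩ : ∃ β, β = θ * (p / p₀) := ⟨_, rfl⟩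
  have hqpos : 0 < q := hq₀.trans hq
  have hθ₀ : 0 < θ := by rw [hθ]; positivity
  rw [← hθ] at hp₁ hp₂
  have hβ₀ : 0 < β := by rw [hβd]; positivity
  obtain ⟨hβ₁, s, hs, hsplit⟩ := exists_interpolation_exponent hp₀ hp hp₁ hp₂
  rw [← hβd] at hβ₁ hsplit
  have hm : q₀ / p₀ / β = q / p := by rw [hβd, hθ]; field
  obtain ⟨ε, hε, C₁, hC₁⟩ := exists_localAvg_le_two_rpow hd hχ hβ hs
  obtain ⟨C₀, hC₀⟩ := hend.exists_lintegral_localAvg_rpow_le hχ hβ hp₀ hpq₀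
  obtain ⟨C, hC⟩ := IsSubadditiveL1.exists_lintegral_lintegral_rpow_le (W := Euc d)
    (Y := Euc d × ℝ) (X := Euc d) (E := ℂ) (μ := volume) hp₀ (zero_lt_one.trans hs) hβ₀
    hβ₁ hsplit ((one_le_div hp₀).2 hpq₀)
  obtain ⟨γ, hγ⟩ : ∃ γ, γ = (1 - β) * (q / p) := ⟨_, rfl⟩
  have hγ₀ : 0 < γ := by rw [hγ]; exact mul_pos (by linarith) (div_pos hqpos hp)
  obtain ⟨K, hK⟩ : ∃ K : ℝ≥0, K = (C : ℝ≥0∞) * (C₁ ^ γ * C₀) :=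
    ⟨_, ENNReal.coe_toNNReal (by finiteness)⟩
  refine ⟨ε * γ, by positivity, K, fun n j hnj f hf => ?_⟩
  have hinterp := hC (isSubadditiveL1_enorm_Aj hχ hβ j) (measurable_avgMeasure d n j)
    (ω := volume) (B₁ := C₁ * 2 ^ (-((n : ℝ) * ε))) (B₀ := C₀ * 2 ^ (-((j : ℝ) * d)))
    (fun g hg x => by
      rw [← localAvg_eq_lintegral_avgMeasure hχ hβ]
      exact hC₁ n j hnj g hg x)
    (fun g hg => by
      simp only [← localAvg_eq_lintegral_avgMeasure hχ hβ]
      exact hC₀ n j g hg) f hf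
  simp only [← localAvg_eq_lintegral_avgMeasure hχ hβ, hm, ← hγ] at hinterp
  refine hinterp.trans_eq ?_
  rw [hK, show -((n : ℝ) * (ε * γ)) = -((n : ℝ) * ε) * γ by ring, ENNReal.rpow_mul 2,
    ENNReal.mul_rpow_of_nonneg _ _ hγ₀.le]
  ring

end Interpolation

/-! ### From the operator norm to the endpoint bound -/

section OperatorNorm

lemma lqNorm_const_mul {α : Type*} [MeasurableSpace α] {μ : Measure α} {q c : ℝ≥0∞} (hq : q ≠ 0)
    (hc : c ≠ ∞) (g : α → ℝ≥0∞) : lqNorm q (fun x => c * g x) μ = c * lqNorm q g μ := by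
  unfold lqNorm
  split_ifs with hq'
  · exact ENNReal.essSup_const_mul
  · have hq₀ : 0 < q.toReal := ENNReal.toReal_pos hq hq'
    simp_rw [ENNReal.mul_rpow_of_nonneg _ _ hq₀.le]
    rw [lintegral_const_mul' _ _ (ENNReal.rpow_ne_top_of_nonneg hq₀.le hc),
      ENNReal.mul_rpow_of_nonneg _ _ (by positivity), one_div, ENNReal.rpow_rpow_inv hq₀.ne']

lemma mixedNorm_const_mul {d : ℕ} {q r : ℝ≥0∞} (hq : q ≠ 0) (hr : r ≠ 0) (c : ℂ)
    (F : Euc d → ℝ → ℂ) :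
    mixedNorm d q r (fun x t => c * F x t) = ‖c‖ₑ * mixedNorm d q r F := by
  unfold mixedNorm
  simp only [← enorm_eq_nnnorm, enorm_mul]
  simp_rw [lqNorm_const_mul hr enorm_ne_top]
  exact lqNorm_const_mul hq enorm_ne_top _

lemma mixedNorm_rpow_eq_lintegral {d : ℕ} {p q : ℝ≥0∞} (hp : p ≠ ∞) (hq₀ : q ≠ 0) (hq : q ≠ ∞)
    (F : Euc d → ℝ → ℂ) :
    mixedNorm d q p F ^ q.toReal =
      ∫⁻ y, (∫⁻ t, ‖F y t‖ₑ ^ p.toReal) ^ (q.toReal / p.toReal) := by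
  have hq' : 0 < q.toReal := ENNReal.toReal_pos hq₀ hq
  simp only [mixedNorm, lqNorm, hp, hq, if_false, ← enorm_eq_nnnorm]
  rw [one_div q.toReal, ENNReal.rpow_inv_rpow hq'.ne']
  refine lintegral_congr fun y => ?_
  rw [← ENNReal.rpow_mul, one_div_mul_eq_div]

lemma eLpNorm_rpow_eq_lintegral {X E : Type*} [MeasurableSpace X] [NormedAddCommGroup E]
    {μ : Measure X} {p : ℝ≥0∞} (hp₀ : p ≠ 0) (hp : p ≠ ∞) (f : X → E) (b : ℝ) :
    eLpNorm f p μ ^ b = (∫⁻ x, ‖f x‖ₑ ^ p.toReal ∂μ) ^ (b / p.toReal) := by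
  rw [eLpNorm_eq_lintegral_rpow_enorm_toReal hp₀ hp, ← ENNReal.rpow_mul, one_div_mul_eq_div]

lemma Aj_congr_ae {d : ℕ} {χ β₀ : ℝ → ℝ} (j : ℕ) {f g : Euc d → ℂ} (h : f =ᵐ[volume] g) :
    Aj d χ β₀ j f = Aj d χ β₀ j g := by
  have hF : 𝓕 f = 𝓕 g := by
    ext ξ
    simp only [Real.fourier_eq]
    exact integral_congr_ae (h.mono fun x hx => by simp only [hx])
  unfold Aj freqLoc
  rw [hF]

variable {d : ℕ} {χ β₀ : ℝ → ℝ}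

lemma mixedNorm_Aj_le {p q r : ℝ≥0∞} (hβ : IsBump β₀) (hp : p ≠ 0) (hq : q ≠ 0) (hr : r ≠ 0)
    (j : ℕ) {f : Euc d → ℂ} (hf : Integrable f) (hfp : eLpNorm f p volume ≠ ∞) :
    mixedNorm d q r (Aj d χ β₀ j f) ≤ AjOpNorm d χ β₀ j p q r * eLpNorm f p volume := by
  have hscale (c : ℂ) :
      mixedNorm d q r (Aj d χ β₀ j (c • f)) = ‖c‖ₑ * mixedNorm d q r (Aj d χ β₀ j f) := by
    rw [← mixedNorm_const_mul hq hr]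
    congr! 3 with y t
    exact Aj_smul hβ j c hf y t
  obtain hf₀ | hf₀ := eq_or_ne (eLpNorm f p volume) 0
  · have hf' : f =ᵐ[volume] (0 : ℂ) • f := by
      simpa using (eLpNorm_eq_zero_iff hf.1 hp).1 hf₀
    rw [Aj_congr_ae j hf', hscale, enorm_zero, zero_mul]
    exact zero_le
  · set a := eLpNorm f p volume
    let c : ℂ := (a.toReal : ℂ)⁻¹
    have hc : ‖c‖ₑ = a⁻¹ := by
      have ha : (a.toReal : ℂ) ≠ 0 := by exact_mod_cast (ENNReal.toReal_pos hf₀ hfp).ne'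
      rw [enorm_inv ha, ← ofReal_norm, Complex.norm_of_nonneg ENNReal.toReal_nonneg,
        ENNReal.ofReal_toReal hfp]
    have hle : mixedNorm d q r (Aj d χ β₀ j (c • f)) ≤ AjOpNorm d χ β₀ j p q r :=
      le_iSup₂_of_le (c • f)
        (by rw [eLpNorm_const_smul, hc, ENNReal.inv_mul_cancel hf₀ hfp]) le_rfl
    rwa [hscale, hc, mul_comm, ← div_eq_mul_inv, ENNReal.div_le_iff hf₀ hfp] at hle

lemma hasEndpointBound_of_AjOpNorm_le (hβ : IsBump β₀) {p₀ q₀ : ℝ≥0∞} (hp₀ : p₀ ≠ 0)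
    (hp₀' : p₀ ≠ ∞) (hq₀ : q₀ ≠ 0) (hq₀' : q₀ ≠ ∞) {C₀ : ℝ≥0}
    (hC₀ : ∀ j : ℕ, (2 : ℝ≥0∞) ^ (((j : ℝ) * d) / q₀.toReal) *
      AjOpNorm d χ β₀ j p₀ q₀ p₀ ≤ C₀) :
    HasEndpointBound d χ β₀ p₀.toReal q₀.toReal := by
  have hq : 0 < q₀.toReal := ENNReal.toReal_pos hq₀ hq₀'
  -- The added `1` keeps the constant nonzero, so that the bound is trivial for `f ∉ L^{p₀}`.
  refine ⟨(C₀ + 1) ^ q₀.toReal, fun j f hf => ?_⟩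
  rw [← mixedNorm_rpow_eq_lintegral hp₀' hq₀ hq₀', ← eLpNorm_rpow_eq_lintegral hp₀ hp₀']
  obtain hf' | hf' := eq_or_ne (eLpNorm f p₀ volume) ∞
  · rw [hf', ENNReal.top_rpow_of_pos hq, ENNReal.mul_top]
    · exact le_top
    · refine mul_ne_zero ?_ (by simp)
      exact_mod_cast (NNReal.rpow_pos (p := q₀.toReal) (add_pos_of_nonneg_of_pos C₀.2 one_pos)).ne'
  · have hop : AjOpNorm d χ β₀ j p₀ q₀ p₀ ≤
        (C₀ + 1 : ℝ≥0) * 2 ^ (-(((j : ℝ) * d) / q₀.toReal)) := by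
      rw [ENNReal.rpow_neg, ← div_eq_mul_inv, ENNReal.le_div_iff_mul_le (by simp) (by simp),
        mul_comm]
      exact (hC₀ j).trans (by exact_mod_cast le_self_add)
    have hle := (mixedNorm_Aj_le (χ := χ) (r := p₀) hβ hp₀ hq₀ hp₀ j hf hf').trans
      (mul_le_mul_left hop _)
    refine (ENNReal.rpow_le_rpow hle hq.le).trans_eq ?_
    rw [ENNReal.mul_rpow_of_nonneg _ _ hq.le, ENNReal.mul_rpow_of_nonneg _ _ hq.le,
      ← ENNReal.rpow_mul 2, neg_mul, div_mul_cancel₀ _ hq.ne', ENNReal.coe_rpow_of_nonneg _ hq.le]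

end OperatorNorm

/-! ### Localization to balls -/

section LocalMass

/-- The integrable weight `(1 + |u|)^{-(d+1)}`, with the decay of the Littlewood–Paley kernels. -/
def decayWeight (d : ℕ) (u : Euc d) : ℝ≥0∞ := ((1 + ‖u‖ₑ) ^ (d + 1))⁻¹

/-- The integral of `H` weighted by `decayWeight` about the center `c`. -/
def localMass (d : ℕ) (H : Euc d → ℝ≥0∞) (c : Euc d) : ℝ≥0∞ :=
  ∫⁻ u, decayWeight d (u - c) * H u

variable {d : ℕ} {H : Euc d → ℝ≥0∞}

@[fun_prop]
lemma measurable_decayWeight : Measurable (decayWeight d) := by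
  unfold decayWeight; fun_prop

lemma decayWeight_le_one (u : Euc d) : decayWeight d u ≤ 1 :=
  ENNReal.inv_le_one.2 (one_le_pow₀ le_self_add)

lemma decayWeight_le_two_pow_mul {u v : Euc d} (h : 1 + ‖v‖ₑ ≤ 2 * (1 + ‖u‖ₑ)) :
    decayWeight d u ≤ 2 ^ (d + 1) * decayWeight d v := by
  rw [decayWeight, decayWeight, ← div_eq_mul_inv, ENNReal.le_div_iff_mul_le (by simp) (by simp),
    mul_comm, ← div_eq_mul_inv, ENNReal.div_le_iff (by simp) (by simp), ← mul_pow]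
  gcongr

lemma lintegral_decayWeight_ne_top (d : ℕ) : ∫⁻ u, decayWeight d u ≠ ∞ := by
  have hfin : ∫⁻ u : Euc d, ENNReal.ofReal ((1 + ‖u‖) ^ (-((d + 1 : ℕ) : ℝ))) < ∞ :=
    finite_integral_one_add_norm (by simp)
  convert hfin.ne using 3 with u
  rw [Real.rpow_neg (by positivity), Real.rpow_natCast, ENNReal.ofReal_inv_of_pos (by positivity),
    ENNReal.ofReal_pow (by positivity), ENNReal.ofReal_add zero_le_one (norm_nonneg u),
    ENNReal.ofReal_one, ofReal_norm, decayWeight]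

lemma lintegral_decayWeight_sub (c : Euc d) :
    ∫⁻ u, decayWeight d (u - c) = ∫⁻ u, decayWeight d u :=
  lintegral_sub_right_eq_self (decayWeight d) c

lemma localMass_mono {H' : Euc d → ℝ≥0∞} (h : H ≤ᵐ[volume] H') (c : Euc d) :
    localMass d H c ≤ localMass d H' c :=
  lintegral_mono_ae (h.mono fun _ hu => mul_le_mul_right hu _)

lemma localMass_const (M : ℝ≥0∞) (c : Euc d) :
    localMass d (fun _ => M) c = (∫⁻ u, decayWeight d u) * M := by
  rw [localMass, lintegral_mul_const _ (by fun_prop), lintegral_decayWeight_sub]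

lemma localMass_le_lintegral (H : Euc d → ℝ≥0∞) (c : Euc d) : localMass d H c ≤ ∫⁻ u, H u :=
  lintegral_mono fun _ => mul_le_of_le_one_left zero_le (decayWeight_le_one _)

lemma localMass_rpow_le (hH : AEMeasurable H) {p : ℝ} (hp : 1 ≤ p) (c : Euc d) :
    localMass d H c ^ p ≤ (∫⁻ u, decayWeight d u) ^ (p - 1) * localMass d (fun u => H u ^ p) c := by
  rw [← lintegral_decayWeight_sub c]
  exact lintegral_mul_rpow_le (by fun_prop) hH hp

lemma ennreal_rpow_sub_one_mul_self (N : ℝ≥0∞) {a : ℝ} (ha : 1 ≤ a) : N ^ (a - 1) * N = N ^ a := by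
  simpa using (ENNReal.rpow_add_of_nonneg (x := N) (a - 1) 1 (by linarith) zero_le_one).symm

lemma lintegral_rpow_le_rpow_mul_lintegral {X : Type*} [MeasurableSpace X] {μ : Measure X}
    {g : X → ℝ≥0∞} (hg : AEMeasurable g μ) {N : ℝ≥0∞} (hN : ∀ x, g x ≤ N) {a : ℝ} (ha : 1 ≤ a) :
    ∫⁻ x, g x ^ a ∂μ ≤ N ^ (a - 1) * ∫⁻ x, g x ∂μ := by
  rw [← lintegral_const_mul'' _ hg]
  refine lintegral_mono fun x => ?_
  rw [← ennreal_rpow_sub_one_mul_self (g x) ha]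
  exact mul_le_mul_left (ENNReal.rpow_le_rpow (hN x) (by linarith)) _

lemma lintegral_localMass (hH : AEMeasurable H) :
    ∫⁻ c, localMass d H c = (∫⁻ u, decayWeight d u) * ∫⁻ u, H u := by
  unfold localMass
  rw [lintegral_lintegral_swap (by fun_prop), ← lintegral_const_mul'' _ hH]
  refine lintegral_congr fun u => ?_
  rw [lintegral_mul_const _ (by fun_prop), lintegral_sub_left_eq_self (decayWeight d) u]

lemma lintegral_localMass_rpow_le (hH : AEMeasurable H) {a : ℝ} (ha : 1 ≤ a) :
    ∫⁻ c, localMass d H c ^ a ≤ (∫⁻ u, decayWeight d u) * (∫⁻ u, H u) ^ a := by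
  have hmeas : AEMeasurable (localMass d H) :=
    AEMeasurable.lintegral_prod_right' (f := fun z => decayWeight d (z.2 - z.1) * H z.2)
      (by fun_prop)
  refine (lintegral_rpow_le_rpow_mul_lintegral hmeas (localMass_le_lintegral H) ha).trans_eq ?_
  rw [lintegral_localMass hH, mul_left_comm, ennreal_rpow_sub_one_mul_self _ ha]

/-- The radius beyond which a function does not affect `𝒜_j` on the unit ball, up to a factor
rapidly decaying in `j`: `d + 4` for the averaging ball, `4` for the spherical mean, and `1` for
the unit ball add up to less than half of it. -/
def farRadius (d : ℕ) : ℝ := 2 * d + 19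

lemma exists_setLIntegral_closedBall_farRadius_le (d : ℕ) : ∃ C : ℝ≥0,
    ∀ (H : Euc d → ℝ≥0∞) c, ∫⁻ u in closedBall c (farRadius d), H u ≤ C * localMass d H c := by
  obtain ⟨C, hC⟩ : ∃ C : ℝ≥0, C = (1 + ENNReal.ofReal (farRadius d)) ^ (d + 1) :=
    ⟨_, ENNReal.coe_toNNReal (by finiteness)⟩
  refine ⟨C, fun H c => ?_⟩
  rw [localMass, ← lintegral_const_mul' _ _ ENNReal.coe_ne_top]
  refine (setLIntegral_mono' measurableSet_closedBall fun u hu => ?_).trans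
    (setLIntegral_le_lintegral (closedBall c (farRadius d)) _)
  rw [← mul_assoc, decayWeight, ← div_eq_mul_inv]
  refine le_mul_of_one_le_left zero_le ?_
  rw [ENNReal.le_div_iff_mul_le (by simp) (by simp), one_mul, hC]
  gcongr
  rw [← ofReal_norm, ← dist_eq_norm]
  exact ENNReal.ofReal_le_ofReal hu

lemma exists_lintegral_enorm_indicator_rpow_le (d : ℕ) {s p : ℝ} (hs : 0 < s) (hsp : s ≤ p) :
    ∃ C : ℝ≥0, ∀ f : Euc d → ℂ, AEMeasurable f → ∀ c,
      (∫⁻ x, ‖(closedBall c (farRadius d)).indicator f x‖ₑ ^ s) ^ (p / s) ≤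
        C * localMass d (fun u => ‖f u‖ₑ ^ p) c := by
  obtain ⟨C, hC⟩ := exists_setLIntegral_closedBall_farRadius_le d
  have hps : 1 ≤ p / s := (one_le_div hs).2 hsp
  have hV : volume (closedBall (0 : Euc d) (farRadius d)) ≠ ∞ := measure_closedBall_lt_top.ne
  obtain ⟨K, hK⟩ : ∃ K : ℝ≥0,
      K = volume (closedBall (0 : Euc d) (farRadius d)) ^ (p / s - 1) * C :=
    ⟨_, ENNReal.coe_toNNReal
      (ENNReal.mul_ne_top (ENNReal.rpow_ne_top_of_nonneg (by linarith) hV) ENNReal.coe_ne_top)⟩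
  refine ⟨K, fun f hf c => ?_⟩
  have hind (x : Euc d) : ‖(closedBall c (farRadius d)).indicator f x‖ₑ ^ s =
      (closedBall c (farRadius d)).indicator (fun x => ‖f x‖ₑ ^ s) x := by
    by_cases hx : x ∈ closedBall c (farRadius d) <;> simp [hx, hs]
  have hJensen := lintegral_rpow_le_measure_univ_mul
    (μ := volume.restrict (closedBall c (farRadius d))) (hf.restrict.enorm.pow_const s) hps
  simp_rw [← ENNReal.rpow_mul, mul_div_cancel₀ _ hs.ne', Measure.restrict_apply_univ,
    Measure.addHaar_closedBall_center _ c] at hJensen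
  simp_rw [hind]
  rw [lintegral_indicator measurableSet_closedBall, hK, mul_assoc]
  exact hJensen.trans (mul_le_mul_right (hC _ c) _)

end LocalMass

section Localization

variable {d : ℕ} {χ β₀ : ℝ → ℝ}

lemma IsBump.exists_enorm_lpKernel_le (d : ℕ) (hβ : IsBump β₀) : ∃ C : ℝ≥0, ∀ j (x : Euc d),
    1 ≤ ‖x‖ → ‖lpKernel d β₀ j x‖ₑ ≤ C * 2 ^ (-((j : ℝ) * (d + 1))) * decayWeight d x := by
  obtain ⟨C, hC⟩ := hβ.exists_norm_lpKernel_le d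
  refine ⟨2 ^ (d + 1) * C, fun j x hx => ?_⟩
  have hCx : (2 ^ j * ‖x‖ₑ) ^ (d + 1) * ‖lpKernel d β₀ j x‖ₑ ≤ C := by
    have h := ENNReal.ofReal_le_ofReal (hC j x hx)
    rwa [ENNReal.ofReal_mul (by positivity), ENNReal.ofReal_pow (by positivity),
      ENNReal.ofReal_mul (by positivity), ENNReal.ofReal_pow two_pos.le, ofReal_norm, ofReal_norm,
      ENNReal.ofReal_ofNat, ENNReal.ofReal_coe_nnreal] at h
  have hx' : 1 + ‖x‖ₑ ≤ 2 * ‖x‖ₑ := by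
    rw [two_mul]
    gcongr
    rw [← ofReal_norm, ← ENNReal.ofReal_one]
    exact ENNReal.ofReal_le_ofReal hx
  have hpow : (2 : ℝ≥0∞) ^ (-((j : ℝ) * (d + 1))) = ((2 ^ j) ^ (d + 1))⁻¹ := by
    rw [ENNReal.rpow_neg, ← Nat.cast_add_one, ← Nat.cast_mul, ENNReal.rpow_natCast, pow_mul]
  rw [hpow, decayWeight, ← div_eq_mul_inv, ← div_eq_mul_inv,
    ENNReal.le_div_iff_mul_le (by simp) (by simp), ENNReal.le_div_iff_mul_le (by simp) (by simp)]
  calc _ ≤ ‖lpKernel d β₀ j x‖ₑ * (2 * ‖x‖ₑ) ^ (d + 1) * (2 ^ j) ^ (d + 1) := by gcongr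
    _ = 2 ^ (d + 1) * ((2 ^ j * ‖x‖ₑ) ^ (d + 1) * ‖lpKernel d β₀ j x‖ₑ) := by
      simp only [mul_pow]; ring
    _ ≤ _ := by push_cast; gcongr

lemma IsBump.exists_enorm_freqLoc_le_of_far (d : ℕ) (hβ : IsBump β₀) :
    ∃ C : ℝ≥0, ∀ j (f : Euc d → ℂ), Integrable f → ∀ c z,
      (∀ u ∈ closedBall c (farRadius d), f u = 0) → ‖z - c‖ ≤ d + 9 →
        ‖freqLoc d β₀ j f z‖ₑ ≤
          C * 2 ^ (-((j : ℝ) * (d + 1))) * localMass d (fun u => ‖f u‖ₑ) c := by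
  obtain ⟨C, hC⟩ := hβ.exists_enorm_lpKernel_le d
  refine ⟨C * 2 ^ (d + 1), fun j f hf c z hfar hz => ?_⟩
  rw [hβ.freqLoc_eq_integral j hf, localMass, ← lintegral_const_mul' _ _ (by finiteness)]
  refine (enorm_integral_le_lintegral_enorm _).trans (lintegral_mono fun u => ?_)
  by_cases hu : u ∈ closedBall c (farRadius d)
  · simp [hfar u hu]
  rw [mem_closedBall, not_le, dist_eq_norm, farRadius] at hu
  have htri : ‖u - c‖ ≤ ‖z - c‖ + ‖z - u‖ := by
    simpa using norm_sub_le (z - c) (z - u)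
  have hweight : decayWeight d (z - u) ≤ 2 ^ (d + 1) * decayWeight d (u - c) := by
    refine decayWeight_le_two_pow_mul ?_
    have h₁ (v : Euc d) : 1 + ‖v‖ₑ = ENNReal.ofReal (1 + ‖v‖) := by
      rw [ENNReal.ofReal_add zero_le_one (norm_nonneg _), ENNReal.ofReal_one, ofReal_norm]
    rw [h₁, h₁, two_mul, ← ENNReal.ofReal_add (by positivity) (by positivity)]
    exact ENNReal.ofReal_le_ofReal (by linarith)
  rw [enorm_mul, ← mul_assoc]
  gcongr
  calc _ ≤ C * 2 ^ (-((j : ℝ) * (d + 1))) * decayWeight d (z - u) := hC j (z - u) (by linarith)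
    _ ≤ C * 2 ^ (-((j : ℝ) * (d + 1))) * (2 ^ (d + 1) * decayWeight d (u - c)) := by gcongr
    _ = _ := by push_cast; ring

lemma avgRadius_le {n j : ℕ} (h : n ≤ j) : avgRadius d n j ≤ d + 4 :=
  mul_le_of_le_one_right (by positivity) (zpow_le_one_of_nonpos₀ one_le_two (by lia))

variable [NeZero d]

lemma exists_lintegral_enorm_Aj_rpow_le_of_far (hχ : IsCutoff χ) (hβ : IsBump β₀) {s : ℝ}
    (hs : 0 < s) : ∃ C : ℝ≥0, ∀ j (f : Euc d → ℂ), Integrable f → ∀ c y,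
      (∀ u ∈ closedBall c (farRadius d), f u = 0) → ‖y - c‖ ≤ d + 5 →
        ∫⁻ t, ‖Aj d χ β₀ j f y t‖ₑ ^ s ≤
          C * (2 ^ (-((j : ℝ) * (d + 1))) * localMass d (fun u => ‖f u‖ₑ) c) ^ s := by
  obtain ⟨C₁, hC₁⟩ := hχ.exists_lintegral_enorm_Aj_rpow_le d hs
  obtain ⟨C₂, hC₂⟩ := hβ.exists_enorm_freqLoc_le_of_far d
  obtain ⟨C, hC⟩ : ∃ C : ℝ≥0, C = C₁ * ((C₂ : ℝ≥0∞) ^ s * volume (Icc (1 / 2 : ℝ) 4)) :=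
    ⟨_, ENNReal.coe_toNNReal (ENNReal.mul_ne_top ENNReal.coe_ne_top
      (ENNReal.mul_ne_top (by finiteness) measure_Icc_lt_top.ne))⟩
  refine ⟨C, fun j f hf c y hfar hy => (hC₁ β₀ j f y).trans ?_⟩
  set B := (2 : ℝ≥0∞) ^ (-((j : ℝ) * (d + 1))) * localMass d (fun u => ‖f u‖ₑ) c
  have hsph : ∀ t ∈ Icc (1 / 2 : ℝ) 4, ‖sphAvg (freqLoc d β₀ j f) t y‖ₑ ≤ C₂ * B := fun t ht => by
    have hmean : ‖sphAvg (freqLoc d β₀ j f) t y‖ₑ ≤ ∫⁻ _, C₂ * B ∂sphereMeasure d := by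
      refine (enorm_integral_le_lintegral_enorm _).trans (lintegral_mono_ae ?_)
      filter_upwards [ae_norm_eq_one_sphereMeasure] with w hw
      rw [← mul_assoc]
      refine hC₂ j f hf c _ hfar ?_
      have htri := norm_sub_le (y - c) (t • w)
      rw [norm_smul, hw, mul_one, Real.norm_of_nonneg (by linarith [ht.1])] at htri
      rw [sub_right_comm]
      linarith [ht.2]
    simpa using hmean
  calc _ ≤ C₁ * ∫⁻ _ in Icc (1 / 2 : ℝ) 4, (C₂ * B) ^ s :=
        mul_le_mul_right (setLIntegral_mono' measurableSet_Icc fun t ht =>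
          ENNReal.rpow_le_rpow (hsph t ht) hs.le) _
    _ = _ := by
        rw [setLIntegral_const, ENNReal.mul_rpow_of_nonneg _ _ hs.le, hC]
        ring

lemma exists_localAvg_le_of_far (hχ : IsCutoff χ) (hβ : IsBump β₀) {s : ℝ} (hs : 0 < s) :
    ∃ C : ℝ≥0, ∀ n j, n ≤ j → ∀ f : Euc d → ℂ, Integrable f → ∀ c, ∀ x ∈ closedBall c 1,
      (∀ u ∈ closedBall c (farRadius d), f u = 0) → localAvg d χ β₀ n j s f x ≤
        C * (2 ^ (-((j : ℝ) * (d + 1))) * localMass d (fun u => ‖f u‖ₑ) c) ^ s := by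
  obtain ⟨C, hC⟩ := exists_lintegral_enorm_Aj_rpow_le_of_far (d := d) hχ hβ hs
  refine ⟨(volume (ball (0 : Euc d) 1)).toNNReal * C, fun n j hnj f hf c x hx hfar => ?_⟩
  rw [ENNReal.coe_mul, ENNReal.coe_toNNReal measure_ball_lt_top.ne, mul_assoc]
  refine localAvg_le_volume_mul fun y hy => hC j f hf c y hfar ?_
  rw [← dist_eq_norm]
  linarith [dist_triangle y x c, mem_closedBall.1 hx, mem_closedBall.1 hy,
    avgRadius_le (d := d) hnj]

lemma localAvg_add_le (hχ : IsCutoff χ) (hβ : IsBump β₀) {s : ℝ} (hs : 1 ≤ s) (n j : ℕ)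
    {f g : Euc d → ℂ} (hf : Integrable f) (hg : Integrable g) (x : Euc d) :
    localAvg d χ β₀ n j s (f + g) x ≤
      2 ^ (s - 1) * (localAvg d χ β₀ n j s f x + localAvg d χ β₀ n j s g x) := by
  simp only [localAvg_eq_lintegral_avgMeasure hχ hβ]
  rw [← lintegral_add_left ((measurable_Aj hχ hβ j f).enorm.pow_const s),
    ← lintegral_const_mul' _ _ (by finiteness)]
  refine lintegral_mono fun z => ?_
  rw [Aj_add hβ j hf hg]
  exact (ENNReal.rpow_le_rpow (enorm_add_le _ _) (by linarith)).trans
    (ENNReal.rpow_add_le_mul_rpow_add_rpow _ _ hs)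

lemma exists_localAvg_le_add (hχ : IsCutoff χ) (hβ : IsBump β₀) {s : ℝ} (hs : 1 ≤ s) :
    ∃ C : ℝ≥0, ∀ n j, n ≤ j → ∀ f : Euc d → ℂ, Integrable f → ∀ c, ∀ x ∈ closedBall c 1,
      localAvg d χ β₀ n j s f x ≤
        C * (localAvg d χ β₀ n j s ((closedBall c (farRadius d)).indicator f) x +
          (2 ^ (-((j : ℝ) * (d + 1))) * localMass d (fun u => ‖f u‖ₑ) c) ^ s) := by
  obtain ⟨C, hC⟩ := exists_localAvg_le_of_far (d := d) hχ hβ (zero_lt_one.trans_le hs)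
  obtain ⟨K, hK⟩ : ∃ K : ℝ≥0, K = (2 : ℝ≥0∞) ^ (s - 1) * (1 + C) :=
    ⟨_, ENNReal.coe_toNNReal (by finiteness)⟩
  refine ⟨K, fun n j hnj f hf c x hx => ?_⟩
  set S := closedBall c (farRadius d)
  set B := (2 : ℝ≥0∞) ^ (-((j : ℝ) * (d + 1))) * localMass d (fun u => ‖f u‖ₑ) c
  have hfar : localAvg d χ β₀ n j s (Sᶜ.indicator f) x ≤ C * B ^ s := by
    refine (hC n j hnj _ (hf.indicator measurableSet_closedBall.compl) c x hx
      fun u hu => indicator_of_notMem (notMem_compl_iff.2 hu) f).trans ?_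
    exact mul_le_mul_right (ENNReal.rpow_le_rpow (mul_le_mul_right (localMass_mono
      (.of_forall fun u => enorm_indicator_le_enorm_self f u) c) _) (by linarith)) _
  calc localAvg d χ β₀ n j s f x
      = localAvg d χ β₀ n j s (S.indicator f + Sᶜ.indicator f) x := by
        rw [indicator_self_add_compl]
    _ ≤ 2 ^ (s - 1) * (localAvg d χ β₀ n j s (S.indicator f) x + C * B ^ s) :=
        (localAvg_add_le hχ hβ hs n j (hf.indicator measurableSet_closedBall)
          (hf.indicator measurableSet_closedBall.compl) x).trans (by gcongr)
    _ ≤ 2 ^ (s - 1) * ((1 + C) * localAvg d χ β₀ n j s (S.indicator f) x + (1 + C) * B ^ s) := by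
        gcongr
        · exact le_mul_of_one_le_left zero_le le_self_add
        · exact le_add_self
    _ = _ := by rw [hK]; ring

end Localization

section LocalizedGain

variable {d : ℕ} {χ β₀ : ℝ → ℝ}

lemma two_rpow_neg_mul_antitone (n : ℕ) :
    Antitone fun ε : ℝ => (2 : ℝ≥0∞) ^ (-((n : ℝ) * ε)) := fun _ _ h =>
  ENNReal.rpow_le_rpow_of_exponent_le one_le_two (neg_le_neg (by gcongr))

lemma two_rpow_neg_mul_succ_rpow_le (d : ℕ) {n j : ℕ} (h : n ≤ j) {ε q : ℝ} (hε : ε ≤ 1)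
    (hq : 1 ≤ q) : ((2 : ℝ≥0∞) ^ (-((j : ℝ) * (d + 1)))) ^ q ≤
      2 ^ (-((n : ℝ) * ε)) * 2 ^ (-((j : ℝ) * d)) := by
  rw [← ENNReal.rpow_mul, ← ENNReal.rpow_add _ _ two_ne_zero ENNReal.ofNat_ne_top]
  refine ENNReal.rpow_le_rpow_of_exponent_le one_le_two ?_
  have hj : (n : ℝ) * ε ≤ j :=
    (mul_le_of_le_one_right n.cast_nonneg hε).trans (by exact_mod_cast h)
  have hjq : (j : ℝ) * (d + 1) ≤ j * (d + 1) * q := le_mul_of_one_le_right (by positivity) hq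
  linarith

lemma exists_far_rpow_le (d : ℕ) {p q : ℝ} (hp : 1 ≤ p) (hpq : p ≤ q) : ∃ C : ℝ≥0,
    ∀ ε ≤ 1, ∀ n j : ℕ, n ≤ j → ∀ f : Euc d → ℂ, AEMeasurable f → ∀ c,
      (2 ^ (-((j : ℝ) * (d + 1))) * localMass d (fun u => ‖f u‖ₑ) c) ^ q ≤
        C * (2 ^ (-((n : ℝ) * ε)) * 2 ^ (-((j : ℝ) * d))) *
          localMass d (fun u => ‖f u‖ₑ ^ p) c ^ (q / p) := by
  have hpq' : p * (q / p) = q := mul_div_cancel₀ q (by linarith)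
  have hqp : 0 ≤ q / p := div_nonneg (by linarith) (by linarith)
  have hκ := lintegral_decayWeight_ne_top d
  obtain ⟨K, hK⟩ : ∃ K : ℝ≥0, K = ((∫⁻ u, decayWeight d u) ^ (p - 1)) ^ (q / p) :=
    ⟨_, ENNReal.coe_toNNReal (by finiteness)⟩
  refine ⟨K, fun ε hε n j hnj f hf c => ?_⟩
  have hmass : localMass d (fun u => ‖f u‖ₑ) c ^ q ≤
      K * localMass d (fun u => ‖f u‖ₑ ^ p) c ^ (q / p) := by
    rw [hK, ← ENNReal.mul_rpow_of_nonneg _ _ hqp]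
    nth_rw 1 [← hpq']
    rw [ENNReal.rpow_mul]
    exact ENNReal.rpow_le_rpow (localMass_rpow_le hf.enorm hp c) hqp
  rw [ENNReal.mul_rpow_of_nonneg _ _ (by linarith), mul_comm (K : ℝ≥0∞), mul_assoc _ (K : ℝ≥0∞)]
  exact mul_le_mul' (two_rpow_neg_mul_succ_rpow_le d hnj hε (by linarith)) hmass

lemma HasIntegralGain.exists_lintegral_indicator_le {s p q : ℝ}
    (h : HasIntegralGain d χ β₀ s s q) (hs : 0 < s) (hsp : s ≤ p) (hpq : p ≤ q) :
    ∃ ε : ℝ, 0 < ε ∧ ε ≤ 1 ∧ ∃ C : ℝ≥0, ∀ n j, n ≤ j → ∀ f : Euc d → ℂ, Integrable f → ∀ c,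
      ∫⁻ x, localAvg d χ β₀ n j s ((closedBall c (farRadius d)).indicator f) x ^ (q / s) ≤
        C * (2 ^ (-((n : ℝ) * ε)) * 2 ^ (-((j : ℝ) * d))) *
          localMass d (fun u => ‖f u‖ₑ ^ p) c ^ (q / p) := by
  obtain ⟨ε, hε, C₁, hC₁⟩ := h
  obtain ⟨C₂, hC₂⟩ := exists_lintegral_enorm_indicator_rpow_le d hs hsp
  have hp : 0 < p := hs.trans_le hsp
  have hqp : 0 ≤ q / p := div_nonneg (hp.le.trans hpq) hp.le
  obtain ⟨K, hK⟩ : ∃ K : ℝ≥0, K = C₁ * (C₂ : ℝ≥0∞) ^ (q / p) :=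
    ⟨_, ENNReal.coe_toNNReal (by finiteness)⟩
  refine ⟨min ε 1, lt_min hε one_pos, min_le_right _ _, K, fun n j hnj f hf c => ?_⟩
  refine (hC₁ n j hnj _ (hf.indicator measurableSet_closedBall)).trans ?_
  have hqs : q / s = p / s * (q / p) := by field_simp
  rw [hqs, ENNReal.rpow_mul, hK, mul_assoc (C₁ : ℝ≥0∞)]
  calc _ ≤ C₁ * (2 ^ (-((n : ℝ) * min ε 1)) * 2 ^ (-((j : ℝ) * d))) *
        (C₂ * localMass d (fun u => ‖f u‖ₑ ^ p) c) ^ (q / p) :=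
      mul_le_mul' (mul_le_mul_right (mul_le_mul_left
          (two_rpow_neg_mul_antitone n (min_le_left ε 1)) _) _)
        (ENNReal.rpow_le_rpow (hC₂ f hf.aestronglyMeasurable.aemeasurable c) hqp)
    _ = _ := by rw [ENNReal.mul_rpow_of_nonneg _ _ hqp]; ring

variable [NeZero d]

lemma HasIntegralGain.exists_setLIntegral_closedBall_le (hχ : IsCutoff χ) (hβ : IsBump β₀)
    {s p q : ℝ} (h : HasIntegralGain d χ β₀ s s q) (hs : 1 ≤ s) (hsp : s ≤ p) (hpq : p ≤ q) :
    ∃ ε : ℝ, 0 < ε ∧ ∃ C : ℝ≥0, ∀ n j, n ≤ j → ∀ f : Euc d → ℂ, Integrable f → ∀ c,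
      ∫⁻ x in closedBall c 1, localAvg d χ β₀ n j s f x ^ (q / s) ≤
        C * (2 ^ (-((n : ℝ) * ε)) * 2 ^ (-((j : ℝ) * d))) *
          localMass d (fun u => ‖f u‖ₑ ^ p) c ^ (q / p) := by
  obtain ⟨ε, hε, hε₁, C₁, hC₁⟩ := h.exists_lintegral_indicator_le (by linarith) hsp hpq
  obtain ⟨C₂, hC₂⟩ := exists_far_rpow_le d (hs.trans hsp) hpq
  obtain ⟨C₃, hC₃⟩ := exists_localAvg_le_add (d := d) hχ hβ hs
  have hqs : 1 ≤ q / s := (one_le_div (by linarith)).2 (hsp.trans hpq)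
  have hV (c : Euc d) : volume (closedBall c 1) = (volume (closedBall (0 : Euc d) 1)).toNNReal := by
    rw [ENNReal.coe_toNNReal measure_closedBall_lt_top.ne, Measure.addHaar_closedBall_center]
  generalize (volume (closedBall (0 : Euc d) 1)).toNNReal = V at hV
  obtain ⟨A, hA⟩ : ∃ A : ℝ≥0, A = (C₃ : ℝ≥0∞) ^ (q / s) * 2 ^ (q / s - 1) :=
    ⟨_, ENNReal.coe_toNNReal (by finiteness)⟩
  refine ⟨ε, hε, A * (C₁ + V * C₂), fun n j hnj f hf c => ?_⟩
  have hnear := hC₁ n j hnj f hf c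
  have hfar := hC₂ ε hε₁ n j hnj f hf.aestronglyMeasurable.aemeasurable c
  set G := localMass d (fun u => ‖f u‖ₑ ^ p) c
  set B := (2 : ℝ≥0∞) ^ (-((j : ℝ) * (d + 1))) * localMass d (fun u => ‖f u‖ₑ) c
  set f₁ := (closedBall c (farRadius d)).indicator f
  have hsplit : ∀ x ∈ closedBall c 1, localAvg d χ β₀ n j s f x ^ (q / s) ≤
      A * (localAvg d χ β₀ n j s f₁ x ^ (q / s) + B ^ q) := fun x hx =>
    calc _ ≤ (C₃ * (localAvg d χ β₀ n j s f₁ x + B ^ s)) ^ (q / s) :=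
          ENNReal.rpow_le_rpow (hC₃ n j hnj f hf c x hx) (by linarith)
      _ ≤ C₃ ^ (q / s) *
          (2 ^ (q / s - 1) * (localAvg d χ β₀ n j s f₁ x ^ (q / s) + (B ^ s) ^ (q / s))) := by
        rw [ENNReal.mul_rpow_of_nonneg _ _ (by linarith)]
        exact mul_le_mul_right (ENNReal.rpow_add_le_mul_rpow_add_rpow _ _ hqs) _
      _ = _ := by
        rw [← ENNReal.rpow_mul B, mul_div_cancel₀ q (by linarith), hA, mul_assoc]
  calc _ ≤ ∫⁻ x in closedBall c 1, A * (localAvg d χ β₀ n j s f₁ x ^ (q / s) + B ^ q) :=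
        setLIntegral_mono' measurableSet_closedBall hsplit
    _ = A * ((∫⁻ x in closedBall c 1, localAvg d χ β₀ n j s f₁ x ^ (q / s)) + V * B ^ q) := by
        rw [lintegral_const_mul' _ _ ENNReal.coe_ne_top, lintegral_add_right _ measurable_const,
          setLIntegral_const, hV, mul_comm (B ^ q)]
    _ ≤ A * (C₁ * (2 ^ (-((n : ℝ) * ε)) * 2 ^ (-((j : ℝ) * d))) * G ^ (q / p) +
          V * (C₂ * (2 ^ (-((n : ℝ) * ε)) * 2 ^ (-((j : ℝ) * d))) * G ^ (q / p))) :=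
        mul_le_mul_right (add_le_add ((setLIntegral_le_lintegral _ _).trans hnear)
          (mul_le_mul_right hfar _)) _
    _ = _ := by push_cast; ring

lemma HasIntegralGain.of_le (hχ : IsCutoff χ) (hβ : IsBump β₀) {s p q : ℝ}
    (h : HasIntegralGain d χ β₀ s s q) (hs : 1 ≤ s) (hsp : s ≤ p) (hpq : p ≤ q) :
    HasIntegralGain d χ β₀ s p q := by
  obtain ⟨ε, hε, C, hC⟩ := h.exists_setLIntegral_closedBall_le hχ hβ hs hsp hpq
  have hqp : 1 ≤ q / p := (one_le_div (by linarith)).2 hpq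
  have hV : volume (closedBall (0 : Euc d) 1) ≠ ∞ := measure_closedBall_lt_top.ne
  have hV₀ : volume (closedBall (0 : Euc d) 1) ≠ 0 := (measure_closedBall_pos _ _ one_pos).ne'
  have hκ := lintegral_decayWeight_ne_top d
  obtain ⟨K, hK⟩ : ∃ K : ℝ≥0,
      K = (volume (closedBall (0 : Euc d) 1))⁻¹ * (C * ∫⁻ u, decayWeight d u) :=
    ⟨_, ENNReal.coe_toNNReal (by finiteness)⟩
  refine ⟨ε, hε, K, fun n j hnj f hf => ?_⟩
  have hfub := lintegral_setLIntegral_closedBall (μ := volume)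
    ((measurable_localAvg hχ hβ n j s f).pow_const (q / s)) 1
  simp only [Measure.addHaar_closedBall_center] at hfub
  rw [lintegral_const_mul' _ _ hV] at hfub
  rw [← ENNReal.inv_mul_cancel_left hV₀ hV (b := ∫⁻ x, _), ← hfub]
  calc _ ≤ (volume (closedBall (0 : Euc d) 1))⁻¹ *
        ∫⁻ c, C * (2 ^ (-((n : ℝ) * ε)) * 2 ^ (-((j : ℝ) * d))) *
          localMass d (fun u => ‖f u‖ₑ ^ p) c ^ (q / p) :=
        mul_le_mul_right (lintegral_mono fun c => hC n j hnj f hf c) _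
    _ ≤ (volume (closedBall (0 : Euc d) 1))⁻¹ *
        (C * (2 ^ (-((n : ℝ) * ε)) * 2 ^ (-((j : ℝ) * d))) *
          ((∫⁻ u, decayWeight d u) * (∫⁻ u, ‖f u‖ₑ ^ p) ^ (q / p))) := by
        rw [lintegral_const_mul' _ _ (by finiteness)]
        exact mul_le_mul_right (mul_le_mul_right (lintegral_localMass_rpow_le
          (hf.aestronglyMeasurable.aemeasurable.enorm.pow_const p) hqp) _) _
    _ = _ := by rw [hK]; ring

lemma exists_localAvg_le_two_rpow_eLpNorm_top (hd : 2 ≤ d) (hχ : IsCutoff χ) (hβ : IsBump β₀)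
    {s : ℝ} (hs : 1 < s) :
    ∃ ε : ℝ, 0 < ε ∧ ∃ C : ℝ≥0, ∀ n j, n ≤ j → ∀ f : Euc d → ℂ, Integrable f → ∀ x,
      localAvg d χ β₀ n j s f x ≤ C * 2 ^ (-((n : ℝ) * ε)) * eLpNorm f ∞ volume ^ s := by
  obtain ⟨ε, hε, C₁, hC₁⟩ := exists_localAvg_le_two_rpow hd hχ hβ hs
  obtain ⟨C₂, hC₂⟩ := exists_lintegral_enorm_indicator_rpow_le d (zero_lt_one.trans hs) le_rfl
  obtain ⟨C₃, hC₃⟩ := exists_localAvg_le_add (d := d) hχ hβ hs.le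
  have hκ := lintegral_decayWeight_ne_top d
  obtain ⟨κ, hκ'⟩ : ∃ κ : ℝ≥0, κ = ∫⁻ u, decayWeight d u := ⟨_, ENNReal.coe_toNNReal hκ⟩
  obtain ⟨K, hK⟩ : ∃ K : ℝ≥0, K = C₃ * (C₁ * (C₂ * κ) + (κ : ℝ≥0∞) ^ s) :=
    ⟨_, ENNReal.coe_toNNReal (by finiteness)⟩
  refine ⟨min ε 1, lt_min hε one_pos, K, fun n j hnj f hf x => ?_⟩
  have hM : ∀ᵐ u, ‖f u‖ₑ ≤ eLpNorm f ∞ volume := by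
    rw [eLpNorm_exponent_top]; exact ae_le_eLpNormEssSup
  generalize eLpNorm f ∞ volume = M at hM
  have hnear : localAvg d χ β₀ n j s ((closedBall x (farRadius d)).indicator f) x ≤
      C₁ * 2 ^ (-((n : ℝ) * min ε 1)) * (C₂ * (κ * M ^ s)) := by
    refine (hC₁ n j hnj _ (hf.indicator measurableSet_closedBall) x).trans ?_
    refine mul_le_mul' (mul_le_mul_right (two_rpow_neg_mul_antitone n (min_le_left ε 1)) _) ?_
    have hball := hC₂ f hf.aestronglyMeasurable.aemeasurable x
    rw [div_self (by linarith), ENNReal.rpow_one] at hball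
    rw [hκ', ← localMass_const (M ^ s) x]
    exact hball.trans (mul_le_mul_right (localMass_mono
      (hM.mono fun u hu => ENNReal.rpow_le_rpow hu (by linarith)) x) _)
  have hfar : (2 ^ (-((j : ℝ) * (d + 1))) * localMass d (fun u => ‖f u‖ₑ) x) ^ s ≤
      2 ^ (-((n : ℝ) * min ε 1)) * (κ ^ s * M ^ s) := by
    have hs₀ : 0 ≤ s := by linarith
    rw [← ENNReal.mul_rpow_of_nonneg _ _ hs₀, ENNReal.mul_rpow_of_nonneg _ _ hs₀, hκ',
      ← localMass_const M x]
    refine mul_le_mul' ((two_rpow_neg_mul_succ_rpow_le d hnj (min_le_right ε 1) hs.le).trans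
      (mul_le_of_le_one_right zero_le ?_)) (ENNReal.rpow_le_rpow (localMass_mono hM x) hs₀)
    simpa using ENNReal.rpow_le_rpow_of_exponent_le one_le_two (neg_nonpos.2 (by positivity))
  calc _ ≤ C₃ * (C₁ * 2 ^ (-((n : ℝ) * min ε 1)) * (C₂ * (κ * M ^ s)) +
        2 ^ (-((n : ℝ) * min ε 1)) * (κ ^ s * M ^ s)) :=
        (hC₃ n j hnj f hf x x (mem_closedBall_self zero_le_one)).trans
          (mul_le_mul_right (add_le_add hnear hfar) _)
    _ = _ := by rw [hK]; ring

end LocalizedGain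

/-! ### Averages over cubes and the maximal function -/

section MixedNorms

variable {α : Type*} [MeasurableSpace α] {μ : Measure α} {q : ℝ≥0∞}

lemma lqNorm_mono (q : ℝ≥0∞) {g h : α → ℝ≥0∞} (hgh : ∀ x, g x ≤ h x) :
    lqNorm q g μ ≤ lqNorm q h μ := by
  unfold lqNorm
  split_ifs
  · exact essSup_mono_ae (.of_forall hgh)
  · gcongr with x
    exact hgh x

lemma lqNorm_zero (hq : q ≠ 0) : lqNorm q (fun _ => 0) μ = 0 := by
  simpa using lqNorm_const_mul (μ := μ) hq ENNReal.zero_ne_top fun _ => 0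

lemma lqNorm_iSup_le (hq : q ≠ 0) {G : ℕ → α → ℝ≥0∞} (hG : ∀ j, AEMeasurable (G j) μ) :
    lqNorm q (fun x => ⨆ j, G j x) μ ≤ lqSeq q fun j => lqNorm q (G j) μ := by
  unfold lqNorm lqSeq
  split_ifs with hq'
  · refine essSup_le_of_ae_le _ ?_
    filter_upwards [ae_all_iff.2 fun j => ENNReal.ae_le_essSup (G j)] with x hx
    exact iSup_mono hx
  · have hq₀ : 0 < q.toReal := ENNReal.toReal_pos hq hq'
    simp only [one_div, ENNReal.rpow_inv_rpow hq₀.ne']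
    rw [← lintegral_tsum fun j => (hG j).pow_const _]
    gcongr with x
    rw [← ENNReal.le_rpow_inv_iff hq₀]
    refine iSup_le fun j => (ENNReal.le_rpow_inv_iff hq₀).2 ?_
    exact ENNReal.le_tsum (f := fun j => G j x ^ q.toReal) j

lemma lqSeq_mono (q : ℝ≥0∞) {g h : ℕ → ℝ≥0∞} (hgh : ∀ j, g j ≤ h j) : lqSeq q g ≤ lqSeq q h := by
  unfold lqSeq
  split_ifs
  · exact iSup_mono hgh
  · exact ENNReal.rpow_le_rpow (ENNReal.tsum_le_tsum fun j =>
      ENNReal.rpow_le_rpow (hgh j) ENNReal.toReal_nonneg) (by positivity)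

lemma lqSeq_const_mul (hq : q ≠ 0) (c : ℝ≥0∞) (g : ℕ → ℝ≥0∞) :
    lqSeq q (fun j => c * g j) = c * lqSeq q g := by
  unfold lqSeq
  split_ifs with hq'
  · exact (ENNReal.mul_iSup ..).symm
  · have hq₀ : 0 < q.toReal := ENNReal.toReal_pos hq hq'
    simp_rw [ENNReal.mul_rpow_of_nonneg _ _ hq₀.le]
    rw [ENNReal.tsum_mul_left, ENNReal.mul_rpow_of_nonneg _ _ (by positivity), one_div,
      ENNReal.rpow_rpow_inv hq₀.ne']

lemma laverage_rpow_le {g : α → ℝ≥0∞} (hg : AEMeasurable g μ) {s : ℝ} (hs : 1 ≤ s) :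
    (⨍⁻ x, g x ∂μ) ^ s ≤ ⨍⁻ x, g x ^ s ∂μ := by
  refine (lintegral_rpow_le_measure_univ_mul (hg.smul_measure _) hs).trans
    (mul_le_of_le_one_left zero_le ?_)
  refine ENNReal.rpow_le_one ?_ (by linarith)
  exact ENNReal.inv_mul_le_one (μ univ)

end MixedNorms

section Cubes

variable {d : ℕ}

lemma volume_cubeSet (a : Euc d) {h : ℝ} (hh : 0 ≤ h) :
    volume (cubeSet d a h) = ENNReal.ofReal (h ^ d) := by
  have hpre : cubeSet d a h = WithLp.ofLp ⁻¹' univ.pi fun i => Icc (a i) (a i + h) := by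
    ext y
    rw [cubeSet, mem_preimage, mem_univ_pi]
    exact Iff.rfl
  rw [hpre, (PiLp.volume_preserving_ofLp (Fin d)).measure_preimage
    (MeasurableSet.univ_pi fun i => measurableSet_Icc).nullMeasurableSet, volume_pi_pi]
  simp [Real.volume_Icc, ENNReal.ofReal_pow hh]

lemma cubeSet_subset_closedBall {a x : Euc d} {h : ℝ} (hx : x ∈ cubeSet d a h) :
    cubeSet d a h ⊆ closedBall x (d * h) := by
  intro y hy
  rw [mem_closedBall, dist_eq_norm]
  calc ‖y - x‖ = ‖∑ i, (y - x) i • EuclideanSpace.basisFun (Fin d) ℝ i‖ := by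
        conv_lhs => rw [← (EuclideanSpace.basisFun (Fin d) ℝ).sum_repr (y - x)]
        simp
    _ ≤ ∑ _ : Fin d, h := norm_sum_le_of_le _ fun i _ => by
        rw [norm_smul, OrthonormalBasis.norm_eq_one, mul_one, PiLp.sub_apply, Real.norm_eq_abs,
          abs_le]
        constructor <;> linarith [hx i, hy i]
    _ = d * h := by simp

lemma inv_volume_mul_setLIntegral_cubeSet_le {n j : ℕ} {x a : Euc d} {h : ℝ}
    (hlt : (2 : ℝ) ^ ((n : ℤ) - j - 1) < h) (hle : h ≤ (2 : ℝ) ^ ((n : ℤ) - j))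
    (hx : x ∈ cubeSet d a h) (H : Euc d → ℝ≥0∞) :
    (volume (cubeSet d a h))⁻¹ * ∫⁻ y in cubeSet d a h, H y ≤
      ENNReal.ofReal ((2 * (d + 4)) ^ d) * ((ENNReal.ofReal (avgRadius d n j ^ d))⁻¹ *
        ∫⁻ y in closedBall x (avgRadius d n j), H y) := by
  have hh : 0 < h := lt_trans (by positivity) hlt
  have hsub : cubeSet d a h ⊆ closedBall x (avgRadius d n j) :=
    (cubeSet_subset_closedBall hx).trans (closedBall_subset_closedBall (by
      unfold avgRadius
      gcongr
      linarith))
  have hradius : avgRadius d n j ≤ 2 * (d + 4) * h := by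
    rw [zpow_sub_one₀ two_ne_zero] at hlt
    rw [avgRadius, mul_comm 2, mul_assoc]
    gcongr
    linarith
  rw [volume_cubeSet a hh.le, ← mul_assoc]
  refine mul_le_mul' ?_ (lintegral_mono_set hsub)
  rw [← div_eq_mul_inv, ENNReal.le_div_iff_mul_le (.inl (ofReal_avgRadius_pow_ne_zero d n j))
    (.inl ENNReal.ofReal_ne_top), mul_comm, ← div_eq_mul_inv, ENNReal.div_le_iff (by positivity)
    ENNReal.ofReal_ne_top, ← ENNReal.ofReal_mul (by positivity), ← mul_pow]
  exact ENNReal.ofReal_le_ofReal (pow_le_pow_left₀ (avgRadius_pos d n j).le hradius d)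

variable [NeZero d] {χ β₀ : ℝ → ℝ}

lemma lintegral_enorm_Aj_rpow_rpow_le (hχ : IsCutoff χ) (hβ : IsBump β₀) (j : ℕ) (f : Euc d → ℂ)
    (y : Euc d) {r s : ℝ} (hr : 0 < r) (hrs : r ≤ s) :
    (∫⁻ t, ‖Aj d χ β₀ j f y t‖ₑ ^ r) ^ (s / r) ≤
      4 ^ (s / r - 1) * ∫⁻ t, ‖Aj d χ β₀ j f y t‖ₑ ^ s := by
  have hsr : 1 ≤ s / r := (one_le_div hr).2 hrs
  have hmeas : Measurable fun t => ‖Aj d χ β₀ j f y t‖ₑ :=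
    ((measurable_Aj hχ hβ j f).comp measurable_prodMk_left).enorm
  have hsupp : Function.support (fun t => ‖Aj d χ β₀ j f y t‖ₑ ^ r) ⊆ Icc (1 / 2) 4 :=
    Function.support_subset_iff'.2 fun t ht => by
      rw [hχ.Aj_eq_zero j f y ht, enorm_zero, ENNReal.zero_rpow_of_pos hr]
  have hvol : volume (Icc (1 / 2 : ℝ) 4) ≤ 4 := by
    rw [Real.volume_Icc]
    exact ENNReal.ofReal_le_of_le_toReal (by norm_num)
  rw [← setLIntegral_eq_of_support_subset hsupp]
  refine (lintegral_rpow_le_measure_univ_mul (hmeas.pow_const r).aemeasurable hsr).trans ?_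
  simp only [Measure.restrict_apply_univ, ← ENNReal.rpow_mul, mul_div_cancel₀ s hr.ne']
  exact mul_le_mul' (ENNReal.rpow_le_rpow hvol (by linarith)) (setLIntegral_le_lintegral _ _)

lemma exists_cubeSet_average_le (hχ : IsCutoff χ) (hβ : IsBump β₀) {r : ℝ≥0∞} {s : ℝ} (hr : r ≠ 0)
    (hs : 1 ≤ s) (hrs : r ≤ ENNReal.ofReal s) :
    ∃ K : ℝ≥0, ∀ (n j : ℕ) (f : Euc d → ℂ) (x a : Euc d) (h : ℝ),
      (2 : ℝ) ^ ((n : ℤ) - j - 1) < h → h ≤ (2 : ℝ) ^ ((n : ℤ) - j) → x ∈ cubeSet d a h →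
        (volume (cubeSet d a h))⁻¹ *
            ∫⁻ y in cubeSet d a h, lqNorm r (fun t => (‖Aj d χ β₀ j f y t‖₊ : ℝ≥0∞)) volume ≤
          K * localAvg d χ β₀ n j s f x ^ (1 / s) := by
  have hr' : r ≠ ∞ := ne_top_of_le_ne_top ENNReal.ofReal_ne_top hrs
  have hρ : 0 < r.toReal := ENNReal.toReal_pos hr hr'
  have hρs : r.toReal ≤ s := ENNReal.toReal_le_of_le_ofReal (by linarith) hrs
  obtain ⟨L, hL⟩ : ∃ L : ℝ≥0, (L : ℝ≥0∞) = 4 ^ (s / r.toReal - 1) :=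
    ⟨_, ENNReal.coe_toNNReal (by finiteness)⟩
  obtain ⟨M, hM⟩ : ∃ M : ℝ≥0, (M : ℝ≥0∞) = ENNReal.ofReal ((2 * (d + 4)) ^ d) := ⟨_, rfl⟩
  have hs₀ : 0 ≤ 1 / s := by positivity
  refine ⟨(L * M) ^ (1 / s), fun n j f x a h hlt hle hx => ?_⟩
  have htime (y : Euc d) : lqNorm r (fun t => (‖Aj d χ β₀ j f y t‖₊ : ℝ≥0∞)) volume ^ s ≤
      L * ∫⁻ t, ‖Aj d χ β₀ j f y t‖ₑ ^ s := by
    simp only [lqNorm, hr', if_false, ← enorm_eq_nnnorm]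
    rw [← ENNReal.rpow_mul, one_div_mul_eq_div, hL]
    exact lintegral_enorm_Aj_rpow_rpow_le hχ hβ j f y hρ hρs
  have hmeas : Measurable fun y : Euc d =>
      lqNorm r (fun t => (‖Aj d χ β₀ j f y t‖₊ : ℝ≥0∞)) volume := by
    simp only [lqNorm, hr', if_false, ← enorm_eq_nnnorm]
    exact (measurable_lintegral_enorm_Aj_rpow hχ hβ j _ f).pow_const _
  rw [ENNReal.coe_rpow_of_nonneg _ hs₀, ← ENNReal.mul_rpow_of_nonneg _ _ hs₀, one_div,
    ENNReal.le_rpow_inv_iff (by linarith), mul_comm _⁻¹, ← div_eq_mul_inv, ← setLAverage_eq]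
  refine (laverage_rpow_le hmeas.aemeasurable hs).trans ?_
  rw [setLAverage_eq, div_eq_mul_inv, mul_comm _ _⁻¹]
  calc _ ≤ (volume (cubeSet d a h))⁻¹ *
        ∫⁻ y in cubeSet d a h, L * ∫⁻ t, ‖Aj d χ β₀ j f y t‖ₑ ^ s :=
        mul_le_mul_right (lintegral_mono htime) _
    _ = L * ((volume (cubeSet d a h))⁻¹ *
        ∫⁻ y in cubeSet d a h, ∫⁻ t, ‖Aj d χ β₀ j f y t‖ₑ ^ s) := by
        rw [lintegral_const_mul' _ _ ENNReal.coe_ne_top, mul_left_comm]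
    _ ≤ L * (M * localAvg d χ β₀ n j s f x) := by
        rw [hM]
        exact mul_le_mul_right (inv_volume_mul_setLIntegral_cubeSet_le hlt hle hx _) _
    _ = _ := by push_cast; ring

lemma exists_maxFn_le_iSup_localAvg (hχ : IsCutoff χ) (hβ : IsBump β₀) {r : ℝ≥0∞} {s : ℝ}
    (hr : r ≠ 0) (hs : 1 ≤ s) (hrs : r ≤ ENNReal.ofReal s) :
    ∃ K : ℝ≥0, ∀ n (F : ℕ → Euc d → ℂ) x, maxFn d χ β₀ r n F x ≤
      K * ⨆ j, if n ≤ j then localAvg d χ β₀ n j s (F j) x ^ (1 / s) else 0 := by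
  obtain ⟨K, hK⟩ := exists_cubeSet_average_le (d := d) hχ hβ hr hs hrs
  refine ⟨K, fun n F x => ?_⟩
  rw [ENNReal.mul_iSup]
  refine iSup_mono fun j => iSup_le fun hj => ?_
  simp only [hj, if_true, iSup_le_iff]
  exact fun a h => hK n j (F j) x a h

end Cubes

section MaximalFunction

variable {d : ℕ} {χ β₀ : ℝ → ℝ}

/-- The bound `‖localAvg_{n,j,s} f ^ (1/s)‖_q ≲ 2^{-nε} 2^{-jd/q} ‖f‖_p` for the `L^s` local
averages, in the form in which it is summed over `j ≥ n`. At `q = ∞` the convention `x / 0 = 0`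
makes the factor `2^{-jd/q}` equal to `1`, as it should be. -/
def HasLocalGain (d : ℕ) (χ β₀ : ℝ → ℝ) (s : ℝ) (p q : ℝ≥0∞) : Prop :=
  ∃ ε : ℝ, 0 < ε ∧ ∃ C : ℝ≥0, ∀ n j, n ≤ j → ∀ f : Euc d → ℂ, Integrable f →
    lqNorm q (fun x => localAvg d χ β₀ n j s f x ^ (1 / s)) volume ≤
      C * 2 ^ (-((n : ℝ) * ε)) * (2 ^ (-(((j : ℝ) * d) / q.toReal)) * eLpNorm f p volume)

lemma HasLocalGain.of_forall_localAvg_le {s : ℝ} {p : ℝ≥0∞} (hs : 0 < s)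
    (h : ∃ ε : ℝ, 0 < ε ∧ ∃ C : ℝ≥0, ∀ n j, n ≤ j → ∀ f : Euc d → ℂ, Integrable f → ∀ x,
      localAvg d χ β₀ n j s f x ≤ C * 2 ^ (-((n : ℝ) * ε)) * eLpNorm f p volume ^ s) :
    HasLocalGain d χ β₀ s p ∞ := by
  obtain ⟨ε, hε, C, hC⟩ := h
  refine ⟨ε / s, by positivity, C ^ (1 / s), fun n j hnj f hf => ?_⟩
  have hs₀ : 0 ≤ 1 / s := by positivity
  rw [lqNorm, if_pos rfl]
  refine essSup_le_of_ae_le _ (Filter.Eventually.of_forall fun x => ?_)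
  refine (ENNReal.rpow_le_rpow (hC n j hnj f hf x) hs₀).trans_eq ?_
  rw [ENNReal.mul_rpow_of_nonneg _ _ hs₀, ENNReal.mul_rpow_of_nonneg _ _ hs₀, one_div,
    ENNReal.rpow_rpow_inv hs.ne', ← ENNReal.rpow_mul, neg_mul, mul_assoc (n : ℝ),
    ← div_eq_mul_inv, ENNReal.coe_rpow_of_nonneg _ (by positivity)]
  simp

lemma HasIntegralGain.hasLocalGain {s : ℝ} {p q : ℝ≥0∞}
    (h : HasIntegralGain d χ β₀ s p.toReal q.toReal) (hp : p ≠ 0) (hp' : p ≠ ∞) (hq : q ≠ 0)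
    (hq' : q ≠ ∞) : HasLocalGain d χ β₀ s p q := by
  obtain ⟨ε, hε, C, hC⟩ := h
  have hq₀ : 0 < q.toReal := ENNReal.toReal_pos hq hq'
  have hq₁ : 0 ≤ 1 / q.toReal := by positivity
  refine ⟨ε / q.toReal, by positivity, C ^ (1 / q.toReal), fun n j hnj f hf => ?_⟩
  simp only [lqNorm, hq', if_false, ← ENNReal.rpow_mul, one_div_mul_eq_div]
  refine (ENNReal.rpow_le_rpow (hC n j hnj f hf) hq₁).trans_eq ?_
  rw [← eLpNorm_rpow_eq_lintegral hp hp', ENNReal.mul_rpow_of_nonneg _ _ hq₁,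
    ENNReal.mul_rpow_of_nonneg _ _ hq₁, ENNReal.mul_rpow_of_nonneg _ _ hq₁, one_div,
    ENNReal.rpow_rpow_inv hq₀.ne', ← ENNReal.rpow_mul, ← ENNReal.rpow_mul, neg_mul, neg_mul,
    mul_assoc (n : ℝ), ← div_eq_mul_inv, ← div_eq_mul_inv,
    ENNReal.coe_rpow_of_nonneg _ (by positivity), mul_assoc]

lemma localAvg_of_not_integrable {n j : ℕ} {s : ℝ} {f : Euc d → ℂ} (hs : 0 < s)
    (hf : ¬ Integrable f) (x : Euc d) : localAvg d χ β₀ n j s f x = 0 := by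
  simp [localAvg, Aj_of_not_integrable j hf, ENNReal.zero_rpow_of_pos hs]

variable [NeZero d]

theorem HasLocalGain.exists_lqNorm_maxFn_le {s : ℝ} {p q r : ℝ≥0∞}
    (h : HasLocalGain d χ β₀ s p q) (hχ : IsCutoff χ) (hβ : IsBump β₀) (hq : q ≠ 0) (hr : r ≠ 0)
    (hs : 1 ≤ s) (hrs : r ≤ ENNReal.ofReal s) :
    ∃ ε : ℝ, 0 < ε ∧ ∃ C : ℝ≥0, ∀ (n : ℕ) (F : ℕ → Euc d → ℂ),
      lqNorm q (maxFn d χ β₀ r n F) volume ≤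
        C * 2 ^ (-((n : ℝ) * ε)) * lqSeq q fun j =>
          if n ≤ j then 2 ^ (-(((j : ℝ) * d) / q.toReal)) * eLpNorm (F j) p volume else 0 := by
  obtain ⟨ε, hε, C, hC⟩ := h
  obtain ⟨K, hK⟩ := exists_maxFn_le_iSup_localAvg (d := d) hχ hβ hr hs hrs
  have hs₀ : 0 < s := by linarith
  refine ⟨ε, hε, K * C, fun n F => ?_⟩
  let G (j : ℕ) (x : Euc d) : ℝ≥0∞ :=
    if n ≤ j then localAvg d χ β₀ n j s (F j) x ^ (1 / s) else 0
  let a (j : ℕ) : ℝ≥0∞ :=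
    if n ≤ j then 2 ^ (-(((j : ℝ) * d) / q.toReal)) * eLpNorm (F j) p volume else 0
  have hG (j : ℕ) : AEMeasurable (G j) volume := by
    by_cases hj : n ≤ j
    · simpa only [G, hj, if_true] using
        ((measurable_localAvg hχ hβ n j s (F j)).pow_const _).aemeasurable
    · simpa only [G, hj, if_false] using aemeasurable_const
  have hGa (j : ℕ) : lqNorm q (G j) volume ≤ C * 2 ^ (-((n : ℝ) * ε)) * a j := by
    by_cases hjf : n ≤ j ∧ Integrable (F j)
    · simpa only [G, a, hjf.1, if_true] using hC n j hjf.1 (F j) hjf.2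
    · have hG₀ : G j = fun _ => 0 := by
        ext x
        by_cases hj : n ≤ j
        · simp [G, localAvg_of_not_integrable hs₀ (fun hf => hjf ⟨hj, hf⟩),
            ENNReal.zero_rpow_of_pos (inv_pos.2 hs₀)]
        · simp [G, hj]
      rw [hG₀, lqNorm_zero hq]
      exact zero_le
  calc lqNorm q (maxFn d χ β₀ r n F) volume
      ≤ lqNorm q (fun x => K * ⨆ j, G j x) volume := lqNorm_mono q (hK n F)
    _ = K * lqNorm q (fun x => ⨆ j, G j x) volume := lqNorm_const_mul hq ENNReal.coe_ne_top _
    _ ≤ K * lqSeq q fun j => lqNorm q (G j) volume := mul_le_mul_right (lqNorm_iSup_le hq hG) _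
    _ ≤ K * lqSeq q fun j => C * 2 ^ (-((n : ℝ) * ε)) * a j :=
        mul_le_mul_right (lqSeq_mono q hGa) _
    _ = _ := by rw [lqSeq_const_mul hq, ENNReal.coe_mul, mul_assoc, mul_assoc, mul_assoc]

end MaximalFunction

/-! ### The range of exponents -/

section Exponents

variable {p₀ q₀ q s : ℝ≥0∞}

lemma div_mul_inv_lt_one_sub (hp₀ : 1 ≤ p₀) (hq : q₀ < q) :
    q₀ / q * p₀⁻¹ < 1 - q₀ / q * (1 - p₀⁻¹) := by
  have hθ : q₀ / q < 1 := ENNReal.div_lt_of_lt_mul (by rwa [one_mul])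
  rwa [lt_tsub_iff_right, ← mul_add, add_tsub_cancel_of_le (ENNReal.inv_le_one.2 hp₀), mul_one]

lemma toReal_one_sub_div_mul_one_sub_inv (hp₀ : 1 ≤ p₀) (hq : q₀ < q) :
    (1 - q₀ / q * (1 - p₀⁻¹)).toReal =
      1 - q₀.toReal / q.toReal + q₀.toReal / q.toReal / p₀.toReal := by
  have hθ : q₀ / q ≤ 1 := ENNReal.div_le_of_le_mul (by rw [one_mul]; exact hq.le)
  rw [ENNReal.toReal_sub_of_le (mul_le_one' hθ tsub_le_self) ENNReal.one_ne_top,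
    ENNReal.toReal_mul, ENNReal.toReal_sub_of_le (ENNReal.inv_le_one.2 hp₀) ENNReal.one_ne_top]
  simp only [ENNReal.toReal_one, ENNReal.toReal_div, ENNReal.toReal_inv]
  ring

lemma exists_between_or_eq {α : Type*} [LinearOrder α] [DenselyOrdered α] {a b p r : α}
    (hab : a < b) (hap : a < p) (hlt : p < b → r ≤ p) (hge : b ≤ p → r < b) :
    ∃ s, r ≤ s ∧ a < s ∧ s < b ∧ (s = p ∨ b ≤ p) := by
  obtain hpb | hbp := lt_or_ge p b
  · exact ⟨p, hlt hpb, hap, hpb, .inl rfl⟩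
  · obtain ⟨s, has, hsb⟩ := exists_between (max_lt hab (hge hbp))
    exact ⟨s, (le_max_right _ _).trans has.le, (le_max_left _ _).trans_lt has, hsb, .inr hbp⟩

end Exponents

section LocalGain

variable {d : ℕ} [NeZero d] {χ β₀ : ℝ → ℝ}

lemma hasLocalGain_top (hd : 2 ≤ d) (hχ : IsCutoff χ) (hβ : IsBump β₀) {s p : ℝ≥0∞} (hs : 1 < s)
    (hs' : s ≠ ∞) (hsp : s = p ∨ p = ∞) : HasLocalGain d χ β₀ s.toReal p ∞ := by
  have hs₁ : 1 < s.toReal := (ENNReal.toReal_lt_toReal ENNReal.one_ne_top hs').2 hs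
  refine .of_forall_localAvg_le (by linarith) ?_
  obtain rfl | rfl := hsp
  · simp_rw [eLpNorm_rpow_eq_lintegral (zero_lt_one.trans hs).ne' hs',
      div_self (zero_lt_one.trans hs₁).ne', ENNReal.rpow_one]
    exact exists_localAvg_le_two_rpow hd hχ hβ hs₁
  · exact exists_localAvg_le_two_rpow_eLpNorm_top hd hχ hβ hs₁

theorem HasEndpointBound.hasLocalGain (hd : 2 ≤ d) {p₀ q₀ s p q : ℝ≥0∞}
    (hend : HasEndpointBound d χ β₀ p₀.toReal q₀.toReal) (hχ : IsCutoff χ) (hβ : IsBump β₀)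
    (hp₀ : 1 ≤ p₀) (hpq₀ : p₀ ≤ q₀) (hq : q₀ < q) (hq' : q ≠ ∞) (hsp : s ≤ p) (hpq : p ≤ q)
    (hmin : s⁻¹ < 1 - q₀ / q * (1 - p₀⁻¹)) (hmax : q₀ / q * p₀⁻¹ < s⁻¹) :
    HasLocalGain d χ β₀ s.toReal p q := by
  have hs : 1 ≤ s := ENNReal.inv_le_one.1 (hmin.le.trans tsub_le_self)
  have hp : p ≠ 0 := (zero_lt_one.trans_le (hs.trans hsp)).ne'
  have hp' : p ≠ ∞ := ne_top_of_le_ne_top hq' hpq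
  have hs' : s ≠ ∞ := ne_top_of_le_ne_top hp' hsp
  have hs₁ : 1 ≤ s.toReal := (ENNReal.toReal_le_toReal ENNReal.one_ne_top hs').2 hs
  have hp₀' : 0 < p₀.toReal :=
    ENNReal.toReal_pos (zero_lt_one.trans_le hp₀).ne' (ne_top_of_le_ne_top hq.ne_top hpq₀)
  have hinv : s⁻¹ ≠ ∞ := hmin.ne_top
  have hgain : HasIntegralGain d χ β₀ s.toReal s.toReal q.toReal := by
    refine hend.hasIntegralGain hd hχ hβ hp₀' (ENNReal.toReal_mono hq.ne_top hpq₀)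
      ((ENNReal.toReal_lt_toReal hq.ne_top hq').2 hq) (by linarith) ?_ ?_
    · simpa [div_eq_mul_inv] using (ENNReal.toReal_lt_toReal hmax.ne_top hinv).2 hmax
    · rw [← toReal_one_sub_div_mul_one_sub_inv hp₀ hq, one_div, ← ENNReal.toReal_inv]
      exact (ENNReal.toReal_lt_toReal hinv (by finiteness)).2 hmin
  exact (hgain.of_le hχ hβ hs₁ (ENNReal.toReal_mono hp' hsp)
    (ENNReal.toReal_mono hq' hpq)).hasLocalGain hp hp' hq.ne_bot hq'

end LocalGain

/-- Proposition 5.1: under the hypothesis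
`sup_j 2^{jd/q₀} ‖𝒜_j‖_{L^{p₀} → L^{q₀}(L^{p₀})} < ∞`, for `q₀ < q ≤ ∞`,
`ρ_min(q) < p ≤ q`, and `r ≤ p` if `p < ρ_max(q)`, `r < ρ_max(q)` if `ρ_max(q) ≤ p`,
there are `ε(p,q,r) > 0` and `C` with
`‖𝔐_{r,n} F‖_q ≤ C 2^{-nε} (Σ_{j ≥ n} 2^{-jd} ‖f_j‖_p^q)^{1/q}`. -/
theorem maximal_operator_gain (d : ℕ) (hd : 2 ≤ d) (χ β₀ : ℝ → ℝ)
    (hχ : IsCutoff χ) (hβ : IsBump β₀)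
    (p₀ q₀ : ℝ≥0∞) (hp₀1 : 1 < p₀) (hp₀q₀ : p₀ ≤ q₀) (hq₀ : q₀ ≠ ∞)
    (C₀ : ℝ≥0)
    (hC₀ : ∀ j : ℕ, (2 : ℝ≥0∞) ^ (((j : ℝ) * d) / q₀.toReal) *
      AjOpNorm d χ β₀ j p₀ q₀ p₀ ≤ C₀)
    (q p r ρmin ρmax : ℝ≥0∞) (hq : q₀ < q)
    (hρmin : ρmin⁻¹ = 1 - (q₀ / q) * (1 - p₀⁻¹))
    (hρmax : ρmax⁻¹ = (q₀ / q) * p₀⁻¹)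
    (hp1 : ρmin < p) (hp2 : p ≤ q) (hr0 : 0 < r)
    (hr1 : p < ρmax → r ≤ p) (hr2 : ρmax ≤ p → r < ρmax) :
    ∃ ε : ℝ, 0 < ε ∧ ∃ C : ℝ≥0, ∀ (n : ℕ) (F : ℕ → Euc d → ℂ),
      lqNorm q (maxFn d χ β₀ r n F) volume ≤
        C * (2 : ℝ≥0∞) ^ (-((n : ℝ) * ε)) *
          lqSeq q (fun j => if n ≤ j then
            (2 : ℝ≥0∞) ^ (-(((j : ℝ) * d) / q.toReal)) * eLpNorm (F j) p volume
            else 0) := by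
  have : NeZero d := ⟨by omega⟩
  have hρ : ρmin < ρmax := by
    rw [← ENNReal.inv_lt_inv, hρmin, hρmax]
    exact div_mul_inv_lt_one_sub hp₀1.le hq
  obtain ⟨s, hrs, hmin, hmax, hsp⟩ := exists_between_or_eq hρ hp1 hr1 hr2
  have hs : 1 < s :=
    (ENNReal.inv_le_one.1 (hρmin.trans_le tsub_le_self)).trans_lt hmin
  have hs' : s ≠ ∞ := hmax.ne_top
  have hgain : HasLocalGain d χ β₀ s.toReal p q := by
    obtain rfl | hq' := eq_or_ne q ∞
    · have hρmax' : ρmax = ∞ := by simpa using hρmax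
      exact hasLocalGain_top hd hχ hβ hs hs' (by simpa [hρmax'] using hsp)
    · have hend := hasEndpointBound_of_AjOpNorm_le hβ (zero_lt_one.trans hp₀1).ne'
        (ne_top_of_le_ne_top hq₀ hp₀q₀) (zero_lt_one.trans (hp₀1.trans_le hp₀q₀)).ne' hq₀ hC₀
      refine hend.hasLocalGain hd hχ hβ hp₀1.le hp₀q₀ hq hq' ?_ hp2 ?_ ?_
      · exact hsp.elim Eq.le fun h => hmax.le.trans h
      · rwa [← hρmin, ENNReal.inv_lt_inv]
      · rwa [← hρmax, ENNReal.inv_lt_inv]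
  exact hgain.exists_lqNorm_maxFn_le hχ hβ hq.ne_bot hr0.ne'
    ((ENNReal.toReal_le_toReal ENNReal.one_ne_top hs').2 hs.le) (by rwa [ENNReal.ofReal_toReal hs'])
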